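/- Let u₀ be the exhaustion of the unit disc 𝔻 given by u₀ = −(1 − Re z)^{3/4} − ρ (ρ the harmonic extension of the boundary values of −(1 − Re z)^{3/4}), with boundary Monge–Ampère measure dμ_{u₀} = β dσ, and let φ(z) = e^{iθ₀}(z − a)/(1 − ā z) with a ∈ 𝔻 be a Möbius automorphism of 𝔻. Then for 1 ≤ p < ∞ the following are equivalent: (i) the composition operator C_φ(f) = f∘φ is bounded on H^p_{u₀}(𝔻); (ii) there exists a constant K > 0 such that ∫_E β(φ^{−1}(η)) dσ(η) ≤ K ∫_E β(η) dσ(η) for every measurable set E ⊂ ∂𝔻 (where φ^{−1} denotes the boundary map induced by the inverse automorphism); (iii) φ(1) = 1. -/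

import Mathlib

open MeasureTheory Filter Metric Complex Set
open scoped Real ENNReal Topology

noncomputable section

/-- The Laplacian of a real-valued function on `ℂ ≅ ℝ²`. -/
def lap (φ : ℂ → ℝ) (z : ℂ) : ℝ :=
  fderiv ℝ (fun w => fderiv ℝ φ w 1) z 1 +
    fderiv ℝ (fun w => fderiv ℝ φ w Complex.I) z Complex.I

/-- `h` is harmonic on `s`. -/
def HarmonicOn (h : ℂ → ℝ) (s : Set ℂ) : Prop :=
  ContDiffOn ℝ 2 h s ∧ ∀ z ∈ s, lap h z = 0

/-- `u` is subharmonic on `s` (continuous with the sub-mean-value property). -/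
def SubharmonicOn (u : ℂ → ℝ) (s : Set ℂ) : Prop :=
  ContinuousOn u s ∧ ∀ z ∈ s, ∀ r : ℝ, 0 < r → closedBall z r ⊆ s →
    u z ≤ (2 * Real.pi)⁻¹ *
      ∫ t in (0:ℝ)..(2 * Real.pi), u (z + (r : ℂ) * Complex.exp ((t : ℂ) * Complex.I))

/-- `u` is a negative continuous subharmonic exhaustion function for `Ω`:
sublevel sets `{u < c}`, `c < 0`, are relatively compact in `Ω`. -/
structure IsExhaustion (u : ℂ → ℝ) (Ω : Set ℂ) : Prop where
  neg : ∀ z ∈ Ω, u z < 0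
  subh : SubharmonicOn u Ω
  exh : ∀ c : ℝ, c < 0 → IsCompact (closure {z | z ∈ Ω ∧ u z < c}) ∧
    closure {z | z ∈ Ω ∧ u z < c} ⊆ Ω

/-- `ν` is the Riesz measure `dd^c u = (1/4) Δu dA` of `u` on `Ω`, characterized
distributionally: `∫ φ dν = (1/4) ∫_Ω u Δφ dA` for test functions `φ`. -/
def IsRieszMeasure (u : ℂ → ℝ) (Ω : Set ℂ) (ν : Measure ℂ) : Prop :=
  ν Ωᶜ = 0 ∧
  ∀ φ : ℂ → ℝ, ContDiff ℝ 2 φ → HasCompactSupport φ → tsupport φ ⊆ Ω →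
    ∫ z, φ z ∂ν = (4 : ℝ)⁻¹ * ∫ z in Ω, u z * lap φ z

/-- `μ` is the Monge–Ampère measure `μ_{u,r} = dd^c max(u,r) - χ_{Ω∖{u<r}} dd^c u`,
where `ν = dd^c u`. -/
def IsMAMeasure (u : ℂ → ℝ) (Ω : Set ℂ) (ν : Measure ℂ) (r : ℝ) (μ : Measure ℂ) : Prop :=
  ∃ νr : Measure ℂ, IsRieszMeasure (fun z => max (u z) r) Ω νr ∧
    μ = νr - ν.restrict {z | z ∈ Ω ∧ r ≤ u z}

/-- The `p`-th power of the Poletsky–Stessin Hardy "norm",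
`limsup_{r→0⁻} ∫ |f|^p dμ_{u,r}`. -/
def psNormPow (p : ℝ) (μfam : ℝ → Measure ℂ) (f : ℂ → ℂ) : ℝ≥0∞ :=
  Filter.limsup (fun r => ∫⁻ z, ENNReal.ofReal (‖f z‖ ^ p) ∂(μfam r))
    (nhdsWithin 0 (Set.Iio 0))

/-- The Poletsky–Stessin Hardy norm. -/
def psNorm (p : ℝ) (μfam : ℝ → Measure ℂ) (f : ℂ → ℂ) : ℝ≥0∞ :=
  psNormPow p μfam f ^ (1 / p)

/-- Membership in the Poletsky–Stessin Hardy space `H^p_u(Ω)`, where `μfam r = μ_{u,r}`. -/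
def MemPS (p : ℝ) (Ω : Set ℂ) (μfam : ℝ → Measure ℂ) (f : ℂ → ℂ) : Prop :=
  DifferentiableOn ℂ f Ω ∧ psNormPow p μfam f < ⊤

/-- Membership in the classical Hardy space `H^p(Ω)`: `|f|^p` has a harmonic majorant. -/
def MemHClassical (p : ℝ) (Ω : Set ℂ) (f : ℂ → ℂ) : Prop :=
  DifferentiableOn ℂ f Ω ∧
    ∃ h : ℂ → ℝ, HarmonicOn h Ω ∧ ∀ z ∈ Ω, ‖f z‖ ^ p ≤ h z

/-- A bounded domain in `ℂ` containing `0` whose boundary is an analytic Jordan curve: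
there is a conformal map of the unit disc onto `Ω` extending analytically and injectively
across the closed disc, carrying the unit circle onto the boundary of `Ω`. -/
structure AnalyticJordanDomain (Ω : Set ℂ) : Prop where
  isOpen : IsOpen Ω
  isConnected : IsConnected Ω
  isBounded : Bornology.IsBounded Ω
  zero_mem : (0:ℂ) ∈ Ω
  analyticBoundary : ∃ (U : Set ℂ) (ψ : ℂ → ℂ), IsOpen U ∧ closedBall (0:ℂ) 1 ⊆ U ∧
    DifferentiableOn ℂ ψ U ∧ Set.InjOn ψ U ∧ ψ '' ball (0:ℂ) 1 = Ω ∧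
    ψ '' sphere (0:ℂ) 1 = frontier Ω

/-- `μ` is the boundary Monge–Ampère measure: the weak* limit of the measures
`μfam r = μ_{u,r}` as `r → 0⁻`. -/
def IsBoundaryMA (μfam : ℝ → Measure ℂ) (μ : Measure ℂ) : Prop :=
  ∀ φ : ℂ → ℝ, Continuous φ →
    Filter.Tendsto (fun r => ∫ z, φ z ∂(μfam r)) (nhdsWithin 0 (Set.Iio 0))
      (nhds (∫ z, φ z ∂μ))

/-- `f` has nontangential limit `L` at the boundary point `ξ` of `Ω`. -/
def NTLim (Ω : Set ℂ) (f : ℂ → ℂ) (ξ : ℂ) (L : ℂ) : Prop :=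
  ∀ C : ℝ, 1 < C →
    Filter.Tendsto f
      (nhdsWithin ξ {z | z ∈ Ω ∧ dist z ξ ≤ C * infDist z (frontier Ω)}) (nhds L)

/-- Arc length measure on the boundary of `Ω` (1-dimensional Hausdorff measure). -/
def arcLen (Ω : Set ℂ) : Measure ℂ := (μH[1] : Measure ℂ).restrict (frontier Ω)


/-- The composition operator `C_φ : f ↦ f ∘ φ` is bounded on `H^p_u(𝔻)`. -/
def BoundedCompOp (p : ℝ) (μfam : ℝ → Measure ℂ) (φ : ℂ → ℂ) : Prop :=
  ∃ M : ℝ, 0 < M ∧ ∀ f : ℂ → ℂ, MemPS p (ball (0:ℂ) 1) μfam f →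
    MemPS p (ball (0:ℂ) 1) μfam (f ∘ φ) ∧
      psNorm p μfam (f ∘ φ) ≤ ENNReal.ofReal M * psNorm p μfam f

def ddir (e : ℂ) (v : ℂ → ℝ) (z : ℂ) : ℝ := fderiv ℝ (fun w => fderiv ℝ v w e) z e

lemma lap_eq_ddir (v : ℂ → ℝ) (z : ℂ) : lap v z = ddir 1 v z + ddir Complex.I v z := rfl

lemma cda_ev {v : ℂ → ℝ} {z : ℂ} (h : ContDiffAt ℝ 2 v z) : ∀ᶠ w in 𝓝 z, DifferentiableAt ℝ v w := by
  have := h.eventually (by simp)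
  filter_upwards [this] with w hw
  exact hw.differentiableAt (by simp)

lemma cda_fderiv {v : ℂ → ℝ} {z : ℂ} (h : ContDiffAt ℝ 2 v z) (e : ℂ) :
    DifferentiableAt ℝ (fun w => fderiv ℝ v w e) z := by
  have h1 : ContDiffAt ℝ 1 (fderiv ℝ v) z := h.fderiv_right (by norm_num)
  exact (h1.differentiableAt (by simp)).clm_apply (differentiableAt_const e)

lemma ddir_congr {v w : ℂ → ℝ} {z : ℂ} (h : v =ᶠ[𝓝 z] w) (e : ℂ) : ddir e v z = ddir e w z := by
  unfold ddir
  have h1 : (fun x => fderiv ℝ v x e) =ᶠ[𝓝 z] (fun x => fderiv ℝ w x e) := by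
    filter_upwards [h.fderiv (𝕜 := ℝ)] with x hx
    rw [hx]
  rw [h1.fderiv_eq]

lemma lap_congr {v w : ℂ → ℝ} {z : ℂ} (h : v =ᶠ[𝓝 z] w) : lap v z = lap w z := by
  rw [lap_eq_ddir, lap_eq_ddir, ddir_congr h, ddir_congr h]

lemma ddir_add {v w : ℂ → ℝ} {z : ℂ} (hv : ContDiffAt ℝ 2 v z) (hw : ContDiffAt ℝ 2 w z) (e : ℂ) :
    ddir e (fun x => v x + w x) z = ddir e v z + ddir e w z := by
  unfold ddir
  have h1 : (fun x => fderiv ℝ (fun x => v x + w x) x e) =ᶠ[𝓝 z]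
      (fun x => fderiv ℝ v x e + fderiv ℝ w x e) := by
    filter_upwards [cda_ev hv, cda_ev hw] with x hx hx'
    rw [fderiv_fun_add hx hx']; rfl
  rw [h1.fderiv_eq, fderiv_fun_add (cda_fderiv hv e) (cda_fderiv hw e)]; rfl

lemma ddir_mul {v w : ℂ → ℝ} {z : ℂ} (hv : ContDiffAt ℝ 2 v z) (hw : ContDiffAt ℝ 2 w z) (e : ℂ) :
    ddir e (fun x => v x * w x) z = v z * ddir e w z + w z * ddir e v z
      + 2 * fderiv ℝ v z e * fderiv ℝ w z e := by
  unfold ddir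
  have h1 : (fun x => fderiv ℝ (fun x => v x * w x) x e) =ᶠ[𝓝 z]
      (fun x => v x * fderiv ℝ w x e + w x * fderiv ℝ v x e) := by
    filter_upwards [cda_ev hv, cda_ev hw] with x hx hx'
    rw [fderiv_fun_mul hx hx']; simp
  have hv1 := hv.differentiableAt (by simp)
  have hw1 := hw.differentiableAt (by simp)
  rw [h1.fderiv_eq, fderiv_fun_add (hv1.fun_mul (cda_fderiv hw e)) (hw1.fun_mul (cda_fderiv hv e)),
    fderiv_fun_mul hv1 (cda_fderiv hw e), fderiv_fun_mul hw1 (cda_fderiv hv e)]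
  simp
  ring

lemma ddir_comp {M M' : ℝ → ℝ} {m2 : ℝ} {g : ℂ → ℝ} {z : ℂ} (hg : ContDiffAt ℝ 2 g z)
    (hM : ∀ᶠ t in 𝓝 (g z), HasDerivAt M (M' t) t) (hM' : HasDerivAt M' m2 (g z)) (e : ℂ) :
    ddir e (fun x => M (g x)) z = M' (g z) * ddir e g z + m2 * (fderiv ℝ g z e) ^ 2 := by
  unfold ddir
  have h1 : (fun x => fderiv ℝ (fun x => M (g x)) x e) =ᶠ[𝓝 z]
      (fun x => M' (g x) * fderiv ℝ g x e) := by
    filter_upwards [cda_ev hg, hg.continuousAt.eventually hM] with x hx hx'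
    have := (hx'.comp_hasFDerivAt x hx.hasFDerivAt).fderiv
    have h2 : fderiv ℝ (fun x => M (g x)) x = M' (g x) • fderiv ℝ g x := this
    rw [h2]; rfl
  have hg1 := hg.differentiableAt (by simp)
  have hc := hM'.comp_hasFDerivAt z hg1.hasFDerivAt
  have hc1 : HasFDerivAt (fun x => M' (g x)) (m2 • fderiv ℝ g z) z := hc
  rw [h1.fderiv_eq, fderiv_fun_mul hc1.differentiableAt (cda_fderiv hg e), hc1.fderiv]
  simp
  ring

lemma ddir_const (c : ℝ) (e z : ℂ) : ddir e (fun _ => c) z = 0 := by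
  unfold ddir; simp

lemma ddir_re (e z : ℂ) : ddir e (fun x => x.re) z = 0 := by
  unfold ddir
  have : (fun w : ℂ => fderiv ℝ (fun x : ℂ => x.re) w e) = fun _ => e.re := by
    ext w
    have := (Complex.reCLM.hasFDerivAt (x := w)).fderiv
    change fderiv ℝ (⇑Complex.reCLM) w e = _
    rw [this]; rfl
  rw [this]; simp

lemma ddir_im (e z : ℂ) : ddir e (fun x => x.im) z = 0 := by
  unfold ddir
  have : (fun w : ℂ => fderiv ℝ (fun x : ℂ => x.im) w e) = fun _ => e.im := by
    ext w
    have := (Complex.imCLM.hasFDerivAt (x := w)).fderiv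
    change fderiv ℝ (⇑Complex.imCLM) w e = _
    rw [this]; rfl
  rw [this]; simp

lemma fderiv_re' (e z : ℂ) : fderiv ℝ (fun x : ℂ => x.re) z e = e.re := by
  have := (Complex.reCLM.hasFDerivAt (x := z)).fderiv
  change fderiv ℝ (⇑Complex.reCLM) z e = _
  rw [this]; rfl

lemma fderiv_im' (e z : ℂ) : fderiv ℝ (fun x : ℂ => x.im) z e = e.im := by
  have := (Complex.imCLM.hasFDerivAt (x := z)).fderiv
  change fderiv ℝ (⇑Complex.imCLM) z e = _
  rw [this]; rfl

lemma cd_re : ContDiff ℝ 2 (fun x : ℂ => x.re) := Complex.reCLM.contDiff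
lemma cd_im : ContDiff ℝ 2 (fun x : ℂ => x.im) := Complex.imCLM.contDiff

lemma lap_add {v w : ℂ → ℝ} {z : ℂ} (hv : ContDiffAt ℝ 2 v z) (hw : ContDiffAt ℝ 2 w z) :
    lap (fun x => v x + w x) z = lap v z + lap w z := by
  simp only [lap_eq_ddir, ddir_add hv hw]; ring

lemma lap_const_mul {v : ℂ → ℝ} {z : ℂ} (hv : ContDiffAt ℝ 2 v z) (c : ℝ) :
    lap (fun x => c * v x) z = c * lap v z := by
  simp only [lap_eq_ddir, ddir_mul (contDiffAt_const (c := c)) hv, ddir_const]; simp; ring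

lemma lap_sub {v w : ℂ → ℝ} {z : ℂ} (hv : ContDiffAt ℝ 2 v z) (hw : ContDiffAt ℝ 2 w z) :
    lap (fun x => v x - w x) z = lap v z - lap w z := by
  have h1 := lap_add hv ((contDiffAt_const (c := (-1:ℝ))).mul hw)
  have h2 := lap_const_mul hw (-1)
  rw [h2] at h1
  have : (fun x => v x - w x) = fun x => v x + (-1) * w x := by ext; ring
  rw [this, h1]; ring

/-- second derivative test -/
lemma ddir_nonpos_of_isLocalMax {v : ℂ → ℝ} {z : ℂ} (hv : ContDiffAt ℝ 2 v z)
    (h : IsLocalMax v z) (e : ℂ) : ddir e v z ≤ 0 := by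
  by_contra hcon
  push Not at hcon
  set γ : ℝ → ℝ := fun t => v (z + t * e) with hγ
  have hline : ∀ t : ℝ, HasDerivAt (fun t : ℝ => z + t * e) e t := fun t => by
    have := ((Complex.ofRealCLM.hasDerivAt (x := t)).mul_const e).const_add z
    simpa using this
  have hlc : Tendsto (fun t : ℝ => z + t * e) (𝓝 0) (𝓝 z) := by
    have := (hline 0).continuousAt.tendsto
    simpa using this
  have hd : ∀ᶠ t : ℝ in 𝓝 (0:ℝ), HasDerivAt γ (fderiv ℝ v (z + t * e) e) t := by
    filter_upwards [hlc.eventually (cda_ev hv)] with t ht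
    exact ht.hasFDerivAt.comp_hasDerivAt t (hline t)
  have hd1 : deriv γ =ᶠ[𝓝 0] fun t : ℝ => fderiv ℝ v (z + t * e) e := by
    filter_upwards [hd] with t ht using ht.deriv
  have hz : z + ((0:ℝ):ℂ) * e = z := by simp
  have hd2 : HasDerivAt (fun t : ℝ => fderiv ℝ v (z + t * e) e) (ddir e v z) 0 := by
    have h1 : HasFDerivAt (fun w => fderiv ℝ v w e) (fderiv ℝ (fun w => fderiv ℝ v w e) z)
        (z + ((0:ℝ):ℂ) * e) := by rw [hz]; exact (cda_fderiv hv e).hasFDerivAt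
    exact h1.comp_hasDerivAt (0:ℝ) (hline 0)
  have hdd : deriv (deriv γ) 0 = ddir e v z := by
    rw [hd1.deriv_eq]; exact hd2.deriv
  have hmax : IsLocalMax γ 0 := by
    have := hlc.eventually h
    filter_upwards [this] with t ht
    simpa [hγ] using ht
  have h0 : deriv γ 0 = 0 := hmax.deriv_eq_zero
  have hmin := isLocalMin_of_deriv_deriv_pos (f := γ) (x₀ := 0) (by rw [hdd]; exact hcon) h0
    hd.self_of_nhds.continuousAt
  have hc : γ =ᶠ[𝓝 0] fun _ => γ 0 := by
    filter_upwards [hmax, hmin] with t h1 h2 using le_antisymm h1 h2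
  have : deriv (deriv γ) 0 = 0 := by
    rw [hc.deriv.deriv_eq]; simp
  linarith

lemma lap_normSq (z : ℂ) : lap (fun x => x.re * x.re + x.im * x.im) z = 4 := by
  rw [lap_add (cd_re.mul cd_re).contDiffAt (cd_im.mul cd_im).contDiffAt]
  simp only [lap_eq_ddir, ddir_mul cd_re.contDiffAt cd_re.contDiffAt,
    ddir_mul cd_im.contDiffAt cd_im.contDiffAt, ddir_re, ddir_im, fderiv_re', fderiv_im']
  simp; norm_num

lemma max_principle {v : ℂ → ℝ} (hc : ContinuousOn v (closedBall (0:ℂ) 1))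
    (hv : ContDiffOn ℝ 2 v (ball (0:ℂ) 1)) (hl : ∀ z ∈ ball (0:ℂ) 1, 0 ≤ lap v z)
    (hs : ∀ z ∈ sphere (0:ℂ) 1, v z ≤ 0) : ∀ z ∈ ball (0:ℂ) 1, v z ≤ 0 := by
  intro z0 hz0
  by_contra hcon
  push Not at hcon
  set ε := v z0 / 2 with hε
  have hε0 : 0 < ε := by positivity
  set w : ℂ → ℝ := fun x => v x + ε * (x.re * x.re + x.im * x.im) with hw
  have hwc : ContinuousOn w (closedBall (0:ℂ) 1) := by
    apply hc.add
    apply Continuous.continuousOn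
    fun_prop
  obtain ⟨z1, hz1, hm⟩ := (isCompact_closedBall (0:ℂ) 1).exists_isMaxOn ⟨0, by simp⟩ hwc
  have h1 : w z0 ≤ w z1 := hm (ball_subset_closedBall hz0)
  have h2 : 2 * ε ≤ w z0 := by
    have : 0 ≤ ε * (z0.re * z0.re + z0.im * z0.im) :=
      mul_nonneg hε0.le (add_nonneg (mul_self_nonneg _) (mul_self_nonneg _))
    simp only [hw]; linarith
  have hz1b : z1 ∈ ball (0:ℂ) 1 := by
    rcases (mem_closedBall.1 hz1).lt_or_eq with h | h
    · exact h
    · exfalso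
      have h3 := hs z1 h
      have h4 : z1.re * z1.re + z1.im * z1.im = 1 := by
        rw [dist_zero_right] at h
        have := Complex.normSq_eq_norm_sq z1
        rw [h, Complex.normSq_apply] at this
        simpa using this
      have : w z1 ≤ ε := by simp only [hw, h4]; linarith
      linarith
  have hnb : ball (0:ℂ) 1 ∈ 𝓝 z1 := isOpen_ball.mem_nhds hz1b
  have hv1 := hv.contDiffAt hnb
  have hsq : ContDiff ℝ 2 (fun x : ℂ => x.re * x.re + x.im * x.im) :=
    (cd_re.mul cd_re).add (cd_im.mul cd_im)
  have hw1 : ContDiffAt ℝ 2 w z1 := hv1.add (contDiffAt_const.mul hsq.contDiffAt)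
  have hlw : lap w z1 = lap v z1 + ε * 4 := by
    rw [hw, lap_add hv1 (contDiffAt_const.mul hsq.contDiffAt), lap_const_mul hsq.contDiffAt, lap_normSq]
  have hlm : IsLocalMax w z1 := by
    filter_upwards [hnb] with x hx using hm (ball_subset_closedBall hx)
  have a1 := ddir_nonpos_of_isLocalMax hw1 hlm 1
  have a2 := ddir_nonpos_of_isLocalMax hw1 hlm Complex.I
  have a3 := hl z1 hz1b
  rw [lap_eq_ddir] at hlw
  linarith

lemma hol_cda {f : ℂ → ℂ} {s : Set ℂ} (hs : IsOpen s) (hf : DifferentiableOn ℂ f s) {z : ℂ}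
    (hz : z ∈ s) : ContDiffAt ℝ 2 f z := by
  have h1 : AnalyticAt ℂ f z := hf.analyticAt (hs.mem_nhds hz)
  exact (h1.contDiffAt (n := 2)).restrict_scalars ℝ

lemma hol_hasFDerivAt {f : ℂ → ℂ} {z : ℂ} (hf : DifferentiableAt ℂ f z) :
    HasFDerivAt f (((ContinuousLinearMap.toSpanSingleton ℂ (deriv f z) : ℂ →L[ℂ] ℂ)).restrictScalars ℝ) z :=
  hf.hasDerivAt.hasFDerivAt.restrictScalars ℝ

lemma fderiv_re_hol {f : ℂ → ℂ} {z : ℂ} (hf : DifferentiableAt ℂ f z) (e : ℂ) :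
    fderiv ℝ (fun x => (f x).re) z e = (deriv f z * e).re := by
  have h := (Complex.reCLM.hasFDerivAt (x := f z)).comp z (hol_hasFDerivAt hf)
  have h' : fderiv ℝ (fun x => (f x).re) z = _ := h.fderiv
  rw [h']
  simp [mul_comm]

lemma fderiv_im_hol {f : ℂ → ℂ} {z : ℂ} (hf : DifferentiableAt ℂ f z) (e : ℂ) :
    fderiv ℝ (fun x => (f x).im) z e = (deriv f z * e).im := by
  have h := (Complex.imCLM.hasFDerivAt (x := f z)).comp z (hol_hasFDerivAt hf)
  have h' : fderiv ℝ (fun x => (f x).im) z = _ := h.fderiv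
  rw [h']
  simp [mul_comm]

lemma ddir_re_hol {f : ℂ → ℂ} {s : Set ℂ} (hs : IsOpen s) (hf : DifferentiableOn ℂ f s) {z : ℂ}
    (hz : z ∈ s) (e : ℂ) : ddir e (fun x => (f x).re) z = (deriv (deriv f) z * e * e).re := by
  unfold ddir
  have h1 : (fun w => fderiv ℝ (fun x => (f x).re) w e) =ᶠ[𝓝 z] fun w => (deriv f w * e).re := by
    filter_upwards [hs.mem_nhds hz] with w hw
    exact fderiv_re_hol (hf.differentiableAt (hs.mem_nhds hw)) e
  have hd : DifferentiableAt ℂ (deriv f) z := (hf.deriv hs).differentiableAt (hs.mem_nhds hz)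
  rw [h1.fderiv_eq, fderiv_re_hol (f := fun w => deriv f w * e) (hd.mul_const e)]
  rw [deriv_mul_const hd]

lemma ddir_im_hol {f : ℂ → ℂ} {s : Set ℂ} (hs : IsOpen s) (hf : DifferentiableOn ℂ f s) {z : ℂ}
    (hz : z ∈ s) (e : ℂ) : ddir e (fun x => (f x).im) z = (deriv (deriv f) z * e * e).im := by
  unfold ddir
  have h1 : (fun w => fderiv ℝ (fun x => (f x).im) w e) =ᶠ[𝓝 z] fun w => (deriv f w * e).im := by
    filter_upwards [hs.mem_nhds hz] with w hw
    exact fderiv_im_hol (hf.differentiableAt (hs.mem_nhds hw)) e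
  have hd : DifferentiableAt ℂ (deriv f) z := (hf.deriv hs).differentiableAt (hs.mem_nhds hz)
  rw [h1.fderiv_eq, fderiv_im_hol (f := fun w => deriv f w * e) (hd.mul_const e)]
  rw [deriv_mul_const hd]

lemma lap_re_hol {f : ℂ → ℂ} {s : Set ℂ} (hs : IsOpen s) (hf : DifferentiableOn ℂ f s) {z : ℂ}
    (hz : z ∈ s) : lap (fun x => (f x).re) z = 0 := by
  rw [lap_eq_ddir, ddir_re_hol hs hf hz, ddir_re_hol hs hf hz]
  simp [mul_assoc]

/-- the regularized power -/
def regP (ε q : ℝ) (f : ℂ → ℂ) (z : ℂ) : ℝ := (Complex.normSq (f z) + ε) ^ q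

lemma cda_reg {f : ℂ → ℂ} {z : ℂ} (hf : ContDiffAt ℝ 2 f z) (ε : ℝ) :
    ContDiffAt ℝ 2 (fun x => Complex.normSq (f x) + ε) z := by
  have h1 : ContDiffAt ℝ 2 (fun x => (f x).re) z := cd_re.contDiffAt.comp z hf
  have h2 : ContDiffAt ℝ 2 (fun x => (f x).im) z := cd_im.contDiffAt.comp z hf
  simp only [Complex.normSq_apply]
  exact ((h1.mul h1).add (h2.mul h2)).add contDiffAt_const

lemma cda_regP {f : ℂ → ℂ} {z : ℂ} (hf : ContDiffAt ℝ 2 f z) (ε q : ℝ)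
    (hp : 0 < Complex.normSq (f z) + ε) : ContDiffAt ℝ 2 (regP ε q f) z :=
  (cda_reg hf ε).rpow_const_of_ne hp.ne'

lemma lap_regP {f : ℂ → ℂ} {s : Set ℂ} (hs : IsOpen s) (hf : DifferentiableOn ℂ f s) {z : ℂ}
    (hz : z ∈ s) (ε q : ℝ) (hp : 0 < Complex.normSq (f z) + ε) :
    lap (regP ε q f) z = 4 * q * (Complex.normSq (f z) + ε) ^ (q - 2) *
      (ε + q * Complex.normSq (f z)) * Complex.normSq (deriv f z) := by
  have hc := hol_cda hs hf hz
  have h1 : ContDiffAt ℝ 2 (fun x => (f x).re) z := cd_re.contDiffAt.comp z hc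
  have h2 : ContDiffAt ℝ 2 (fun x => (f x).im) z := cd_im.contDiffAt.comp z hc
  have hd := hf.differentiableAt (hs.mem_nhds hz)
  have hM : ∀ᶠ t in 𝓝 (Complex.normSq (f z) + ε),
      HasDerivAt (fun t : ℝ => t ^ q) (q * t ^ (q - 1)) t := by
    filter_upwards [lt_mem_nhds hp] with t ht
    exact Real.hasDerivAt_rpow_const (Or.inl ht.ne')
  have hM' : HasDerivAt (fun t : ℝ => q * t ^ (q - 1))
      (q * ((q - 1) * (Complex.normSq (f z) + ε) ^ (q - 1 - 1))) (Complex.normSq (f z) + ε) :=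
    (Real.hasDerivAt_rpow_const (Or.inl hp.ne')).const_mul q
  have key : ∀ e, ddir e (regP ε q f) z = _ := fun e =>
    ddir_comp (g := fun x => Complex.normSq (f x) + ε) (cda_reg hc ε) hM hM' e
  have hS : ∀ e, ddir e (fun x => Complex.normSq (f x) + ε) z =
      2 * (f z).re * (deriv (deriv f) z * e * e).re + 2 * (deriv f z * e).re ^ 2 +
      2 * (f z).im * (deriv (deriv f) z * e * e).im + 2 * (deriv f z * e).im ^ 2 := by
    intro e
    simp only [Complex.normSq_apply]
    rw [ddir_add ((h1.mul h1).add (h2.mul h2)) contDiffAt_const,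
      ddir_add (h1.mul h1) (h2.mul h2), ddir_mul h1 h1, ddir_mul h2 h2, ddir_const,
      ddir_re_hol hs hf hz, ddir_im_hol hs hf hz, fderiv_re_hol hd, fderiv_im_hol hd]
    ring
  have hS1 : ∀ e, fderiv ℝ (fun x => Complex.normSq (f x) + ε) z e =
      2 * (f z).re * (deriv f z * e).re + 2 * (f z).im * (deriv f z * e).im := by
    intro e
    have d1 := h1.differentiableAt (by simp)
    have d2 := h2.differentiableAt (by simp)
    simp only [Complex.normSq_apply]
    rw [fderiv_add_const, fderiv_fun_add (d1.fun_mul d1) (d2.fun_mul d2), fderiv_fun_mul d1 d1,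
      fderiv_fun_mul d2 d2]
    simp only [add_apply, smul_apply, smul_eq_mul,
      fderiv_re_hol hd, fderiv_im_hol hd]
    ring
  rw [lap_eq_ddir, key, key, hS, hS, hS1, hS1]
  have e1 : (Complex.normSq (f z) + ε) ^ (q - 1) =
      (Complex.normSq (f z) + ε) ^ (q - 2) * (Complex.normSq (f z) + ε) := by
    rw [← Real.rpow_add_one hp.ne']; congr 1; ring
  have e2 : q - 1 - 1 = q - 2 := by ring
  rw [e1, e2]
  generalize (Complex.normSq (f z) + ε) ^ (q - 2) = Y
  simp only [Complex.normSq_apply, Complex.mul_re, Complex.mul_im, Complex.one_re, Complex.one_im,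
    Complex.I_re, Complex.I_im]
  ring

lemma cda_T {z : ℂ} (hz : z.re < 1) (q : ℝ) : ContDiffAt ℝ 2 (fun x : ℂ => (1 - x.re) ^ q) z := by
  have : ContDiffAt ℝ 2 (fun x : ℂ => 1 - x.re) z := contDiffAt_const.sub cd_re.contDiffAt
  exact this.rpow_const_of_ne (by linarith)

lemma fderiv_T1 (e z : ℂ) : fderiv ℝ (fun x : ℂ => 1 - x.re) z e = - e.re := by
  rw [fderiv_const_sub]; simp [fderiv_re']

lemma ddir_T {z : ℂ} (hz : z.re < 1) (q : ℝ) (e : ℂ) :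
    ddir e (fun x : ℂ => (1 - x.re) ^ q) z = q * (q - 1) * (1 - z.re) ^ (q - 2) * e.re ^ 2 := by
  have hT : ContDiffAt ℝ 2 (fun x : ℂ => 1 - x.re) z := contDiffAt_const.sub cd_re.contDiffAt
  have hp : 0 < 1 - z.re := by linarith
  have hM : ∀ᶠ t in 𝓝 (1 - z.re), HasDerivAt (fun t : ℝ => t ^ q) (q * t ^ (q - 1)) t := by
    filter_upwards [lt_mem_nhds hp] with t ht
    exact Real.hasDerivAt_rpow_const (Or.inl ht.ne')
  have hM' : HasDerivAt (fun t : ℝ => q * t ^ (q - 1))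
      (q * ((q - 1) * (1 - z.re) ^ (q - 1 - 1))) (1 - z.re) :=
    (Real.hasDerivAt_rpow_const (Or.inl hp.ne')).const_mul q
  have h0 : ddir e (fun x : ℂ => 1 - x.re) z = 0 := by
    have : (fun x : ℂ => 1 - x.re) = fun x => 1 + (-1) * x.re := by ext; ring
    rw [this, ddir_add contDiffAt_const (contDiffAt_const.mul cd_re.contDiffAt),
      ddir_mul contDiffAt_const cd_re.contDiffAt, ddir_const, ddir_const, ddir_re]
    simp
  have := ddir_comp (g := fun x : ℂ => 1 - x.re) hT hM hM' e
  rw [this, h0, fderiv_T1, show q - 1 - 1 = q - 2 by ring]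
  ring

lemma fderiv_T {z : ℂ} (hz : z.re < 1) (q : ℝ) (e : ℂ) :
    fderiv ℝ (fun x : ℂ => (1 - x.re) ^ q) z e = - (q * (1 - z.re) ^ (q - 1) * e.re) := by
  have hT : ContDiffAt ℝ 2 (fun x : ℂ => 1 - x.re) z := contDiffAt_const.sub cd_re.contDiffAt
  have hp : 0 < 1 - z.re := by linarith
  have h := (Real.hasDerivAt_rpow_const (p := q) (Or.inl hp.ne')).comp_hasFDerivAt z
    (hT.differentiableAt (by simp)).hasFDerivAt
  have h' : fderiv ℝ (fun x : ℂ => (1 - x.re) ^ q) z = _ := h.fderiv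
  rw [h']
  simp [fderiv_T1]

def gg (z : ℂ) : ℝ := (1 - Complex.normSq z) * (1 - z.re) ^ (-(1/4) : ℝ)

lemma ball_re {z : ℂ} (hz : z ∈ ball (0:ℂ) 1) : z.re < 1 :=
  lt_of_le_of_lt (Complex.re_le_norm z) (by simpa using hz)

lemma ball_normSq {z : ℂ} : z ∈ ball (0:ℂ) 1 ↔ Complex.normSq z < 1 := by
  rw [mem_ball_zero_iff, Complex.normSq_eq_norm_sq]
  rw [sq_lt_one_iff₀ (norm_nonneg z)]

lemma cb_normSq {z : ℂ} : z ∈ closedBall (0:ℂ) 1 ↔ Complex.normSq z ≤ 1 := by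
  rw [mem_closedBall_zero_iff, Complex.normSq_eq_norm_sq]
  rw [sq_le_one_iff₀ (norm_nonneg z)]

lemma cd_A : ContDiff ℝ 2 (fun x : ℂ => 1 - Complex.normSq x) := by
  simp only [Complex.normSq_apply]
  exact contDiff_const.sub ((cd_re.mul cd_re).add (cd_im.mul cd_im))

lemma cda_gg {z : ℂ} (hz : z ∈ ball (0:ℂ) 1) : ContDiffAt ℝ 2 gg z :=
  cd_A.contDiffAt.mul (cda_T (ball_re hz) _)

lemma lap_gg {z : ℂ} (hz : z ∈ ball (0:ℂ) 1) :
    lap gg z = (1 - Complex.normSq z) * (5/16) * (1 - z.re) ^ (-(9/4) : ℝ)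
      - 4 * (1 - z.re) ^ (-(1/4) : ℝ) - z.re * (1 - z.re) ^ (-(5/4) : ℝ) := by
  have hr := ball_re hz
  have hA : ∀ e, ddir e (fun x : ℂ => 1 - Complex.normSq x) z = -2 * e.re ^ 2 - 2 * e.im ^ 2 := by
    intro e
    have : (fun x : ℂ => 1 - Complex.normSq x) =
        fun x : ℂ => 1 + (-1) * (x.re * x.re + x.im * x.im) := by
      ext x; rw [Complex.normSq_apply]; ring
    have hq : ContDiffAt ℝ 2 (fun x : ℂ => x.re * x.re + x.im * x.im) z :=
      ((cd_re.mul cd_re).add (cd_im.mul cd_im)).contDiffAt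
    rw [this, ddir_add contDiffAt_const (contDiffAt_const.mul hq), ddir_mul contDiffAt_const hq,
      ddir_add (cd_re.mul cd_re).contDiffAt (cd_im.mul cd_im).contDiffAt,
      ddir_mul cd_re.contDiffAt cd_re.contDiffAt, ddir_mul cd_im.contDiffAt cd_im.contDiffAt]
    simp only [ddir_re, ddir_im, fderiv_re', fderiv_im', ddir_const]
    simp
    ring
  have hA1 : fderiv ℝ (fun x : ℂ => 1 - Complex.normSq x) z 1 = - 2 * z.re := by
    have d1 : DifferentiableAt ℝ (fun x : ℂ => x.re) z := cd_re.contDiffAt.differentiableAt (by simp)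
    have d2 : DifferentiableAt ℝ (fun x : ℂ => x.im) z := cd_im.contDiffAt.differentiableAt (by simp)
    simp only [Complex.normSq_apply]
    rw [fderiv_const_sub, fderiv_fun_add (d1.fun_mul d1) (d2.fun_mul d2), fderiv_fun_mul d1 d1,
      fderiv_fun_mul d2 d2]
    simp [fderiv_re', fderiv_im']
    ring
  have key : ∀ e, ddir e gg z = _ := fun e => ddir_mul cd_A.contDiffAt (cda_T hr (-(1/4))) e
  rw [lap_eq_ddir, key, key, hA, hA, hA1, ddir_T hr, ddir_T hr, fderiv_T hr, fderiv_T hr]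
  rw [show (-(1/4) - 2 : ℝ) = -(9/4) by norm_num, show (-(1/4) - 1 : ℝ) = -(5/4) by norm_num]
  simp only [Complex.one_re, Complex.one_im, Complex.I_re, Complex.I_im]
  ring

lemma T_split {t : ℝ} (ht : 0 < t) : t ^ (-(9/4) : ℝ) * t = t ^ (-(5/4) : ℝ) ∧
    t ^ (-(5/4) : ℝ) * t = t ^ (-(1/4) : ℝ) := by
  constructor <;> (rw [← Real.rpow_add_one ht.ne']; congr 1; norm_num)

lemma lap_gg_bounds {z : ℂ} (hz : z ∈ ball (0:ℂ) 1) :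
    lap gg z ≤ -(3/8) * (1 - z.re) ^ (-(5/4) : ℝ) ∧ -7 * (1 - z.re) ^ (-(5/4) : ℝ) ≤ lap gg z := by
  have hr := ball_re hz
  have ht : 0 < 1 - z.re := by linarith
  rw [lap_gg hz]
  have h9 : 0 < (1 - z.re) ^ (-(9/4) : ℝ) := Real.rpow_pos_of_pos ht _
  have h5 : 0 < (1 - z.re) ^ (-(5/4) : ℝ) := Real.rpow_pos_of_pos ht _
  obtain ⟨e1, e2⟩ := T_split ht
  have hn := ball_normSq.1 hz
  rw [Complex.normSq_apply] at hn ⊢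
  have ht2 : 1 - z.re ≤ 2 := by nlinarith [mul_self_nonneg z.im, mul_self_nonneg (z.re+1)]
  rw [← e2]
  constructor
  · have : (1 - (z.re * z.re + z.im * z.im)) * (1 - z.re) ^ (-(9/4) : ℝ) ≤
      2 * (1 - z.re) ^ (-(5/4) : ℝ) := by
      rw [← e1]
      have : 1 - (z.re * z.re + z.im * z.im) ≤ 2 * (1 - z.re) := by
        nlinarith [mul_self_nonneg z.im, mul_self_nonneg (z.re - 1)]
      nlinarith
    nlinarith
  · have : 0 ≤ (1 - (z.re * z.re + z.im * z.im)) * (1 - z.re) ^ (-(9/4) : ℝ) :=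
      mul_nonneg (by linarith) h9.le
    nlinarith

lemma gg_pos {z : ℂ} (hz : z ∈ ball (0:ℂ) 1) : 0 < gg z := by
  have ht : 0 < 1 - z.re := by linarith [ball_re hz]
  exact mul_pos (by linarith [ball_normSq.1 hz]) (Real.rpow_pos_of_pos ht _)

lemma gg_cont : ContinuousOn gg (closedBall (0:ℂ) 1) := by
  intro z hz
  by_cases h1 : z.re < 1
  · apply ContinuousAt.continuousWithinAt
    exact (cd_A.contDiffAt.mul (cda_T h1 _)).continuousAt
  · have hz1 : z.re = 1 := by
      have := Complex.re_le_norm z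
      have h2 : ‖z‖ ≤ 1 := by simpa using hz
      linarith
    have hg0 : gg z = 0 := by
      unfold gg; rw [hz1]; norm_num
    have hbd : ∀ x ∈ closedBall (0:ℂ) 1, 0 ≤ gg x ∧ gg x ≤ 2 * (1 - x.re) ^ (3/4 : ℝ) := by
      intro x hx
      have hn := cb_normSq.1 hx
      have hxr : x.re ≤ 1 := (Complex.re_le_norm x).trans (by simpa using hx)
      rcases hxr.lt_or_eq with h | h
      · have ht : 0 < 1 - x.re := by linarith
        have h5 : 0 < (1 - x.re) ^ (-(1/4) : ℝ) := Real.rpow_pos_of_pos ht _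
        refine ⟨mul_nonneg (by linarith) h5.le, ?_⟩
        have : (1 - x.re) ^ (3/4 : ℝ) = (1 - x.re) ^ (-(1/4) : ℝ) * (1 - x.re) := by
          rw [← Real.rpow_add_one ht.ne']; congr 1; norm_num
        rw [this]; unfold gg
        rw [Complex.normSq_apply] at *
        have : 1 - (x.re * x.re + x.im * x.im) ≤ 2 * (1 - x.re) := by
          nlinarith [mul_self_nonneg x.im, mul_self_nonneg (x.re - 1)]
        nlinarith
      · unfold gg; rw [h]; norm_num
    unfold ContinuousWithinAt
    rw [hg0]
    have hlim : Tendsto (fun x : ℂ => 2 * (1 - x.re) ^ (3/4 : ℝ)) (𝓝[closedBall 0 1] z) (𝓝 0) := by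
      have hc : Continuous (fun x : ℂ => 2 * (1 - x.re) ^ (3/4 : ℝ)) := by
        have : Continuous (fun x : ℂ => 1 - x.re) := by fun_prop
        exact continuous_const.mul (this.rpow_const (fun _ => Or.inr (by norm_num)))
      have := hc.tendsto z
      rw [hz1] at this
      norm_num at this
      exact this.mono_left nhdsWithin_le_nhds
    refine tendsto_of_tendsto_of_tendsto_of_le_of_le' tendsto_const_nhds hlim ?_ ?_
    · filter_upwards [self_mem_nhdsWithin] with x hx using (hbd x hx).1
    · filter_upwards [self_mem_nhdsWithin] with x hx using (hbd x hx).2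

lemma gg_sphere {z : ℂ} (hz : z ∈ sphere (0:ℂ) 1) : gg z = 0 := by
  unfold gg
  have : ‖z‖ = 1 := by simpa using hz
  rw [Complex.normSq_eq_norm_sq, this]; norm_num

def uu (ρ : ℂ → ℝ) (z : ℂ) : ℝ := -(1 - z.re) ^ (3/4 : ℝ) - ρ z

def kk (z : ℂ) : ℝ := 3/64 * (1 - z.re) ^ (-(5/4) : ℝ)

structure RhoHyp (ρ : ℂ → ℝ) : Prop where
  cont : ContinuousOn ρ (closedBall (0:ℂ) 1)
  harm : HarmonicOn ρ (ball (0:ℂ) 1)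
  bd : ∀ z ∈ sphere (0:ℂ) 1, ρ z = -(1 - z.re) ^ (3/4 : ℝ)

lemma uu_cont {ρ : ℂ → ℝ} (H : RhoHyp ρ) : ContinuousOn (uu ρ) (closedBall (0:ℂ) 1) := by
  refine ContinuousOn.sub ?_ H.cont
  have : Continuous (fun x : ℂ => 1 - x.re) := by fun_prop
  exact (this.rpow_const (fun _ => Or.inr (by norm_num))).neg.continuousOn

lemma cda_rho {ρ : ℂ → ℝ} (H : RhoHyp ρ) {z : ℂ} (hz : z ∈ ball (0:ℂ) 1) : ContDiffAt ℝ 2 ρ z :=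
  H.harm.1.contDiffAt (isOpen_ball.mem_nhds hz)

lemma cda_uu {ρ : ℂ → ℝ} (H : RhoHyp ρ) {z : ℂ} (hz : z ∈ ball (0:ℂ) 1) :
    ContDiffAt ℝ 2 (uu ρ) z :=
  (cda_T (ball_re hz) _).neg.sub (cda_rho H hz)

lemma lap_uu {ρ : ℂ → ℝ} (H : RhoHyp ρ) {z : ℂ} (hz : z ∈ ball (0:ℂ) 1) :
    lap (uu ρ) z = 4 * kk z := by
  have hr := ball_re hz
  have h1 : uu ρ = fun x => (-1) * (1 - x.re) ^ (3/4 : ℝ) - ρ x := by ext; simp [uu]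
  rw [h1, lap_sub (contDiffAt_const.mul (cda_T hr _)) (cda_rho H hz), H.harm.2 z hz,
    lap_const_mul (cda_T hr _), lap_eq_ddir, ddir_T hr, ddir_T hr]
  rw [show (3/4 - 2 : ℝ) = -(5/4) by norm_num]
  simp [kk]; ring

lemma uu_sphere {ρ : ℂ → ℝ} (H : RhoHyp ρ) {z : ℂ} (hz : z ∈ sphere (0:ℂ) 1) : uu ρ z = 0 := by
  simp [uu, H.bd z hz]

lemma uu_lower {ρ : ℂ → ℝ} (H : RhoHyp ρ) {z : ℂ} (hz : z ∈ ball (0:ℂ) 1) :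
    -(1/2) * gg z ≤ uu ρ z := by
  have := max_principle (v := fun x => -(1/2) * gg x - uu ρ x)
    ((continuousOn_const.mul gg_cont).sub (uu_cont H))
    (fun x hx => ((contDiffAt_const.mul (cda_gg hx)).sub (cda_uu H hx)).contDiffWithinAt)
    (fun x hx => by
      rw [lap_sub (contDiffAt_const.mul (cda_gg hx)) (cda_uu H hx), lap_const_mul (cda_gg hx),
        lap_uu H hx]
      have := (lap_gg_bounds hx).1
      unfold kk; linarith)
    (fun x hx => by simp [gg_sphere hx, uu_sphere H hx]) z hz
  linarith

lemma uu_upper {ρ : ℂ → ℝ} (H : RhoHyp ρ) {z : ℂ} (hz : z ∈ ball (0:ℂ) 1) :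
    uu ρ z ≤ -(3/112) * gg z := by
  have := max_principle (v := fun x => uu ρ x - (-(3/112)) * gg x)
    ((uu_cont H).sub (continuousOn_const.mul gg_cont))
    (fun x hx => ((cda_uu H hx).sub (contDiffAt_const.mul (cda_gg hx))).contDiffWithinAt)
    (fun x hx => by
      rw [lap_sub (cda_uu H hx) (contDiffAt_const.mul (cda_gg hx)), lap_const_mul (cda_gg hx),
        lap_uu H hx]
      have := (lap_gg_bounds hx).2
      unfold kk; linarith)
    (fun x hx => by simp [gg_sphere hx, uu_sphere H hx]) z hz
  linarith

lemma uu_neg {ρ : ℂ → ℝ} (H : RhoHyp ρ) {z : ℂ} (hz : z ∈ ball (0:ℂ) 1) : uu ρ z < 0 := by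
  have := uu_upper H hz
  have := gg_pos hz
  linarith

lemma kk_pos {z : ℂ} (hz : z ∈ ball (0:ℂ) 1) : 0 < kk z := by
  have ht : 0 < 1 - z.re := by linarith [ball_re hz]
  exact mul_pos (by norm_num) (Real.rpow_pos_of_pos ht _)

lemma int_abs {s : ℝ} (hs : s < 1) :
    Integrable (fun x : ℝ => (Ioc (0:ℝ) 3).indicator (fun t => t ^ (-s)) ‖x‖) := by
  rw [integrable_fun_norm_addHaar (μ := (volume : Measure ℝ)) (f := (Ioc (0:ℝ) 3).indicator (fun t => t ^ (-s)))]
  have h1 : IntegrableOn (fun t : ℝ => t ^ (-s)) (Ioc 0 3) := by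
    have := intervalIntegral.intervalIntegrable_rpow' (a := 0) (b := 3) (r := -s) (by linarith)
    rwa [intervalIntegrable_iff_integrableOn_Ioc_of_le (by norm_num)] at this
  simp only [Module.finrank_self, Nat.sub_self, pow_zero, one_smul]
  apply Integrable.integrableOn
  rwa [integrable_indicator_iff measurableSet_Ioc]

lemma int_cnorm {s : ℝ} (hs : s < 2) :
    Integrable (fun x : ℂ => (Ioc (0:ℝ) 3).indicator (fun t => t ^ (-s)) ‖x‖) := by
  rw [integrable_fun_norm_addHaar (μ := (volume : Measure ℂ)) (f := (Ioc (0:ℝ) 3).indicator (fun t => t ^ (-s)))]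
  have h1 : IntegrableOn (fun t : ℝ => t ^ (1-s)) (Ioc 0 3) := by
    have := intervalIntegral.intervalIntegrable_rpow' (a := 0) (b := 3) (r := 1-s) (by linarith)
    rwa [intervalIntegrable_iff_integrableOn_Ioc_of_le (by norm_num)] at this
  have h2 := (integrable_indicator_iff measurableSet_Ioc).2 h1
  refine (h2.integrableOn (s := Ioi 0)).congr_fun ?_ measurableSet_Ioi
  intro t ht
  have ht' : (0:ℝ) < t := ht
  simp only [Complex.finrank_real_complex, smul_eq_mul, indicator]
  split_ifs
  · norm_num
    rw [sub_eq_add_neg, Real.rpow_add ht', Real.rpow_one]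
  · simp

lemma int_prod {f g : ℝ → ℝ} (hf : Integrable f) (hg : Integrable g) :
    Integrable (fun z : ℂ => f z.re * g z.im) := by
  have h := hf.mul_prod hg
  have := (Complex.volume_preserving_equiv_real_prod.integrable_comp_emb
    Complex.measurableEquivRealProd.measurableEmbedding).2 h
  exact this

lemma null_im : ∀ᵐ z : ℂ, z.im ≠ 0 := by
  have h1 : ∀ᵐ p : ℝ × ℝ, p.2 ≠ 0 := by
    have := (Measure.quasiMeasurePreserving_snd (μ := (volume : Measure ℝ)) (ν := (volume : Measure ℝ))).ae
      (p := fun x : ℝ => x ≠ 0) (by simp [ae_iff])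
    exact this
  exact Complex.volume_preserving_equiv_real_prod.quasiMeasurePreserving.ae h1

lemma meas_T (q : ℝ) : Measurable (fun z : ℂ => (1 - z.re) ^ q) := by
  have : Measurable (fun z : ℂ => 1 - z.re) := by fun_prop
  exact this.pow_const q

lemma int_T : IntegrableOn (fun z : ℂ => (1 - z.re) ^ (-(5/4) : ℝ)) (ball (0:ℂ) 1) := by
  have h1 : Integrable (fun x : ℝ => (Ioc (0:ℝ) 3).indicator (fun t => t ^ (-(7/8):ℝ)) ‖1 - x‖) :=
    (int_abs (s := 7/8) (by norm_num)).comp_sub_left 1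
  have h2 := int_abs (s := 3/4) (by norm_num)
  have h3 := (int_prod h1 h2).const_mul 2
  refine Integrable.mono' h3.integrableOn (meas_T _).aestronglyMeasurable ?_
  rw [ae_restrict_iff' measurableSet_ball]
  filter_upwards [null_im] with z hz hb
  have hr := ball_re hb
  have ht : 0 < 1 - z.re := by linarith
  have hn := ball_normSq.1 hb
  rw [Complex.normSq_apply] at hn
  have hy : 0 < |z.im| := abs_pos.2 hz
  have hy1 : |z.im| ≤ 1 := by
    rw [abs_le]; constructor <;> nlinarith [mul_self_nonneg z.re, mul_self_nonneg z.im]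
  have ht2 : 1 - z.re ≤ 2 := by nlinarith [mul_self_nonneg z.im, mul_self_nonneg (z.re+1)]
  rw [Real.norm_of_nonneg (Real.rpow_nonneg ht.le _), Real.norm_of_nonneg ht.le, Real.norm_eq_abs,
    indicator_of_mem (by constructor <;> linarith), indicator_of_mem (by constructor <;> linarith)]
  have e1 : (1 - z.re) ^ (-(5/4) : ℝ) = (1 - z.re) ^ (-(7/8) : ℝ) * (1 - z.re) ^ (-(3/8) : ℝ) := by
    rw [← Real.rpow_add ht]; norm_num
  have e2 : (1 - z.re) ^ (-(3/8) : ℝ) ≤ 2 * |z.im| ^ (-(3/4) : ℝ) := by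
    have hle : |z.im| ^ 2 / 2 ≤ 1 - z.re := by
      rw [sq_abs]; nlinarith [mul_self_nonneg (z.re - 1)]
    have := Real.rpow_le_rpow_of_nonpos (by positivity) hle (show (-(3/8) : ℝ) ≤ 0 by norm_num)
    refine this.trans ?_
    rw [Real.div_rpow (by positivity) (by norm_num), ← Real.rpow_natCast, ← Real.rpow_mul hy.le]
    norm_num
    rw [Real.rpow_neg (by norm_num : (0:ℝ) ≤ 2), div_inv_eq_mul, mul_comm]
    refine mul_le_mul_of_nonneg_right ?_ (Real.rpow_nonneg hy.le _)
    calc (2:ℝ) ^ (3/8:ℝ) ≤ 2 ^ (1:ℝ) := Real.rpow_le_rpow_of_exponent_le (by norm_num) (by norm_num)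
      _ = 2 := by simp
  rw [e1]
  have h7 : 0 < (1 - z.re) ^ (-(7/8) : ℝ) := Real.rpow_pos_of_pos ht _
  calc _ ≤ (1 - z.re) ^ (-(7/8) : ℝ) * (2 * |z.im| ^ (-(3/4) : ℝ)) :=
        mul_le_mul_of_nonneg_left e2 h7.le
    _ = _ := by ring

lemma meas_kk : Measurable kk := (meas_T _).const_mul _

lemma int_kk : IntegrableOn kk (ball (0:ℂ) 1) := int_T.const_mul _

lemma int_b (b : ℂ) (hb : ‖b‖ = 1) : IntegrableOn (fun z : ℂ => ‖z - b‖ ^ (-(7/4) : ℝ)) (ball (0:ℂ) 1) := by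
  have h1 : Integrable (fun x : ℂ => (Ioc (0:ℝ) 3).indicator (fun t => t ^ (-(7/4):ℝ)) ‖x - b‖) :=
    (int_cnorm (s := 7/4) (by norm_num)).comp_sub_right b
  refine (h1.integrableOn (s := ball 0 1)).congr_fun ?_ measurableSet_ball
  intro z hz
  have hz1 : ‖z‖ < 1 := by simpa using hz
  have : 0 < ‖z - b‖ := by
    rw [norm_pos_iff, sub_ne_zero]; rintro rfl; linarith
  have h2 : ‖z - b‖ ≤ 3 := by linarith [norm_sub_le z b]
  show (Ioc (0:ℝ) 3).indicator (fun t => t ^ (-(7/4):ℝ)) ‖z - b‖ = _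
  exact indicator_of_mem (show ‖z-b‖ ∈ Ioc (0:ℝ) 3 from ⟨this, h2⟩) _

structure IsTest (ψ : ℂ → ℝ) : Prop where
  cd : ContDiff ℝ 2 ψ
  cs : HasCompactSupport ψ
  ts : tsupport ψ ⊆ ball (0:ℂ) 1

lemma int_cpt {w g : ℂ → ℝ} (hw : ContinuousOn w (ball (0:ℂ) 1)) (hg : Continuous g)
    (hc : HasCompactSupport g) (hs : tsupport g ⊆ ball (0:ℂ) 1) :
    Integrable (fun z => w z * g z) := by
  have hcs : HasCompactSupport (fun z => w z * g z) := hc.mul_left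
  refine Continuous.integrable_of_hasCompactSupport ?_ hcs
  apply continuous_of_tsupport
  intro x hx
  have hx' : x ∈ tsupport g := tsupport_mul_subset_right hx
  exact (hw.continuousAt (isOpen_ball.mem_nhds (hs hx'))).mul hg.continuousAt

lemma cdo_fderiv {w : ℂ → ℝ} (hw : ContDiffOn ℝ 2 w (ball (0:ℂ) 1)) (e : ℂ) :
    ContDiffOn ℝ 1 (fun z => fderiv ℝ w z e) (ball (0:ℂ) 1) := by
  exact (hw.fderiv_of_isOpen isOpen_ball (by norm_num)).clm_apply contDiffOn_const

lemma ddir_cont {w : ℂ → ℝ} (hw : ContDiffOn ℝ 2 w (ball (0:ℂ) 1)) (e : ℂ) :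
    ContinuousOn (ddir e w) (ball (0:ℂ) 1) := by
  have := (cdo_fderiv hw e).continuousOn_fderiv_of_isOpen isOpen_ball (by simp)
  exact this.clm_apply continuousOn_const

lemma lap_cont {w : ℂ → ℝ} (hw : ContDiffOn ℝ 2 w (ball (0:ℂ) 1)) :
    ContinuousOn (lap w) (ball (0:ℂ) 1) := (ddir_cont hw 1).add (ddir_cont hw Complex.I)

lemma IsTest.fd {ψ : ℂ → ℝ} (h : IsTest ψ) (e : ℂ) : ContDiff ℝ 1 (fun z => fderiv ℝ ψ z e) :=
  (h.cd.fderiv_right (m := 1) (by norm_num)).clm_apply contDiff_const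

lemma IsTest.dd {ψ : ℂ → ℝ} (h : IsTest ψ) (e : ℂ) : Continuous (ddir e ψ) :=
  ((h.fd e).continuous_fderiv (by simp)).clm_apply continuous_const

lemma tsupp_fd (ψ : ℂ → ℝ) (e : ℂ) : tsupport (fun z => fderiv ℝ ψ z e) ⊆ tsupport ψ := 
  tsupport_fderiv_apply_subset ℝ e

lemma tsupp_dd (ψ : ℂ → ℝ) (e : ℂ) : tsupport (ddir e ψ) ⊆ tsupport ψ :=
  (tsupport_fderiv_apply_subset ℝ e).trans (tsupp_fd ψ e)

lemma green_dir {w ψ : ℂ → ℝ} (hw : ContDiffOn ℝ 2 w (ball (0:ℂ) 1)) (h : IsTest ψ) (e : ℂ) :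
    ∫ z, w z * ddir e ψ z = ∫ z, ddir e w z * ψ z := by
  have c1 : HasCompactSupport (fun z => fderiv ℝ ψ z e) := h.cs.of_isClosed_subset (isClosed_tsupport _) (tsupp_fd ψ e)
  have c2 : HasCompactSupport (ddir e ψ) := h.cs.of_isClosed_subset (isClosed_tsupport _) (tsupp_dd ψ e)
  have s1 := (tsupp_fd ψ e).trans h.ts
  have s2 := (tsupp_dd ψ e).trans h.ts
  have f1 := cdo_fderiv hw e
  have hwd : ∀ x ∈ ball (0:ℂ) 1, DifferentiableAt ℝ w x := fun x hx =>
    (hw.contDiffAt (isOpen_ball.mem_nhds hx)).differentiableAt (by simp)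
  have hwd1 : ∀ x ∈ ball (0:ℂ) 1, DifferentiableAt ℝ (fun z => fderiv ℝ w z e) x := fun x hx =>
    (f1.contDiffAt (isOpen_ball.mem_nhds hx)).differentiableAt (by simp)
  have a1 := integral_mul_fderiv_eq_neg_fderiv_mul_of_integrable (μ := (volume : Measure ℂ)) (f := w) (g := fun z => fderiv ℝ ψ z e) (v := e)
    (int_cpt f1.continuousOn (h.fd e).continuous c1 s1)
    (int_cpt hw.continuousOn (h.dd e) c2 s2)
    (int_cpt hw.continuousOn (h.fd e).continuous c1 s1)
    (fun x hx => hwd x (s1 hx)) (fun x _ => (h.fd e).differentiable (by simp) x)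
  have a2 := integral_mul_fderiv_eq_neg_fderiv_mul_of_integrable (μ := (volume : Measure ℂ)) (f := fun z => fderiv ℝ w z e) (g := ψ) (v := e)
    (int_cpt (ddir_cont hw e) h.cd.continuous h.cs h.ts)
    (int_cpt f1.continuousOn (h.fd e).continuous c1 s1)
    (int_cpt f1.continuousOn h.cd.continuous h.cs h.ts)
    (fun x hx => hwd1 x (h.ts hx)) (fun x _ => h.cd.differentiable (by simp) x)
  calc _ = ∫ z, w z * fderiv ℝ (fun z => fderiv ℝ ψ z e) z e := rfl
    _ = _ := by rw [a1, a2, neg_neg]; rfl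

lemma green {w ψ : ℂ → ℝ} (hw : ContDiffOn ℝ 2 w (ball (0:ℂ) 1)) (h : IsTest ψ) :
    ∫ z in ball (0:ℂ) 1, w z * lap ψ z = ∫ z in ball (0:ℂ) 1, lap w z * ψ z := by
  have z0 : ∀ x, x ∉ ball (0:ℂ) 1 → ψ x = 0 := fun x hx => image_eq_zero_of_notMem_tsupport (fun hh => hx (h.ts hh))
  have zd : ∀ e x, x ∉ ball (0:ℂ) 1 → ddir e ψ x = 0 := fun e x hx =>
    image_eq_zero_of_notMem_tsupport (fun hh => hx (h.ts (tsupp_dd ψ e hh)))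
  rw [setIntegral_eq_integral_of_forall_compl_eq_zero (fun x hx => by
      rw [lap_eq_ddir, zd 1 x hx, zd Complex.I x hx]; simp),
    setIntegral_eq_integral_of_forall_compl_eq_zero (fun x hx => by rw [z0 x hx]; simp)]
  have c2 : ∀ e, HasCompactSupport (ddir e ψ) := fun e => h.cs.of_isClosed_subset (isClosed_tsupport _) (tsupp_dd ψ e)
  simp only [lap_eq_ddir, mul_add, add_mul]
  rw [integral_add, integral_add, green_dir hw h, green_dir hw h]
  · exact int_cpt (ddir_cont hw _) h.cd.continuous h.cs h.ts
  · exact int_cpt (ddir_cont hw _) h.cd.continuous h.cs h.ts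
  · exact int_cpt hw.continuousOn (h.dd _) (c2 _) ((tsupp_dd ψ _).trans h.ts)
  · exact int_cpt hw.continuousOn (h.dd _) (c2 _) ((tsupp_dd ψ _).trans h.ts)

lemma IsTest.int_lap {w ψ : ℂ → ℝ} (hw : ContinuousOn w (ball (0:ℂ) 1)) (h : IsTest ψ) :
    IntegrableOn (fun z => w z * lap ψ z) (ball (0:ℂ) 1) := by
  have c2 : ∀ e, HasCompactSupport (ddir e ψ) := fun e => h.cs.of_isClosed_subset (isClosed_tsupport _) (tsupp_dd ψ e)
  simp only [lap_eq_ddir, mul_add]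
  exact ((int_cpt hw (h.dd _) (c2 _) ((tsupp_dd ψ _).trans h.ts)).add
    (int_cpt hw (h.dd _) (c2 _) ((tsupp_dd ψ _).trans h.ts))).integrableOn

lemma measure_le_of_test {m1 m2 : Measure ℂ} (h1 : m1 (ball (0:ℂ) 1)ᶜ = 0)
    (h2 : ∀ R : ℝ, 0 < R → R < 1 → m2 (ball (0:ℂ) R) < ⊤)
    (h : ∀ ψ : ℂ → ℝ, IsTest ψ → (∀ z, 0 ≤ ψ z) →
      ∫⁻ z, ENNReal.ofReal (ψ z) ∂m1 ≤ ∫⁻ z, ENNReal.ofReal (ψ z) ∂m2) : m1 ≤ m2 := by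
  have hop : ∀ R : ℝ, R < 1 → ∀ U : Set ℂ, IsOpen U → U ⊆ ball (0:ℂ) R → m1 U ≤ m2 U := by
    intro R hR U hU hUR
    obtain ⟨ψ0, hs, hcd, hrange⟩ := hU.exists_contDiff_support_eq (n := 2)
    have hψ0 : ∀ z, 0 ≤ ψ0 z := fun z => (hrange ⟨z, rfl⟩).1
    set ψ : ℕ → ℂ → ℝ := fun n z => Real.smoothTransition (n * ψ0 z) with hψ
    have hsupp : ∀ n, Function.support (ψ n) ⊆ U := by
      intro n z hz
      rw [← hs]
      by_contra hc
      rw [Function.notMem_support] at hc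
      apply hz
      simp [hψ, hc]
    have hts : ∀ n, tsupport (ψ n) ⊆ closedBall (0:ℂ) R := fun n =>
      closure_minimal ((hsupp n).trans (hUR.trans ball_subset_closedBall)) isClosed_closedBall
    have htest : ∀ n, IsTest (ψ n) := by
      intro n
      refine ⟨?_, ?_, (hts n).trans (closedBall_subset_ball hR)⟩
      · exact Real.smoothTransition.contDiff.comp (contDiff_const.mul hcd)
      · exact (isCompact_closedBall (0:ℂ) R).of_isClosed_subset (isClosed_tsupport _) (hts n)
    have hlim : ∀ z ∈ U, ∀ᶠ n in atTop, ψ n z = 1 := by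
      intro z hz
      have hp : 0 < ψ0 z := lt_of_le_of_ne (hψ0 z) (by rw [← hs] at hz; exact fun hh => hz hh.symm)
      obtain ⟨N, hN⟩ := exists_nat_ge (1 / ψ0 z)
      filter_upwards [eventually_ge_atTop N] with n hn
      apply Real.smoothTransition.one_of_one_le
      have : (N:ℝ) ≤ n := by exact_mod_cast hn
      rw [div_le_iff₀ hp] at hN
      nlinarith
    calc m1 U = ∫⁻ z, U.indicator 1 z ∂m1 := by rw [lintegral_indicator_one hU.measurableSet]
      _ ≤ ∫⁻ z, liminf (fun n => ENNReal.ofReal (ψ n z)) atTop ∂m1 := by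
          apply lintegral_mono
          intro z
          by_cases hz : z ∈ U
          · simp only [indicator_of_mem hz]
            have : Tendsto (fun n => ENNReal.ofReal (ψ n z)) atTop (𝓝 1) := by
              apply tendsto_const_nhds.congr'
              filter_upwards [hlim z hz] with n hn
              simp [hn]
            rw [this.liminf_eq]; rfl
          · simp [indicator_of_notMem hz]
      _ ≤ liminf (fun n => ∫⁻ z, ENNReal.ofReal (ψ n z) ∂m1) atTop := by
          apply lintegral_liminf_le
          intro n
          exact (htest n).cd.continuous.measurable.ennreal_ofReal
      _ ≤ liminf (fun n : ℕ => m2 U) atTop := by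
          refine liminf_le_liminf (Eventually.of_forall fun n => ?_)
          refine (h _ (htest n) (fun z => Real.smoothTransition.nonneg _)).trans ?_
          rw [← lintegral_indicator_one hU.measurableSet]
          apply lintegral_mono
          intro z
          by_cases hz : z ∈ U
          · simp only [indicator_of_mem hz]
            exact ENNReal.ofReal_le_one.2 (Real.smoothTransition.le_one _)
          · have : ψ n z = 0 := by
              by_contra hc; exact hz (hsupp n hc)
            simp [this]
      _ = m2 U := by simp
  have hE : ∀ R : ℝ, 0 < R → R < 1 → ∀ E : Set ℂ, MeasurableSet E → E ⊆ ball (0:ℂ) R → m1 E ≤ m2 E := by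
    intro R hR0 hR E hE hER
    haveI : IsFiniteMeasure (m2.restrict (ball (0:ℂ) R)) := ⟨by simpa using h2 R hR0 hR⟩
    apply le_of_forall_gt
    intro c hc
    have hc' : (m2.restrict (ball (0:ℂ) R)) E < c := by
      rw [Measure.restrict_apply hE, inter_eq_self_of_subset_left hER]; exact hc
    obtain ⟨V, hEV, hV, hlt⟩ := E.exists_isOpen_lt_of_lt _ hc'
    rw [Measure.restrict_apply hV.measurableSet] at hlt
    calc m1 E ≤ m1 (V ∩ ball (0:ℂ) R) := measure_mono (subset_inter hEV hER)
      _ ≤ m2 (V ∩ ball (0:ℂ) R) := hop R hR _ (hV.inter isOpen_ball) inter_subset_right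
      _ < c := hlt
  rw [Measure.le_iff]
  intro E hEm
  have hmono : Monotone (fun n : ℕ => E ∩ ball (0:ℂ) (1 - 1 / (n + 2))) := by
    intro n k hnk
    apply inter_subset_inter_right
    apply ball_subset_ball
    have : (n:ℝ) ≤ k := by exact_mod_cast hnk
    gcongr
  have hU : E ∩ ball (0:ℂ) 1 = ⋃ n : ℕ, E ∩ ball (0:ℂ) (1 - 1 / (n + 2)) := by
    ext z
    simp only [mem_inter_iff, mem_iUnion, mem_ball_zero_iff]
    constructor
    · rintro ⟨h3, h4⟩
      obtain ⟨n, hn⟩ := exists_nat_gt (1 / (1 - ‖z‖))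
      refine ⟨n, h3, ?_⟩
      have h5 : 0 < 1 - ‖z‖ := by linarith
      rw [div_lt_iff₀ h5] at hn
      have : 1 / ((n:ℝ) + 2) < 1 - ‖z‖ := by
        rw [div_lt_iff₀ (by positivity)]; nlinarith
      linarith
    · rintro ⟨n, h3, h4⟩
      refine ⟨h3, h4.trans_le ?_⟩
      have : (0:ℝ) ≤ 1 / (n + 2) := by positivity
      linarith
  calc m1 E ≤ m1 (E ∩ ball (0:ℂ) 1) + m1 (ball (0:ℂ) 1)ᶜ := by
        refine (measure_mono ?_).trans (measure_union_le _ _)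
        intro z hz
        by_cases hb : z ∈ ball (0:ℂ) 1
        · exact Or.inl ⟨hz, hb⟩
        · exact Or.inr hb
    _ = m1 (E ∩ ball (0:ℂ) 1) := by rw [h1, add_zero]
    _ = ⨆ n : ℕ, m1 (E ∩ ball (0:ℂ) (1 - 1 / (n + 2))) := by rw [hU, hmono.measure_iUnion]
    _ ≤ m2 E := by
        apply iSup_le
        intro n
        have h5 : (0:ℝ) < 1 / (n + 2) := by positivity
        have h6 : 1 / ((n:ℝ) + 2) < 1 := by
          rw [div_lt_one (by positivity)]; linarith [(Nat.cast_nonneg n : (0:ℝ) ≤ n)]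
        exact (hE (1 - 1 / (n + 2)) (by linarith) (by linarith) _ (hEm.inter measurableSet_ball)
          inter_subset_right).trans (measure_mono inter_subset_left)


def kv : Measure ℂ := (volume.restrict (ball (0:ℂ) 1)).withDensity (fun z => ENNReal.ofReal (kk z))

instance kv_fin : IsFiniteMeasure kv := isFiniteMeasure_withDensity_ofReal int_kk.2

lemma kv_compl : kv (ball (0:ℂ) 1)ᶜ = 0 := by
  apply withDensity_absolutelyContinuous
  rw [Measure.restrict_apply measurableSet_ball.compl]; simp

lemma int_kv (F : ℂ → ℝ) {s : Set ℂ} (hs : MeasurableSet s) (hsub : s ⊆ ball (0:ℂ) 1) :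
    ∫ z in s, F z ∂kv = ∫ z in s, kk z * F z := by
  unfold kv
  rw [restrict_withDensity hs, Measure.restrict_restrict hs, inter_eq_self_of_subset_left hsub]
  rw [integral_withDensity_eq_integral_toReal_smul meas_kk.ennreal_ofReal (by simp)]
  apply setIntegral_congr_fun hs
  intro z hz
  simp [ENNReal.toReal_ofReal (kk_pos (hsub hz)).le]

lemma int_kv' (F : ℂ → ℝ) : ∫ z, F z ∂kv = ∫ z in ball (0:ℂ) 1, kk z * F z := by
  rw [← int_kv F measurableSet_ball subset_rfl]
  rw [Measure.restrict_eq_self_of_ae_mem]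
  exact kv_compl

lemma kv_pos {S : Set ℂ} (hS : IsOpen S) {z : ℂ} (hz : z ∈ S) (hD : S ⊆ ball (0:ℂ) 1) : 0 < kv S := by
  rw [pos_iff_ne_zero]
  intro h0
  unfold kv at h0
  rw [withDensity_apply_eq_zero meas_kk.ennreal_ofReal] at h0
  have : S ⊆ {x | ENNReal.ofReal (kk x) ≠ 0} ∩ S := fun x hx => ⟨by
    simpa using kk_pos (hD hx), hx⟩
  have h1 := measure_mono_null this h0
  rw [Measure.restrict_apply hS.measurableSet, inter_eq_self_of_subset_left hD] at h1
  exact (hS.measure_pos volume ⟨z, hz⟩).ne' h1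

lemma IsTest.integrable {ψ : ℂ → ℝ} (h : IsTest ψ) {m : Measure ℂ}
    (hm : ∀ R : ℝ, 0 < R → R < 1 → m (ball (0:ℂ) R) < ⊤) : Integrable ψ m := by
  obtain ⟨R, hR, hs⟩ := exists_lt_subset_ball (isClosed_tsupport ψ) h.ts
  have hs' : tsupport ψ ⊆ ball 0 (max R (1/2)) := hs.trans (ball_subset_ball (le_max_left _ _))
  obtain ⟨C, hC⟩ := h.cs.exists_bound_of_continuous h.cd.continuous
  have : IntegrableOn ψ (ball 0 (max R (1/2))) m := by
    apply Measure.integrableOn_of_bounded (M := C)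
    · exact (hm _ (by positivity) (max_lt hR (by norm_num))).ne
    · exact h.cd.continuous.aestronglyMeasurable
    · exact Eventually.of_forall hC
  exact (integrableOn_iff_integrable_of_support_subset ((subset_tsupport ψ).trans hs')).1 this

lemma IsTest.zero {ψ : ℂ → ℝ} (h : IsTest ψ) {z : ℂ} (hz : z ∉ ball (0:ℂ) 1) : ψ z = 0 :=
  image_eq_zero_of_notMem_tsupport (fun hh => hz (h.ts hh))

lemma ofReal_test {ψ : ℂ → ℝ} (_h : IsTest ψ) (h0 : ∀ z, 0 ≤ ψ z) {m : Measure ℂ}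
    (hi : ∫ z, ψ z ∂m ≠ 0) : ∫⁻ z, ENNReal.ofReal (ψ z) ∂m = ENNReal.ofReal (∫ z, ψ z ∂m) := by
  rw [ofReal_integral_eq_lintegral_ofReal (Integrable.of_integral_ne_zero hi) (Eventually.of_forall h0)]

lemma test_kv {ρ : ℂ → ℝ} (H : RhoHyp ρ) {ψ : ℂ → ℝ} (h : IsTest ψ) :
    ∫ z, ψ z ∂kv = (4:ℝ)⁻¹ * ∫ z in ball (0:ℂ) 1, uu ρ z * lap ψ z := by
  rw [green (fun z hz => (cda_uu H hz).contDiffWithinAt) h, int_kv', ← integral_const_mul]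
  apply setIntegral_congr_fun measurableSet_ball
  intro z hz
  simp only [lap_uu H hz]; ring

lemma nu_eq {ρ : ℂ → ℝ} (H : RhoHyp ρ) {ν : Measure ℂ} (hν : IsRieszMeasure (uu ρ) (ball (0:ℂ) 1) ν) :
    ν = kv := by
  have key : ∀ ψ : ℂ → ℝ, IsTest ψ → (∀ z, 0 ≤ ψ z) →
      ∫⁻ z, ENNReal.ofReal (ψ z) ∂ν = ∫⁻ z, ENNReal.ofReal (ψ z) ∂kv := by
    intro ψ h h0
    by_cases hz : ∃ z, ψ z ≠ 0
    · obtain ⟨z, hz⟩ := hz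
      have h1 : ∫ z, ψ z ∂kv ≠ 0 := by
        apply ne_of_gt
        rw [integral_pos_iff_support_of_nonneg h0
          (h.integrable (fun R _ _ => measure_lt_top _ _))]
        exact kv_pos (h.cd.continuous.isOpen_support) hz ((subset_tsupport ψ).trans h.ts)
      have h2 : ∫ z, ψ z ∂ν = ∫ z, ψ z ∂kv := by
        rw [hν.2 ψ h.cd h.cs h.ts, test_kv H h]
      rw [ofReal_test h h0 h1, ofReal_test h h0 (by rw [h2]; exact h1), h2]
    · push Not at hz
      simp [hz]
  have hle : ν ≤ kv := measure_le_of_test hν.1 (fun R _ _ => measure_lt_top _ _)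
    (fun ψ h h0 => (key ψ h h0).le)
  exact le_antisymm hle (measure_le_of_test kv_compl
    (fun R _ _ => lt_of_le_of_lt (hle _) (measure_lt_top _ _)) (fun ψ h h0 => (key ψ h h0).ge))

/-- smoothing of max -/
lemma smooth_max (r' η : ℝ) (hη : 0 < η) : ∃ M M' M'' : ℝ → ℝ, ContDiff ℝ 2 M ∧
    (∀ t, HasDerivAt M (M' t) t) ∧ (∀ t, HasDerivAt M' (M'' t) t) ∧ (∀ t, 0 ≤ M' t) ∧
    (∀ t, 0 ≤ M'' t) ∧ (∀ t, r' + η ≤ t → 1 - η ^ 2 ≤ M' t) ∧ (∀ t, |M t - max t r'| ≤ η ^ 2) := by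
  have hp : ∀ t : ℝ, 0 < (t - r') ^ 2 + η ^ 4 := fun t => by positivity
  set w : ℝ → ℝ := fun t => Real.sqrt ((t - r') ^ 2 + η ^ 4) with hw
  have hwp : ∀ t, 0 < w t := fun t => Real.sqrt_pos.2 (hp t)
  have hw2 : ∀ t, w t ^ 2 = (t - r') ^ 2 + η ^ 4 := fun t => Real.sq_sqrt (hp t).le
  have hd0 : ∀ t, HasDerivAt (fun t => (t - r') ^ 2 + η ^ 4) (2 * (t - r')) t := by
    intro t
    have := (((hasDerivAt_id t).sub_const r').pow 2).add_const (η ^ 4)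
    simpa using this
  have hwd : ∀ t, HasDerivAt w ((t - r') / w t) t := by
    intro t
    have := (hd0 t).sqrt (hp t).ne'
    convert this using 1
    rw [mul_div_mul_left _ _ (by norm_num : (2:ℝ) ≠ 0)]
  have habs : ∀ t, |t - r'| ≤ w t := fun t => Real.abs_le_sqrt (by nlinarith [pow_pos hη 4])
  refine ⟨fun t => (t + r' + w t) / 2, fun t => (1 + (t - r') / w t) / 2,
    fun t => (η ^ 4 / (w t) ^ 3) / 2, ?_, ?_, ?_, ?_, ?_, ?_, ?_⟩
  · have : ContDiff ℝ 2 w := by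
      apply ContDiff.sqrt (by fun_prop) (fun t => (hp t).ne')
    fun_prop
  · intro t
    have := (((hasDerivAt_id t).add_const r').add (hwd t)).div_const 2
    simpa using this
  · intro t
    have := ((((hasDerivAt_id t).sub_const r').div (hwd t) (hwp t).ne').const_add 1).div_const 2
    have h1 := (hwp t).ne'
    have hee : η ^ 4 / (w t) ^ 3 = (1 * w t - (t - r') * ((t - r') / w t)) / (w t) ^ 2 := by
      field_simp
      linarith [hw2 t]
    refine this.congr_deriv ?_
    beta_reduce
    rw [hee]; rfl
  · intro t
    have := habs t
    have h2 : -1 ≤ (t - r') / w t := by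
      rw [le_div_iff₀ (hwp t)]; linarith [neg_abs_le (t - r')]
    linarith
  · intro t
    have := hwp t
    positivity
  · intro t ht
    have hx : η ≤ t - r' := by linarith
    have h3 : w t ≤ (t - r') * (1 + η ^ 2) := by
      apply Real.sqrt_le_iff.2
      have h5 : η ^ 2 ≤ (t - r') ^ 2 := by gcongr
      refine ⟨by nlinarith [sq_nonneg η], ?_⟩
      nlinarith [sq_nonneg ((t - r') * η ^ 2), mul_le_mul_of_nonneg_left h5 (sq_nonneg η), sq_nonneg ((t - r') * η)]
    have h4 : 1 - η ^ 2 ≤ (t - r') / w t := by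
      rw [le_div_iff₀ (hwp t)]
      by_cases hh : 1 - η ^ 2 ≤ 0
      · nlinarith [hwp t]
      · push Not at hh
        calc (1 - η ^ 2) * w t ≤ (1 - η ^ 2) * ((t - r') * (1 + η ^ 2)) := by gcongr
          _ = (t - r') - (t - r') * (η ^ 2) ^ 2 := by ring
          _ ≤ _ := by nlinarith [sq_nonneg (η ^ 2)]
    nlinarith [sq_nonneg η]
  · intro t
    have h5 : max t r' = (t + r' + |t - r'|) / 2 := by
      rcases le_total t r' with h | h
      · rw [max_eq_right h, abs_of_nonpos (by linarith)]; ring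
      · rw [max_eq_left h, abs_of_nonneg (by linarith)]; ring
    have h6 : w t ≤ |t - r'| + η ^ 2 := by
      apply Real.sqrt_le_iff.2
      refine ⟨by positivity, ?_⟩
      nlinarith [sq_abs (t - r'), mul_nonneg (abs_nonneg (t - r')) (sq_nonneg η)]
    rw [h5, abs_le]
    have := habs t
    constructor <;> nlinarith [sq_nonneg η]

def Ar (ρ : ℂ → ℝ) (r : ℝ) : Set ℂ := {z | z ∈ ball (0:ℂ) 1 ∧ uu ρ z < r}
def Br (ρ : ℂ → ℝ) (r : ℝ) : Set ℂ := {z | z ∈ ball (0:ℂ) 1 ∧ r ≤ uu ρ z}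

lemma Ar_open {ρ : ℂ → ℝ} (H : RhoHyp ρ) (r : ℝ) : IsOpen (Ar ρ r) := by
  have := ((uu_cont H).mono ball_subset_closedBall).isOpen_inter_preimage isOpen_ball (isOpen_Iio (a := r))
  exact this

lemma Br_eq {ρ : ℂ → ℝ} (r : ℝ) : Br ρ r = ball (0:ℂ) 1 \ Ar ρ r := by
  ext z; simp only [Br, Ar, mem_ofPred_eq, Set.mem_sdiff]
  constructor
  · rintro ⟨h1, h2⟩; exact ⟨h1, fun h => by linarith [h.2]⟩
  · rintro ⟨h1, h2⟩; exact ⟨h1, by by_contra h; exact h2 ⟨h1, by linarith⟩⟩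

lemma Br_meas {ρ : ℂ → ℝ} (H : RhoHyp ρ) (r : ℝ) : MeasurableSet (Br ρ r) := by
  rw [Br_eq]; exact measurableSet_ball.diff (Ar_open H r).measurableSet

lemma Br_sub {ρ : ℂ → ℝ} (r : ℝ) : Br ρ r ⊆ ball (0:ℂ) 1 := fun _ h => h.1
lemma Ar_sub {ρ : ℂ → ℝ} (r : ℝ) : Ar ρ r ⊆ ball (0:ℂ) 1 := fun _ h => h.1

lemma test_max {ρ : ℂ → ℝ} (H : RhoHyp ρ) (r : ℝ) {ψ : ℂ → ℝ} (h : IsTest ψ) (h0 : ∀ z, 0 ≤ ψ z) :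
    ∫ z in Br ρ r, ψ z ∂kv ≤ (4:ℝ)⁻¹ * ∫ z in ball (0:ℂ) 1, max (uu ρ z) r * lap ψ z := by
  rw [int_kv ψ (Br_meas H r) (Br_sub r)]
  set η : ℕ → ℝ := fun n => 1 / ((n:ℝ) + 1) with hηd
  have hη : ∀ n, 0 < η n := fun n => by positivity
  have hη1 : ∀ n, η n ≤ 1 := fun n => by
    rw [hηd]; simp only
    rw [div_le_one (by positivity)]; linarith [Nat.cast_nonneg (α := ℝ) n]
  have hη0 : Tendsto η atTop (𝓝 0) := tendsto_one_div_add_atTop_nhds_zero_nat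
  choose M M' M'' hM1 hM2 hM3 hM4 hM5 hM6 hM7 using fun n => smooth_max (r - η n) (η n) (hη n)
  have huc : ContinuousOn (uu ρ) (ball (0:ℂ) 1) := (uu_cont H).mono ball_subset_closedBall
  have hcd : ∀ n, ContDiffOn ℝ 2 (fun z => M n (uu ρ z)) (ball (0:ℂ) 1) := fun n z hz =>
    ((hM1 n).contDiffAt.comp z (cda_uu H hz)).contDiffWithinAt
  have hlow : ∀ n, (1 - η n ^ 2) * ∫ z in Br ρ r, kk z * ψ z ≤
      (4:ℝ)⁻¹ * ∫ z in ball (0:ℂ) 1, M n (uu ρ z) * lap ψ z := by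
    intro n
    rw [green (hcd n) h, ← integral_const_mul, ← integral_const_mul]
    have hlapi : Integrable (fun z => lap (fun z => M n (uu ρ z)) z * ψ z) :=
      int_cpt (lap_cont (hcd n)) h.cd.continuous h.cs h.ts
    have hlap : ∀ z ∈ ball (0:ℂ) 1, M' n (uu ρ z) * (4 * kk z) ≤ lap (fun z => M n (uu ρ z)) z := by
      intro z hz
      rw [lap_eq_ddir, ddir_comp (cda_uu H hz) (Eventually.of_forall (hM2 n)) (hM3 n _),
        ddir_comp (cda_uu H hz) (Eventually.of_forall (hM2 n)) (hM3 n _)]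
      have := lap_uu H hz
      rw [lap_eq_ddir] at this
      rw [← this]
      have a1 := mul_nonneg (hM5 n (uu ρ z)) (sq_nonneg (fderiv ℝ (uu ρ) z 1))
      have a2 := mul_nonneg (hM5 n (uu ρ z)) (sq_nonneg (fderiv ℝ (uu ρ) z Complex.I))
      linarith
    have hnn : ∀ z ∈ ball (0:ℂ) 1, 0 ≤ lap (fun z => M n (uu ρ z)) z := fun z hz =>
      le_trans (mul_nonneg (hM4 n _) (by linarith [kk_pos hz])) (hlap z hz)
    calc ∫ z in Br ρ r, (1 - η n ^ 2) * (kk z * ψ z)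
        ≤ ∫ z in Br ρ r, (4:ℝ)⁻¹ * (lap (fun z => M n (uu ρ z)) z * ψ z) := by
          apply setIntegral_mono_on
          · exact ((int_cpt (w := kk) (fun z hz => (contDiffAt_const.mul (cda_T (ball_re hz) _)).continuousAt.continuousWithinAt) h.cd.continuous h.cs h.ts).const_mul _).integrableOn
          · exact (hlapi.const_mul _).integrableOn
          · exact Br_meas H r
          · intro z hz
            have b1 := hlap z hz.1
            have b2 := hM6 n (uu ρ z) (by have := hz.2; linarith)
            have b3 := kk_pos hz.1
            have b4 := mul_le_mul_of_nonneg_right b2 b3.le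
            have b5 := mul_le_mul_of_nonneg_right (show (1 - η n ^ 2) * kk z ≤ 4⁻¹ * lap (fun z => M n (uu ρ z)) z by linarith) (h0 z)
            linarith
      _ ≤ ∫ z in ball (0:ℂ) 1, (4:ℝ)⁻¹ * (lap (fun z => M n (uu ρ z)) z * ψ z) := by
          apply setIntegral_mono_set
          · exact (hlapi.const_mul _).integrableOn
          · filter_upwards [ae_restrict_mem measurableSet_ball] with z hz
            have := mul_nonneg (hnn z hz) (h0 z)
            simp only [Pi.zero_apply]
            linarith
          · exact (Br_sub r).eventuallyLE
  have hlim : Tendsto (fun n => ∫ z in ball (0:ℂ) 1, M n (uu ρ z) * lap ψ z) atTop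
      (𝓝 (∫ z in ball (0:ℂ) 1, max (uu ρ z) r * lap ψ z)) := by
    have hmm : ∀ n t, |M n t - max t r| ≤ 2 * η n := by
      intro n t
      have c1 := hM7 n t
      have c2 : |max t (r - η n) - max t r| ≤ η n := by
        have := abs_max_sub_max_le_max t (r - η n) t r
        simp at this
        rwa [abs_of_pos (hη n)] at this
      have c3 : η n ^ 2 ≤ η n := by nlinarith [hη n, hη1 n]
      calc _ = |(M n t - max t (r - η n)) + (max t (r - η n) - max t r)| := by ring_nf
        _ ≤ _ := (abs_add_le _ _).trans (by linarith)
    have hcm : ContinuousOn (fun z => |max (uu ρ z) r| + 2) (ball (0:ℂ) 1) :=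
      ((ContinuousOn.sup huc (continuousOn_const (c := r))).abs).add continuousOn_const
    apply tendsto_integral_of_dominated_convergence (fun z => |(|max (uu ρ z) r| + 2) * lap ψ z|)
    · intro n
      exact (h.int_lap (hcd n).continuousOn).aestronglyMeasurable
    · exact (h.int_lap hcm).abs
    · intro n
      filter_upwards with z
      rw [Real.norm_eq_abs, abs_mul, abs_mul]
      apply mul_le_mul_of_nonneg_right _ (abs_nonneg _)
      have c1 := hmm n (uu ρ z)
      have c2 := abs_sub_abs_le_abs_sub (M n (uu ρ z)) (max (uu ρ z) r)
      have c3 := hη1 n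
      rw [abs_of_nonneg (by positivity : 0 ≤ |max (uu ρ z) r| + 2)]
      linarith
    · filter_upwards with z
      apply Tendsto.mul_const
      rw [tendsto_iff_norm_sub_tendsto_zero]
      apply squeeze_zero (fun _ => norm_nonneg _) (fun n => hmm n (uu ρ z))
      simpa using hη0.const_mul 2
  have hl : Tendsto (fun n => (1 - η n ^ 2) * ∫ z in Br ρ r, kk z * ψ z) atTop
      (𝓝 (∫ z in Br ρ r, kk z * ψ z)) := by
    have := ((hη0.pow 2).const_sub 1).mul_const (∫ z in Br ρ r, kk z * ψ z)
    simpa using this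
  exact le_of_tendsto_of_tendsto' hl (hlim.const_mul _) hlow


structure SU (ρ : ℂ → ℝ) (ν : Measure ℂ) (μfam : ℝ → Measure ℂ) : Prop where
  H : RhoHyp ρ
  hν : IsRieszMeasure (uu ρ) (ball (0:ℂ) 1) ν
  hμ : ∀ r : ℝ, r < 0 → IsMAMeasure (uu ρ) (ball (0:ℂ) 1) ν r (μfam r)

lemma exists_bump (R : ℝ) (hR0 : 0 < R) {R' : ℝ} (hR : R < R') (hR' : R' < 1) : ∃ χ : ℂ → ℝ, IsTest χ ∧
    (∀ z, 0 ≤ χ z) ∧ (∀ z, χ z ≤ 1) ∧ (∀ z ∈ closedBall (0:ℂ) R, χ z = 1) ∧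
    (∀ z, z ∉ closedBall (0:ℂ) R' → χ z = 0) := by
  let f : ContDiffBump (0:ℂ) := ⟨R, R', hR0, hR⟩
  refine ⟨f, ⟨f.contDiff, f.hasCompactSupport, ?_⟩, fun z => f.nonneg, fun z => f.le_one, fun z hz =>
    f.one_of_mem_closedBall hz, fun z hz => ?_⟩
  · rw [f.tsupport_eq]; exact closedBall_subset_ball hR'
  · apply f.zero_of_le_dist
    rw [mem_closedBall] at hz
    show R' ≤ _
    linarith

lemma exists_Br {ρ : ℂ → ℝ} (H : RhoHyp ρ) {r : ℝ} (hr : r < 0) : ∃ z ∈ ball (0:ℂ) 1, r < uu ρ z := by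
  set s : ℝ := min 1 (-r) / 2 with hs
  have hs0 : 0 < s := by rw [hs]; have : 0 < min 1 (-r) := lt_min (by norm_num) (by linarith); linarith
  have hs1 : s ≤ 1/2 := by rw [hs]; linarith [min_le_left 1 (-r)]
  have hs2 : s < -r := by rw [hs]; have := min_le_right 1 (-r); linarith
  have hz : ((-(1 - s) : ℝ) : ℂ) ∈ ball (0:ℂ) 1 := by
    rw [ball_normSq, Complex.normSq_ofReal]; nlinarith
  refine ⟨_, hz, ?_⟩
  have h1 := uu_lower H hz
  have h2 : gg ((-(1 - s) : ℝ) : ℂ) ≤ 2 * s := by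
    unfold gg
    rw [Complex.normSq_ofReal, Complex.ofReal_re]
    have h3 : (1 - -(1 - s)) ^ (-(1/4) : ℝ) ≤ 1 :=
      Real.rpow_le_one_of_one_le_of_nonpos (by linarith) (by norm_num)
    have h4 : (0:ℝ) ≤ 1 - -(1 - s) * -(1 - s) := by nlinarith
    calc _ ≤ (1 - -(1 - s) * -(1 - s)) * 1 := mul_le_mul_of_nonneg_left h3 h4
      _ ≤ 2 * s := by nlinarith
  linarith

lemma Ar_cpt {ρ : ℂ → ℝ} (H : RhoHyp ρ) {r : ℝ} (hr : r < 0) :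
    ∃ R : ℝ, 0 < R ∧ R < 1 ∧ Ar ρ r ⊆ ball (0:ℂ) R := by
  have hc : IsClosed (closedBall (0:ℂ) 1 ∩ uu ρ ⁻¹' Iic r) :=
    (uu_cont H).preimage_isClosed_of_isClosed isClosed_closedBall isClosed_Iic
  have hsub : closedBall (0:ℂ) 1 ∩ uu ρ ⁻¹' Iic r ⊆ ball (0:ℂ) 1 := by
    rintro z ⟨h1, h2⟩
    by_contra h3
    have : z ∈ sphere (0:ℂ) 1 := by
      simp at h1 h3 ⊢; linarith
    have h4 := uu_sphere H this
    have : uu ρ z ≤ r := h2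
    linarith
  obtain ⟨R, hR, hs⟩ := exists_lt_subset_ball hc hsub
  refine ⟨max R (1/2), by positivity, max_lt hR (by norm_num), fun z hz => ?_⟩
  exact ball_subset_ball (le_max_left _ _) (hs ⟨ball_subset_closedBall hz.1, hz.2.le⟩)

section
variable {ρ : ℂ → ℝ} {ν : Measure ℂ} {μfam : ℝ → Measure ℂ}

lemma nur (S : SU ρ ν μfam) {r : ℝ} (hr : r < 0) : ∃ νr : Measure ℂ,
    IsRieszMeasure (fun z => max (uu ρ z) r) (ball (0:ℂ) 1) νr ∧
    (∀ R : ℝ, 0 < R → R < 1 → νr (ball (0:ℂ) R) < ⊤) ∧ νr = μfam r + kv.restrict (Br ρ r) := by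
  obtain ⟨νr, h1, h2⟩ := S.hμ r hr
  have H := S.H
  rw [nu_eq H S.hν] at h2
  have h2' : μfam r = νr - kv.restrict (Br ρ r) := h2
  have hle : ∀ ψ, IsTest ψ → (∀ z, 0 ≤ ψ z) → ∫ z in Br ρ r, ψ z ∂kv ≤ ∫ z, ψ z ∂νr := by
    intro ψ h h0
    rw [h1.2 ψ h.cd h.cs h.ts]
    exact test_max H r h h0
  have hfin : ∀ R : ℝ, 0 < R → R < 1 → νr (ball (0:ℂ) R) < ⊤ := by
    intro R hR0 hR
    obtain ⟨z0, hz0, hu0⟩ := exists_Br H hr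
    have hz0' : ‖z0‖ < 1 := by simpa using hz0
    obtain ⟨R1, hR1, hR1'⟩ := exists_between (max_lt hR hz0')
    obtain ⟨R2, hR2, hR2'⟩ := exists_between hR1'
    have hRR : R < R1 := lt_of_le_of_lt (le_max_left _ _) hR1
    have hzR : ‖z0‖ < R1 := lt_of_le_of_lt (le_max_right _ _) hR1
    obtain ⟨χ, ht, hc0, hc1, hc2, -⟩ := exists_bump R1 (hR0.trans hRR) hR2 hR2'
    have hpos : 0 < ∫ z in Br ρ r, χ z ∂kv := by
      rw [integral_pos_iff_support_of_nonneg hc0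
        ((ht.integrable (fun R _ _ => measure_lt_top _ _)).integrableOn)]
      rw [Measure.restrict_apply ht.cd.continuous.isOpen_support.measurableSet]
      have hop : IsOpen (ball (0:ℂ) R1 ∩ {z | z ∈ ball (0:ℂ) 1 ∧ r < uu ρ z}) :=
        isOpen_ball.inter
          (((uu_cont H).mono ball_subset_closedBall).isOpen_inter_preimage isOpen_ball (isOpen_Ioi (a := r)))
      refine lt_of_lt_of_le (kv_pos hop (z := z0) ⟨by simpa using hzR, hz0, hu0⟩ (fun z hz => hz.2.1)) ?_
      apply measure_mono
      rintro z ⟨hz1, hz2, hz3⟩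
      refine ⟨?_, hz2, hz3.le⟩
      rw [Function.mem_support, hc2 z (ball_subset_closedBall hz1)]; norm_num
    have hne : ∫ z, χ z ∂νr ≠ 0 := (lt_of_lt_of_le hpos (hle χ ht hc0)).ne'
    have hl := ofReal_test ht hc0 hne
    calc νr (ball (0:ℂ) R) = ∫⁻ z, (ball (0:ℂ) R).indicator 1 z ∂νr := by
          rw [lintegral_indicator_one measurableSet_ball]
      _ ≤ ∫⁻ z, ENNReal.ofReal (χ z) ∂νr := by
          apply lintegral_mono
          intro z
          by_cases hz : z ∈ ball (0:ℂ) R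
          · simp only [indicator_of_mem hz]
            rw [hc2 z (ball_subset_closedBall (ball_subset_ball hRR.le hz))]; simp
          · simp [indicator_of_notMem hz]
      _ < ⊤ := by rw [hl]; exact ENNReal.ofReal_lt_top
  have hmle : kv.restrict (Br ρ r) ≤ νr := by
    apply measure_le_of_test _ hfin
    · intro ψ h h0
      rw [← ofReal_integral_eq_lintegral_ofReal
        ((h.integrable (fun R _ _ => measure_lt_top _ _)).integrableOn) (Eventually.of_forall h0),
        ← ofReal_integral_eq_lintegral_ofReal (h.integrable hfin) (Eventually.of_forall h0)]
      exact ENNReal.ofReal_le_ofReal (hle ψ h h0)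
    · exact le_antisymm ((Measure.restrict_le_self _).trans kv_compl.le) zero_le
  refine ⟨νr, h1, hfin, ?_⟩
  rw [h2', Measure.sub_add_cancel_of_le hmle]

lemma mu_loc (S : SU ρ ν μfam) {r : ℝ} (hr : r < 0) (R : ℝ) (h0 : 0 < R) (hR : R < 1) :
    μfam r (ball (0:ℂ) R) < ⊤ := by
  obtain ⟨νr, h1, h2, h3⟩ := nur S hr
  refine lt_of_le_of_lt ?_ (h2 R h0 hR)
  rw [h3]; simp

lemma mu_compl (S : SU ρ ν μfam) {r : ℝ} (hr : r < 0) : μfam r (ball (0:ℂ) 1)ᶜ = 0 := by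
  obtain ⟨νr, h1, h2, h3⟩ := nur S hr
  have := h1.1
  rw [h3, Measure.add_apply, add_eq_zero] at this
  exact this.1

lemma LJ_test (S : SU ρ ν μfam) {r : ℝ} (hr : r < 0) {ψ : ℂ → ℝ} (h : IsTest ψ) :
    ∫ z, ψ z ∂(μfam r) = ∫ z in Ar ρ r, (kk z * ψ z + (r - uu ρ z) * lap ψ z / 4) := by
  have H := S.H
  obtain ⟨νr, h1, h2, h3⟩ := nur S hr
  have huc : ContinuousOn (uu ρ) (ball (0:ℂ) 1) := (uu_cont H).mono ball_subset_closedBall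
  have ikv : Integrable ψ kv := h.integrable (fun R _ _ => measure_lt_top _ _)
  have e1 : ∫ z, ψ z ∂νr = ∫ z, ψ z ∂(μfam r) + ∫ z in Br ρ r, ψ z ∂kv := by
    rw [h3, integral_add_measure (h.integrable (mu_loc S hr)) ikv.integrableOn]
  have e2 := h1.2 ψ h.cd h.cs h.ts
  have e3 := test_kv H h
  have e4 : ∫ z, ψ z ∂kv = ∫ z in Ar ρ r, ψ z ∂kv + ∫ z in Br ρ r, ψ z ∂kv := by
    have : ∫ z in ball (0:ℂ) 1, ψ z ∂kv = ∫ z, ψ z ∂kv :=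
      setIntegral_eq_integral_of_forall_compl_eq_zero (fun z hz => h.zero hz)
    rw [← this, Br_eq, ← setIntegral_union disjoint_sdiff_right
      (measurableSet_ball.diff (Ar_open H r).measurableSet) ikv.integrableOn ikv.integrableOn,
      union_sdiff_cancel (Ar_sub r)]
  have im : IntegrableOn (fun z => max (uu ρ z) r * lap ψ z) (ball (0:ℂ) 1) :=
    h.int_lap (ContinuousOn.sup huc (continuousOn_const (c := r)))
  have iu : IntegrableOn (fun z => uu ρ z * lap ψ z) (ball (0:ℂ) 1) := h.int_lap huc
  have e5 : (∫ z in ball (0:ℂ) 1, max (uu ρ z) r * lap ψ z) - ∫ z in ball (0:ℂ) 1, uu ρ z * lap ψ z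
      = ∫ z in Ar ρ r, (r - uu ρ z) * lap ψ z := by
    rw [← integral_sub im iu]
    rw [setIntegral_eq_of_subset_of_forall_sdiff_eq_zero measurableSet_ball (Ar_sub r)]
    · apply setIntegral_congr_fun (Ar_open H r).measurableSet
      intro z hz
      simp only [max_eq_right hz.2.le]; ring
    · intro z hz
      rw [← Br_eq] at hz
      rw [max_eq_left hz.2]; ring
  have i1 : IntegrableOn (fun z => kk z * ψ z) (Ar ρ r) :=
    (int_cpt (w := kk) (fun z hz => (contDiffAt_const.mul (cda_T (ball_re hz) _)).continuousAt.continuousWithinAt) h.cd.continuous h.cs h.ts).integrableOn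
  have i2 : IntegrableOn (fun z => (r - uu ρ z) * lap ψ z / 4) (Ar ρ r) :=
    ((h.int_lap (continuousOn_const.sub huc)).mono_set (Ar_sub r)).div_const 4
  rw [integral_add i1 i2, integral_div, ← e5, ← int_kv ψ (Ar_open H r).measurableSet (Ar_sub r)]
  linarith

lemma lap_one_near {χ v : ℂ → ℝ} {R : ℝ} (hc : ∀ z ∈ closedBall (0:ℂ) R, χ z = 1) {z : ℂ}
    (hz : z ∈ ball (0:ℂ) R) : lap (fun x => χ x * v x) z = lap v z := by
  apply lap_congr
  filter_upwards [isOpen_ball.mem_nhds hz] with x hx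
  rw [hc x (ball_subset_closedBall hx), one_mul]

lemma lap_one {χ : ℂ → ℝ} {R : ℝ} (hc : ∀ z ∈ closedBall (0:ℂ) R, χ z = 1) {z : ℂ}
    (hz : z ∈ ball (0:ℂ) R) : lap χ z = 0 := by
  have := lap_one_near (v := fun _ => 1) hc hz
  simp only [mul_one] at this
  rw [this, lap_eq_ddir, ddir_const, ddir_const]; simp

lemma int_bump (S : SU ρ ν μfam) {r : ℝ} (hr : r < 0) {R : ℝ} (hA : Ar ρ r ⊆ ball (0:ℂ) R)
    {χ : ℂ → ℝ} (ht : IsTest χ) (h0 : ∀ z, 0 ≤ χ z) (hc : ∀ z ∈ closedBall (0:ℂ) R, χ z = 1) :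
    ∫⁻ z, ENNReal.ofReal (χ z) ∂(μfam r) = kv (Ar ρ r) := by
  rw [← ofReal_integral_eq_lintegral_ofReal (ht.integrable (mu_loc S hr)) (Eventually.of_forall h0),
    LJ_test S hr ht]
  have : ∫ z in Ar ρ r, (kk z * χ z + (r - uu ρ z) * lap χ z / 4) = ∫ z in Ar ρ r, kk z * 1 := by
    apply setIntegral_congr_fun (Ar_open S.H r).measurableSet
    intro z hz
    simp only [lap_one hc (hA hz), hc z (ball_subset_closedBall (hA hz))]; ring
  rw [this, ← int_kv (fun _ => 1) (Ar_open S.H r).measurableSet (Ar_sub r)]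
  simp

lemma mu_struct (S : SU ρ ν μfam) {r : ℝ} (hr : r < 0) : μfam r univ = kv (Ar ρ r) ∧
    ∃ R : ℝ, 0 < R ∧ R < 1 ∧ Ar ρ r ⊆ ball (0:ℂ) R ∧ μfam r (closedBall (0:ℂ) R)ᶜ = 0 := by
  obtain ⟨R, hR0, hR1, hA⟩ := Ar_cpt S.H hr
  have hle : ∀ R' : ℝ, R' < 1 → μfam r (ball (0:ℂ) R') ≤ kv (Ar ρ r) := by
    intro R' hR'
    obtain ⟨R1, h1, h1'⟩ := exists_between (max_lt hR' hR1)
    obtain ⟨R2, h2, h2'⟩ := exists_between h1'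
    have a1 : R < R1 := lt_of_le_of_lt (le_max_right _ _) h1
    have a2 : R' < R1 := lt_of_le_of_lt (le_max_left _ _) h1
    obtain ⟨χ, ht, hc0, hc1, hc2, -⟩ := exists_bump R1 (hR0.trans a1) h2 h2'
    rw [← int_bump S hr (hA.trans (ball_subset_ball a1.le)) ht hc0 hc2]
    rw [← lintegral_indicator_one measurableSet_ball]
    apply lintegral_mono
    intro z
    by_cases hz : z ∈ ball (0:ℂ) R'
    · simp only [indicator_of_mem hz]
      rw [hc2 z (ball_subset_closedBall (ball_subset_ball a2.le hz))]; simp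
    · simp [indicator_of_notMem hz]
  have hU : ball (0:ℂ) 1 = ⋃ n : ℕ, ball (0:ℂ) (1 - 1 / ((n:ℝ) + 1)) := by
    ext z
    simp only [mem_iUnion, mem_ball_zero_iff]
    constructor
    · intro h
      obtain ⟨n, hn⟩ := exists_nat_one_div_lt (sub_pos.2 h)
      exact ⟨n, by linarith⟩
    · rintro ⟨n, hn⟩
      have : 0 < 1 / ((n:ℝ) + 1) := by positivity
      linarith
  have huniv : μfam r univ = μfam r (ball (0:ℂ) 1) := by
    rw [← measure_add_measure_compl (s := ball (0:ℂ) 1) measurableSet_ball, mu_compl S hr, add_zero]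
  have hD : μfam r univ ≤ kv (Ar ρ r) := by
    rw [huniv, hU, Monotone.measure_iUnion]
    · exact iSup_le fun n => hle _ (by have : 0 < 1 / ((n:ℝ) + 1) := by positivity
                                       linarith)
    · intro n k hnk
      apply ball_subset_ball
      have : (n:ℝ) ≤ k := by exact_mod_cast hnk
      gcongr
  obtain ⟨R1, h1, h1'⟩ := exists_between hR1
  obtain ⟨χ, ht, hc0, hc1, hc2, hc3⟩ := exists_bump R hR0 h1 h1'
  have hge : kv (Ar ρ r) ≤ μfam r (closedBall (0:ℂ) R1) := by
    rw [← int_bump S hr hA ht hc0 hc2, ← lintegral_indicator_one measurableSet_closedBall]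
    apply lintegral_mono
    intro z
    by_cases hz : z ∈ closedBall (0:ℂ) R1
    · simp only [indicator_of_mem hz]
      exact ENNReal.ofReal_le_one.2 (hc1 z)
    · simp [indicator_of_notMem hz, hc3 z hz]
  refine ⟨le_antisymm hD (hge.trans (measure_mono (subset_univ _))), R1, hR0.trans h1, h1',
    hA.trans (ball_subset_ball h1.le), ?_⟩
  have hfin : μfam r (closedBall (0:ℂ) R1) ≠ ⊤ :=
    ne_top_of_le_ne_top (measure_ne_top kv (Ar ρ r)) ((measure_mono (subset_univ _)).trans hD)
  rw [measure_compl measurableSet_closedBall hfin]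
  exact tsub_eq_zero_of_le (hD.trans hge)

lemma mu_fin (S : SU ρ ν μfam) {r : ℝ} (hr : r < 0) : IsFiniteMeasure (μfam r) :=
  ⟨by rw [(mu_struct S hr).1]; exact measure_lt_top _ _⟩

lemma test_mul {χ v : ℂ → ℝ} (ht : IsTest χ) (hv : ContDiffOn ℝ 2 v (ball (0:ℂ) 1)) :
    IsTest (fun z => χ z * v z) := by
  have hts : tsupport (fun z => χ z * v z) ⊆ tsupport χ := tsupport_mul_subset_left
  refine ⟨?_, ht.cs.mul_right, hts.trans ht.ts⟩
  rw [contDiff_iff_contDiffAt]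
  intro z
  by_cases hz : z ∈ tsupport (fun z => χ z * v z)
  swap
  · exact contDiffAt_const.congr_of_eventuallyEq (notMem_tsupport_iff_eventuallyEq.1 hz)
  exact ht.cd.contDiffAt.mul (hv.contDiffAt (isOpen_ball.mem_nhds (ht.ts (hts hz))))

/-- integrand of the Lelong-Jensen formula -/
def JJ (ρ : ℂ → ℝ) (r : ℝ) (v : ℂ → ℝ) (z : ℂ) : ℝ := kk z * v z + (r - uu ρ z) * lap v z / 4

lemma JJ_int (H : RhoHyp ρ) {r : ℝ} (hr : r < 0) {v : ℂ → ℝ}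
    (hv : ContDiffOn ℝ 2 v (ball (0:ℂ) 1)) : IntegrableOn (JJ ρ r v) (Ar ρ r) := by
  obtain ⟨R, hR0, hR1, hA⟩ := Ar_cpt H hr
  have huc : ContinuousOn (uu ρ) (ball (0:ℂ) 1) := (uu_cont H).mono ball_subset_closedBall
  have hkc : ContinuousOn kk (ball (0:ℂ) 1) :=
    fun z hz => (contDiffAt_const.mul (cda_T (ball_re hz) _)).continuousAt.continuousWithinAt
  have : ContinuousOn (JJ ρ r v) (ball (0:ℂ) 1) :=
    (hkc.mul hv.continuousOn).add (((continuousOn_const.sub huc).mul (lap_cont hv)).div_const 4)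
  exact ((this.mono (closedBall_subset_ball hR1)).integrableOn_compact (isCompact_closedBall 0 R)).mono_set
    (hA.trans ball_subset_closedBall)

lemma LJ (S : SU ρ ν μfam) {r : ℝ} (hr : r < 0) {v : ℂ → ℝ} (hv : ContDiffOn ℝ 2 v (ball (0:ℂ) 1)) :
    Integrable v (μfam r) ∧ ∫ z, v z ∂(μfam r) = ∫ z in Ar ρ r, JJ ρ r v z := by
  obtain ⟨-, R, hR0, hR1, hA, hn⟩ := mu_struct S hr
  obtain ⟨R1, h1, h1'⟩ := exists_between hR1
  obtain ⟨χ, ht, hc0, hc1, hc2, hc3⟩ := exists_bump R hR0 h1 h1'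
  have ht2 := test_mul ht hv
  have hae : (fun z => χ z * v z) =ᵐ[μfam r] v := by
    have : ∀ᵐ z ∂(μfam r), z ∈ closedBall (0:ℂ) R := hn
    filter_upwards [this] with z hz
    rw [hc2 z hz, one_mul]
  refine ⟨(ht2.integrable (mu_loc S hr)).congr hae, ?_⟩
  rw [← integral_congr_ae hae, LJ_test S hr ht2]
  apply setIntegral_congr_fun (Ar_open S.H r).measurableSet
  intro z hz
  simp only [JJ, lap_one_near hc2 (hA hz), hc2 z (ball_subset_closedBall (hA hz)), one_mul]

lemma LJ_nn (S : SU ρ ν μfam) {r : ℝ} (hr : r < 0) {v : ℂ → ℝ} (hv : ContDiffOn ℝ 2 v (ball (0:ℂ) 1))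
    (h0 : ∀ z ∈ ball (0:ℂ) 1, 0 ≤ v z) (hl : ∀ z ∈ ball (0:ℂ) 1, 0 ≤ lap v z) :
    ∫⁻ z, ENNReal.ofReal (v z) ∂(μfam r) = ∫⁻ z in Ar ρ r, ENNReal.ofReal (JJ ρ r v z) := by
  obtain ⟨h1, h2⟩ := LJ S hr hv
  have hae : ∀ᵐ z ∂(μfam r), z ∈ ball (0:ℂ) 1 := mu_compl S hr
  rw [← ofReal_integral_eq_lintegral_ofReal h1 (by filter_upwards [hae] with z hz using h0 z hz), h2,
    ← ofReal_integral_eq_lintegral_ofReal (JJ_int S.H hr hv)]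
  filter_upwards [ae_restrict_mem (Ar_open S.H r).measurableSet] with z hz
  have a := mul_nonneg (kk_pos hz.1).le (h0 z hz.1)
  have b := mul_nonneg (sub_nonneg.2 hz.2.le) (hl z hz.1)
  simp only [JJ, Pi.zero_apply]
  linarith

end


/-- Moebius map -/
def mob (c a z : ℂ) : ℂ := c * ((z - a) / (1 - (starRingEnd ℂ) a * z))

lemma den_lower {a z : ℂ} (hz : ‖z‖ ≤ 1) : 1 - ‖a‖ ≤ ‖1 - (starRingEnd ℂ) a * z‖ := by
  have h1 : ‖(starRingEnd ℂ) a * z‖ ≤ ‖a‖ := by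
    rw [norm_mul, RCLike.norm_conj]
    nlinarith [norm_nonneg a, norm_nonneg z]
  have h2 := norm_sub_norm_le 1 ((starRingEnd ℂ) a * z)
  rw [norm_one] at h2
  linarith

lemma den_upper {a z : ℂ} (ha : ‖a‖ < 1) (hz : ‖z‖ ≤ 1) : ‖1 - (starRingEnd ℂ) a * z‖ ≤ 2 := by
  have h1 : ‖(starRingEnd ℂ) a * z‖ ≤ ‖a‖ := by
    rw [norm_mul, RCLike.norm_conj]
    nlinarith [norm_nonneg a, norm_nonneg z]
  have h2 := norm_sub_le 1 ((starRingEnd ℂ) a * z)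
  rw [norm_one] at h2
  linarith

lemma den_ne {a z : ℂ} (ha : ‖a‖ < 1) (hz : ‖z‖ ≤ 1) : 1 - (starRingEnd ℂ) a * z ≠ 0 := by
  rw [← norm_pos_iff]
  linarith [den_lower (a := a) hz]

lemma mob_sub (c : ℂ) {a z w : ℂ} (ha : ‖a‖ < 1) (hz : ‖z‖ ≤ 1) (hw : ‖w‖ ≤ 1) :
    mob c a z - mob c a w = c * (1 - (starRingEnd ℂ) a * a) * (z - w) /
      ((1 - (starRingEnd ℂ) a * z) * (1 - (starRingEnd ℂ) a * w)) := by
  have h1 := den_ne ha hz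
  have h2 := den_ne ha hw
  have h1' : 1 - z * (starRingEnd ℂ) a ≠ 0 := by rwa [mul_comm] at h1
  have h2' : 1 - w * (starRingEnd ℂ) a ≠ 0 := by rwa [mul_comm] at h2
  unfold mob
  field_simp
  ring

lemma mob_normSq {c a z : ℂ} (hc : ‖c‖ = 1) (ha : ‖a‖ < 1) (hz : ‖z‖ ≤ 1) :
    1 - normSq (mob c a z) = (1 - normSq a) * (1 - normSq z) / normSq (1 - (starRingEnd ℂ) a * z) := by
  have h1 := den_ne ha hz
  have h2 : normSq (1 - (starRingEnd ℂ) a * z) ≠ 0 := by simpa [normSq_eq_zero] using h1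
  have hc' : normSq c = 1 := by rw [normSq_eq_norm_sq, hc]; norm_num
  unfold mob
  rw [normSq_mul, normSq_div, hc', one_mul, eq_div_iff h2, sub_mul, div_mul_cancel₀ _ h2, one_mul]
  simp only [normSq_apply, sub_re, sub_im, mul_re, mul_im, conj_re, conj_im, one_re, one_im]
  ring

lemma mob_hasDeriv (c : ℂ) {a z : ℂ} (ha : ‖a‖ < 1) (hz : ‖z‖ ≤ 1) :
    HasDerivAt (mob c a) (c * (1 - (starRingEnd ℂ) a * a) / (1 - (starRingEnd ℂ) a * z) ^ 2) z := by
  have h1 := den_ne ha hz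
  have a1 : HasDerivAt (fun z : ℂ => z - a) 1 z := (hasDerivAt_id z).sub_const a
  have a2 : HasDerivAt (fun z : ℂ => 1 - (starRingEnd ℂ) a * z) (-((starRingEnd ℂ) a)) z := by
    simpa using ((hasDerivAt_id z).const_mul ((starRingEnd ℂ) a)).const_sub 1
  have := (a1.div a2 h1).const_mul c
  refine this.congr_deriv ?_
  field_simp
  ring

lemma mob_ball {c a z : ℂ} (hc : ‖c‖ = 1) (ha : ‖a‖ < 1) (hz : z ∈ ball (0:ℂ) 1) :
    mob c a z ∈ ball (0:ℂ) 1 := by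
  have hz1 : ‖z‖ < 1 := by simpa using hz
  rw [ball_normSq]
  have h := mob_normSq hc ha hz1.le
  have h2 : 0 < normSq (1 - (starRingEnd ℂ) a * z) := normSq_pos.2 (den_ne ha hz1.le)
  have h3 : normSq a < 1 := ball_normSq.1 (by simpa using ha)
  have h4 := ball_normSq.1 hz
  have : 0 < (1 - normSq a) * (1 - normSq z) / normSq (1 - (starRingEnd ℂ) a * z) :=
    div_pos (mul_pos (by linarith) (by linarith)) h2
  linarith

lemma mob_sphere {c a z : ℂ} (hc : ‖c‖ = 1) (ha : ‖a‖ < 1) (hz : ‖z‖ = 1) : ‖mob c a z‖ = 1 := by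
  have h := mob_normSq hc ha hz.le
  have : normSq z = 1 := by rw [normSq_eq_norm_sq, hz]; norm_num
  rw [this] at h
  have h2 : normSq (mob c a z) = 1 := by simp at h; linarith
  rw [normSq_eq_norm_sq] at h2
  exact (pow_eq_one_iff_of_nonneg (norm_nonneg _) (by norm_num)).1 h2

lemma mob_cb {c a z : ℂ} (hc : ‖c‖ = 1) (ha : ‖a‖ < 1) (hz : ‖z‖ ≤ 1) : ‖mob c a z‖ ≤ 1 := by
  rcases hz.lt_or_eq with h | h
  · have := mob_ball hc ha (z := z) (by simpa using h)
    simp at this; exact this.le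
  · exact (mob_sphere hc ha h).le

lemma mob_inv {c a z : ℂ} (hc : ‖c‖ = 1) (ha : ‖a‖ < 1) (hz : ‖z‖ ≤ 1) :
    mob ((starRingEnd ℂ) c) (-(c * a)) (mob c a z) = z := by
  have h1 := den_ne ha hz
  have h2 := den_ne ha ha.le
  have h1' : 1 - z * (starRingEnd ℂ) a ≠ 0 := by rwa [mul_comm] at h1
  have h2' : 1 - a * (starRingEnd ℂ) a ≠ 0 := by rwa [mul_comm] at h2
  have hcc : (starRingEnd ℂ) c * c = 1 := by
    rw [mul_comm, mul_conj, normSq_eq_norm_sq, hc]; norm_num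
  have e1 : mob c a z - -(c * a) = c * (z * (1 - (starRingEnd ℂ) a * a)) / (1 - (starRingEnd ℂ) a * z) := by
    unfold mob; field_simp; ring
  have e2 : 1 - (starRingEnd ℂ) (-(c * a)) * mob c a z =
      (1 - (starRingEnd ℂ) a * a) / (1 - (starRingEnd ℂ) a * z) := by
    have : (starRingEnd ℂ) (-(c * a)) * mob c a z = -((starRingEnd ℂ) c * c) * ((starRingEnd ℂ) a * ((z - a) / (1 - (starRingEnd ℂ) a * z))) := by
      unfold mob; simp only [map_neg, map_mul]; ring
    rw [this, hcc]
    field_simp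
    ring
  rw [mob, e1, e2]
  have : (starRingEnd ℂ) c * (c * (z * (1 - (starRingEnd ℂ) a * a)) / (1 - (starRingEnd ℂ) a * z) / ((1 - (starRingEnd ℂ) a * a) / (1 - (starRingEnd ℂ) a * z))) = ((starRingEnd ℂ) c * c) * z := by
    field_simp
  rw [this, hcc, one_mul]

lemma mob_inv2 {c a z : ℂ} (hc : ‖c‖ = 1) (ha : ‖a‖ < 1) (hz : ‖z‖ ≤ 1) :
    mob c a (mob ((starRingEnd ℂ) c) (-(c * a)) z) = z := by
  have h := mob_inv (c := (starRingEnd ℂ) c) (a := -(c * a)) (z := z) (by simpa using hc)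
    (by rw [norm_neg, norm_mul, hc, one_mul]; exact ha) hz
  have hcc : (starRingEnd ℂ) c * c = 1 := by
    rw [mul_comm, mul_conj, normSq_eq_norm_sq, hc]; norm_num
  have : -((starRingEnd ℂ) c * -(c * a)) = a := by
    rw [mul_neg, neg_neg, ← mul_assoc, hcc, one_mul]
  rwa [this, Complex.conj_conj] at h

lemma mob_diffOn (c : ℂ) {a : ℂ} (ha : ‖a‖ < 1) : DifferentiableOn ℂ (mob c a) (ball (0:ℂ) 1) :=
  fun z hz => (mob_hasDeriv c ha (by simpa using (mem_ball_zero_iff.1 hz).le)).differentiableAt.differentiableWithinAt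

lemma mob_contOn (c : ℂ) {a : ℂ} (ha : ‖a‖ < 1) : ContinuousOn (mob c a) (closedBall (0:ℂ) 1) :=
  fun z hz => (mob_hasDeriv c ha (by simpa using hz)).continuousAt.continuousWithinAt

lemma one_sub_aa {a : ℂ} (_ha : ‖a‖ < 1) : ‖1 - (starRingEnd ℂ) a * a‖ = 1 - normSq a := by
  rw [mul_comm, mul_conj]
  have : (1:ℂ) - (normSq a : ℂ) = ((1 - normSq a : ℝ) : ℂ) := by push_cast; rfl
  rw [this, Complex.norm_real, Real.norm_eq_abs, abs_of_nonneg]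
  rw [normSq_eq_norm_sq]; nlinarith [norm_nonneg a]

lemma mob_dist {c a z w : ℂ} (hc : ‖c‖ = 1) (ha : ‖a‖ < 1) (hz : ‖z‖ ≤ 1) (hw : ‖w‖ ≤ 1) :
    ‖mob c a z - mob c a w‖ = (1 - normSq a) * ‖z - w‖ /
      (‖1 - (starRingEnd ℂ) a * z‖ * ‖1 - (starRingEnd ℂ) a * w‖) := by
  rw [mob_sub c ha hz hw, norm_div, norm_mul, norm_mul, norm_mul, hc, one_sub_aa ha, one_mul]

lemma aa_bounds {a : ℂ} (ha : ‖a‖ < 1) : 1 - ‖a‖ ≤ 1 - normSq a ∧ 1 - normSq a ≤ 1 := by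
  rw [normSq_eq_norm_sq]
  constructor <;> nlinarith [norm_nonneg a]

lemma mob_lip {c a z w : ℂ} (hc : ‖c‖ = 1) (ha : ‖a‖ < 1) (hz : ‖z‖ ≤ 1) (hw : ‖w‖ ≤ 1) :
    ‖mob c a z - mob c a w‖ ≤ (1 / (1 - ‖a‖) ^ 2) * ‖z - w‖ := by
  rw [mob_dist hc ha hz hw]
  have h1 := den_lower (a := a) hz
  have h2 := den_lower (a := a) hw
  have hd : 0 < 1 - ‖a‖ := by linarith
  obtain ⟨h3, h4⟩ := aa_bounds ha
  rw [div_mul_eq_mul_div, one_mul]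
  apply div_le_div₀ (norm_nonneg _) _ (by positivity) (by rw [sq]; gcongr)
  nlinarith [norm_nonneg (z - w)]

lemma mob_deriv_normSq {c a z : ℂ} (hc : ‖c‖ = 1) (ha : ‖a‖ < 1) (hz : ‖z‖ ≤ 1) :
    (1 - ‖a‖) ^ 2 / 16 ≤ normSq (deriv (mob c a) z) := by
  rw [(mob_hasDeriv c ha hz).deriv, normSq_eq_norm_sq, norm_div, norm_mul, hc, one_sub_aa ha, norm_pow, one_mul]
  have h1 := den_lower (a := a) hz
  have h2 := den_upper ha hz
  have hd : 0 < 1 - ‖a‖ := by linarith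
  obtain ⟨h3, h4⟩ := aa_bounds ha
  have : (1 - ‖a‖) / 4 ≤ (1 - normSq a) / ‖1 - (starRingEnd ℂ) a * z‖ ^ 2 := by
    apply div_le_div₀ (by linarith) h3 (pow_pos (by linarith) 2)
    nlinarith
  calc (1 - ‖a‖) ^ 2 / 16 = ((1 - ‖a‖) / 4) ^ 2 := by ring
    _ ≤ _ := by gcongr

lemma two_t (z : ℂ) : 2 * (1 - z.re) = normSq (1 - z) + (1 - normSq z) := by
  simp only [normSq_apply, sub_re, sub_im, one_re, one_im]; ring

lemma mob_comp {ρ : ℂ → ℝ} (H : RhoHyp ρ) {c a : ℂ} (hc : ‖c‖ = 1) (ha : ‖a‖ < 1)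
    (h1 : mob c a 1 = 1) : ∃ C : ℝ, 0 < C ∧ ∀ z ∈ ball (0:ℂ) 1,
      C * uu ρ (mob c a z) ≤ uu ρ z ∧ kk z ≤ C * (kk (mob c a z) * normSq (deriv (mob c a) z)) := by
  set d := 1 - ‖a‖ with hdd
  have hd : 0 < d := by rw [hdd]; linarith
  have hd1 : d ≤ 1 := by rw [hdd]; linarith [norm_nonneg a]
  set L : ℝ := 1 / d ^ 4 with hL
  have hLp : 0 < L := by positivity
  obtain ⟨h3, h4⟩ := aa_bounds ha
  have ht : ∀ z ∈ ball (0:ℂ) 1, 1 - (mob c a z).re ≤ L * (1 - z.re) ∧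
      d / 4 * (1 - normSq z) ≤ 1 - normSq (mob c a z) := by
    intro z hz
    have hz1 : ‖z‖ ≤ 1 := (mem_ball_zero_iff.1 hz).le
    have hn := ball_normSq.1 hz
    have b1 := den_lower (a := a) hz1
    have b2 := den_lower (a := a) (z := 1) (by simp)
    have b3 := den_upper ha hz1
    have e1 := mob_normSq hc ha hz1
    have hN : d ^ 2 ≤ normSq (1 - (starRingEnd ℂ) a * z) := by
      rw [normSq_eq_norm_sq]; gcongr
    have hN' : normSq (1 - (starRingEnd ℂ) a * z) ≤ 4 := by
      rw [normSq_eq_norm_sq]; nlinarith [norm_nonneg (1 - (starRingEnd ℂ) a * z)]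
    have hNp : 0 < normSq (1 - (starRingEnd ℂ) a * z) := lt_of_lt_of_le (by positivity) hN
    constructor
    · have e2 : normSq (1 - mob c a z) ≤ L * normSq (1 - z) := by
        have := mob_lip hc ha (z := 1) (w := z) (by simp) hz1
        rw [h1] at this
        rw [normSq_eq_norm_sq, normSq_eq_norm_sq]
        calc ‖1 - mob c a z‖ ^ 2 ≤ ((1 / (1 - ‖a‖) ^ 2) * ‖1 - z‖) ^ 2 := by gcongr
          _ = L * ‖1 - z‖ ^ 2 := by rw [hL, ← hdd]; field_simp
      have e3 : 1 - normSq (mob c a z) ≤ L * (1 - normSq z) := by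
        rw [e1, div_le_iff₀ hNp]
        have : 1 ≤ L * normSq (1 - (starRingEnd ℂ) a * z) := by
          calc 1 ≤ L * d ^ 2 := by
                rw [hL, one_div, ← div_eq_inv_mul, le_div_iff₀ (by positivity)]; nlinarith [pow_le_one₀ hd.le hd1 (n := 2), pow_pos hd 2]
            _ ≤ _ := by gcongr
        nlinarith
      have := two_t z
      have := two_t (mob c a z)
      nlinarith
    · rw [e1, le_div_iff₀ hNp]
      have : d / 4 * normSq (1 - (starRingEnd ℂ) a * z) ≤ 1 - normSq a := by nlinarith
      nlinarith
  have hT : ∀ q : ℝ, q ≤ 0 → ∀ z ∈ ball (0:ℂ) 1, L ^ q * (1 - z.re) ^ q ≤ (1 - (mob c a z).re) ^ q := by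
    intro q hq z hz
    have p1 : 0 < 1 - z.re := by linarith [ball_re hz]
    have p2 : 0 < 1 - (mob c a z).re := by linarith [ball_re (mob_ball hc ha hz)]
    rw [← Real.mul_rpow hLp.le p1.le]
    exact Real.rpow_le_rpow_of_nonpos p2 (ht z hz).1 hq
  set C1 : ℝ := d / 4 * L ^ (-(1/4) : ℝ) with hC1
  have hC1p : 0 < C1 := by positivity
  set C2 : ℝ := L ^ (-(5/4) : ℝ) * (d ^ 2 / 16) with hC2
  have hC2p : 0 < C2 := by positivity
  have hg : ∀ z ∈ ball (0:ℂ) 1, C1 * gg z ≤ gg (mob c a z) := by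
    intro z hz
    have q1 := hT (-(1/4)) (by norm_num) z hz
    have q2 := (ht z hz).2
    have p1 : 0 < 1 - z.re := by linarith [ball_re hz]
    have hn := ball_normSq.1 hz
    have hn' := ball_normSq.1 (mob_ball hc ha hz)
    unfold gg
    calc C1 * ((1 - normSq z) * (1 - z.re) ^ (-(1/4) : ℝ))
        = (d / 4 * (1 - normSq z)) * (L ^ (-(1/4) : ℝ) * (1 - z.re) ^ (-(1/4) : ℝ)) := by rw [hC1]; ring
      _ ≤ _ := mul_le_mul q2 q1 (by positivity) (by linarith)
  have hk : ∀ z ∈ ball (0:ℂ) 1, C2 * kk z ≤ kk (mob c a z) * normSq (deriv (mob c a) z) := by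
    intro z hz
    have q1 := hT (-(5/4)) (by norm_num) z hz
    have q2 := mob_deriv_normSq hc ha (z := z) (mem_ball_zero_iff.1 hz).le
    have p2 : 0 < 1 - (mob c a z).re := by linarith [ball_re (mob_ball hc ha hz)]
    unfold kk
    calc C2 * (3 / 64 * (1 - z.re) ^ (-(5/4) : ℝ)) =
        (3 / 64 * (L ^ (-(5/4) : ℝ) * (1 - z.re) ^ (-(5/4) : ℝ))) * (d ^ 2 / 16) := by rw [hC2]; ring
      _ ≤ _ := by gcongr
  refine ⟨max (56 / 3 / C1) (1 / C2), by positivity, fun z hz => ⟨?_, ?_⟩⟩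
  · have l1 := uu_lower H hz
    have l2 := uu_upper H (mob_ball hc ha hz)
    have l3 := hg z hz
    have l4 := uu_neg H (mob_ball hc ha hz)
    have l5 : max (56 / 3 / C1) (1 / C2) * uu ρ (mob c a z) ≤ (56 / 3 / C1) * uu ρ (mob c a z) :=
      mul_le_mul_of_nonpos_right (le_max_left _ _) l4.le
    have l6 : (56 / 3 / C1) * uu ρ (mob c a z) ≤ (56 / 3 / C1) * (-(3/112) * (C1 * gg z)) := by
      apply mul_le_mul_of_nonneg_left _ (by positivity)
      linarith
    have l7 : (56 / 3 / C1) * (-(3/112) * (C1 * gg z)) = -(1/2) * gg z := by field_simp; ring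
    linarith
  · have l1 := hk z hz
    have l2 := kk_pos hz
    have l3 : (1 / C2) * (C2 * kk z) = kk z := by field_simp
    calc kk z = (1 / C2) * (C2 * kk z) := l3.symm
      _ ≤ max (56 / 3 / C1) (1 / C2) * (kk (mob c a z) * normSq (deriv (mob c a) z)) :=
        mul_le_mul (le_max_right _ _) l1 (by positivity) (by positivity)

lemma det_hol (w : ℂ) : ((ContinuousLinearMap.toSpanSingleton ℂ w : ℂ →L[ℂ] ℂ).restrictScalars ℝ).det = normSq w := by
  rw [← Algebra.norm_complex_apply, Algebra.norm_apply]
  unfold ContinuousLinearMap.det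
  congr 1
  ext
  all_goals simp [mul_comm]

lemma mob_injOn {c a : ℂ} (hc : ‖c‖ = 1) (ha : ‖a‖ < 1) : InjOn (mob c a) (closedBall (0:ℂ) 1) := by
  intro z hz w hw h
  rw [← mob_inv hc ha (z := z) (by simpa using hz), h, mob_inv hc ha (by simpa using hw)]

lemma key {ρ : ℂ → ℝ} (H : RhoHyp ρ) {c a : ℂ} (hc : ‖c‖ = 1) (ha : ‖a‖ < 1) (h1 : mob c a 1 = 1) :
    ∃ C : ℝ, 0 < C ∧ ∀ (ν : Measure ℂ) (μfam : ℝ → Measure ℂ), SU ρ ν μfam → ∀ r : ℝ, r < 0 →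
      ∀ V : ℂ → ℝ, ContDiffOn ℝ 2 V (ball (0:ℂ) 1) → (∀ z ∈ ball (0:ℂ) 1, 0 ≤ V z) →
      (∀ z ∈ ball (0:ℂ) 1, 0 ≤ lap V z) →
      (∀ z ∈ ball (0:ℂ) 1, lap (fun x => V (mob c a x)) z = normSq (deriv (mob c a) z) * lap V (mob c a z)) →
      ∫⁻ z, ENNReal.ofReal (V (mob c a z)) ∂(μfam r) ≤
        ENNReal.ofReal C * ∫⁻ z, ENNReal.ofReal (V z) ∂(μfam (r / C)) := by
  obtain ⟨C, hC, hcomp⟩ := mob_comp H hc ha h1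
  refine ⟨C, hC, fun ν μfam S r hr V hV hV0 hVl hVc => ?_⟩
  have hr' : r / C < 0 := div_neg_of_neg_of_pos hr hC
  have hmc : ContDiffOn ℝ 2 (fun x => V (mob c a x)) (ball (0:ℂ) 1) := fun z hz =>
    ((hV.contDiffAt (isOpen_ball.mem_nhds (mob_ball hc ha hz))).comp z
      (hol_cda isOpen_ball (mob_diffOn c ha) hz)).contDiffWithinAt
  rw [LJ_nn S hr hmc (fun z hz => hV0 _ (mob_ball hc ha hz)) (fun z hz => by
    rw [hVc z hz]; exact mul_nonneg (normSq_nonneg _) (hVl _ (mob_ball hc ha hz))),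
    LJ_nn S hr' hV hV0 hVl]
  have hmaps : mob c a '' Ar ρ r ⊆ Ar ρ (r / C) := by
    rintro _ ⟨z, hz, rfl⟩
    refine ⟨mob_ball hc ha hz.1, ?_⟩
    rw [lt_div_iff₀ hC]
    have := (hcomp z hz.1).1
    have := hz.2
    linarith
  calc ∫⁻ z in Ar ρ r, ENNReal.ofReal (JJ ρ r (fun x => V (mob c a x)) z)
      ≤ ∫⁻ z in Ar ρ r, ENNReal.ofReal C * (ENNReal.ofReal |((ContinuousLinearMap.toSpanSingleton ℂ (deriv (mob c a) z) : ℂ →L[ℂ] ℂ).restrictScalars ℝ).det| *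
          ENNReal.ofReal (JJ ρ (r / C) V (mob c a z))) := by
        apply setLIntegral_mono' (Ar_open H r).measurableSet
        intro z hz
        rw [det_hol, abs_of_nonneg (normSq_nonneg _), ← ENNReal.ofReal_mul (normSq_nonneg _),
          ← ENNReal.ofReal_mul hC.le]
        apply ENNReal.ofReal_le_ofReal
        unfold JJ
        rw [hVc z hz.1]
        obtain ⟨q1, q2⟩ := hcomp z hz.1
        have q3 := mul_le_mul_of_nonneg_right q2 (hV0 _ (mob_ball hc ha hz.1))
        have q4 := mul_nonneg (normSq_nonneg (deriv (mob c a) z)) (hVl _ (mob_ball hc ha hz.1))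
        have q5 : (r - uu ρ z) ≤ C * (r / C - uu ρ (mob c a z)) := by
          rw [mul_sub, mul_div_cancel₀ _ hC.ne']; linarith
        have q6 := mul_le_mul_of_nonneg_right q5 q4
        nlinarith
    _ = ENNReal.ofReal C * ∫⁻ z in mob c a '' Ar ρ r, ENNReal.ofReal (JJ ρ (r / C) V z) := by
        rw [lintegral_const_mul' _ _ ENNReal.ofReal_ne_top]
        congr 1
        symm
        apply lintegral_image_eq_lintegral_abs_det_fderiv_mul volume (Ar_open H r).measurableSet
          (f' := fun z => (ContinuousLinearMap.toSpanSingleton ℂ (deriv (mob c a) z) : ℂ →L[ℂ] ℂ).restrictScalars ℝ)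
        · intro z hz
          exact (hol_hasFDerivAt (mob_hasDeriv c ha (mem_ball_zero_iff.1 hz.1).le).differentiableAt).hasFDerivWithinAt
        · exact (mob_injOn hc ha).mono ((Ar_sub r).trans ball_subset_closedBall)
    _ ≤ _ := by
        gcongr


section
variable {ρ : ℂ → ℝ} {ν : Measure ℂ} {μfam : ℝ → Measure ℂ}

lemma regP_zero (f : ℂ → ℂ) (p : ℝ) (z : ℂ) : regP 0 (p / 2) f z = ‖f z‖ ^ p := by
  unfold regP
  rw [add_zero, normSq_eq_norm_sq, ← Real.rpow_natCast, ← Real.rpow_mul (norm_nonneg _)]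
  congr 1; push_cast; ring

lemma key_pow (H : RhoHyp ρ) {c a : ℂ} (hc : ‖c‖ = 1) (ha : ‖a‖ < 1) (h1 : mob c a 1 = 1) {p : ℝ} (hp : 1 ≤ p) :
    ∃ C : ℝ, 0 < C ∧ ∀ (ν : Measure ℂ) (μfam : ℝ → Measure ℂ), SU ρ ν μfam → ∀ r : ℝ, r < 0 →
      ∀ f : ℂ → ℂ, DifferentiableOn ℂ f (ball (0:ℂ) 1) →
      ∫⁻ z, ENNReal.ofReal (‖f (mob c a z)‖ ^ p) ∂(μfam r) ≤
        ENNReal.ofReal C * ∫⁻ z, ENNReal.ofReal (‖f z‖ ^ p) ∂(μfam (r / C)) := by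
  obtain ⟨C, hC, hk⟩ := key H hc ha h1
  refine ⟨C, hC, fun ν μfam S r hr f hf => ?_⟩
  have hr' : r / C < 0 := div_neg_of_neg_of_pos hr hC
  have hm := mob_diffOn c ha
  have hcomp : DifferentiableOn ℂ (fun x => f (mob c a x)) (ball (0:ℂ) 1) :=
    hf.comp hm (fun z hz => mob_ball hc ha hz)
  have hpos : ∀ ε : ℝ, 0 < ε → ∀ w : ℂ, 0 < normSq w + ε := fun ε hε w =>
    add_pos_of_nonneg_of_pos (normSq_nonneg _) hε
  have hcd : ∀ ε : ℝ, 0 < ε → ContDiffOn ℝ 2 (regP ε (p / 2) f) (ball (0:ℂ) 1) := fun ε hε z hz =>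
    (cda_regP (hol_cda isOpen_ball hf hz) ε _ (hpos ε hε _)).contDiffWithinAt
  have hq : 0 < p / 2 := by linarith
  have hmono : ∀ ε ε' : ℝ, 0 ≤ ε → ε ≤ ε' → ∀ (g : ℂ → ℂ) z, regP ε (p / 2) g z ≤ regP ε' (p / 2) g z := by
    intro ε ε' h0 h g z
    exact Real.rpow_le_rpow (add_nonneg (normSq_nonneg _) h0) (by linarith) hq.le
  have hstep : ∀ ε : ℝ, 0 < ε → ∫⁻ z, ENNReal.ofReal (‖f (mob c a z)‖ ^ p) ∂(μfam r) ≤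
      ENNReal.ofReal C * ∫⁻ z, ENNReal.ofReal (regP ε (p / 2) f z) ∂(μfam (r / C)) := by
    intro ε hε
    have := hk ν μfam S r hr (regP ε (p / 2) f) (hcd ε hε)
      (fun z _ => Real.rpow_nonneg (hpos ε hε _).le _)
      (fun z hz => by
        rw [lap_regP isOpen_ball hf hz ε _ (hpos ε hε _)]
        have := Real.rpow_nonneg (hpos ε hε (f z)).le (p / 2 - 2)
        have := normSq_nonneg (f z)
        have := normSq_nonneg (deriv f z)
        positivity)
      (fun z hz => by
        have e1 := lap_regP isOpen_ball hcomp hz ε (p / 2) (hpos ε hε _)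
        have e2 : deriv (fun x => f (mob c a x)) z = deriv f (mob c a z) * deriv (mob c a) z :=
          ((hf.differentiableAt (isOpen_ball.mem_nhds (mob_ball hc ha hz))).hasDerivAt.comp z
            (hm.differentiableAt (isOpen_ball.mem_nhds hz)).hasDerivAt).deriv
        rw [lap_regP isOpen_ball hf (mob_ball hc ha hz) ε (p / 2) (hpos ε hε _)]
        show lap (regP ε (p / 2) (fun x => f (mob c a x))) z = _
        rw [e1, e2, normSq_mul]; ring)
    refine le_trans (lintegral_mono fun z => ENNReal.ofReal_le_ofReal ?_) this
    rw [← regP_zero (fun x => f (mob c a x))]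
    exact hmono 0 ε le_rfl hε.le (fun x => f (mob c a x)) z
  have hlim : Tendsto (fun n : ℕ => ∫⁻ z, ENNReal.ofReal (regP (1 / ((n:ℝ) + 1)) (p / 2) f z) ∂(μfam (r / C)))
      atTop (𝓝 (∫⁻ z, ENNReal.ofReal (‖f z‖ ^ p) ∂(μfam (r / C)))) := by
    have hn : ∀ n : ℕ, 0 < 1 / ((n:ℝ) + 1) := fun n => by positivity
    apply tendsto_lintegral_of_dominated_convergence' (fun z => ENNReal.ofReal (regP 1 (p / 2) f z))
    · intro n
      exact (LJ S hr' (hcd _ (hn n))).1.aestronglyMeasurable.aemeasurable.ennreal_ofReal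
    · intro n
      filter_upwards with z
      apply ENNReal.ofReal_le_ofReal
      apply hmono _ _ (hn n).le
      rw [div_le_one (by positivity)]
      linarith [Nat.cast_nonneg (α := ℝ) n]
    · exact (LJ S hr' (hcd 1 one_pos)).1.lintegral_lt_top.ne
    · filter_upwards with z
      apply ENNReal.tendsto_ofReal
      rw [← regP_zero]
      unfold regP
      have h0 : Tendsto (fun n : ℕ => normSq (f z) + 1 / ((n:ℝ) + 1)) atTop (𝓝 (normSq (f z) + 0)) :=
        tendsto_const_nhds.add tendsto_one_div_add_atTop_nhds_zero_nat
      exact h0.rpow_const (Or.inr hq.le)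
  exact ge_of_tendsto' (ENNReal.Tendsto.const_mul hlim (Or.inr ENNReal.ofReal_ne_top))
    (fun n => hstep _ (by positivity))

lemma iii_i (S : SU ρ ν μfam) {c a : ℂ} (hc : ‖c‖ = 1) (ha : ‖a‖ < 1) (h1 : mob c a 1 = 1) {p : ℝ} (hp : 1 ≤ p) :
    BoundedCompOp p μfam (mob c a) := by
  obtain ⟨C, hC, hk⟩ := key_pow S.H hc ha h1 hp
  have hpow : ∀ f : ℂ → ℂ, DifferentiableOn ℂ f (ball (0:ℂ) 1) →
      psNormPow p μfam (f ∘ mob c a) ≤ ENNReal.ofReal C * psNormPow p μfam f := by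
    intro f hf
    unfold psNormPow
    have ht : Tendsto (fun r : ℝ => r / C) (𝓝[<] 0) (𝓝[<] 0) := by
      apply tendsto_nhdsWithin_of_tendsto_nhds_of_eventually_within
      · have : Tendsto (fun r : ℝ => r / C) (𝓝 0) (𝓝 (0 / C)) := tendsto_id.div_const C
        rw [zero_div] at this
        exact this.mono_left nhdsWithin_le_nhds
      · filter_upwards [self_mem_nhdsWithin] with r hr
        exact div_neg_of_neg_of_pos hr hC
    calc limsup (fun r => ∫⁻ z, ENNReal.ofReal (‖(f ∘ mob c a) z‖ ^ p) ∂(μfam r)) (𝓝[<] 0)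
        ≤ limsup (fun r => ENNReal.ofReal C * ∫⁻ z, ENNReal.ofReal (‖f z‖ ^ p) ∂(μfam (r / C))) (𝓝[<] 0) := by
          refine limsup_le_limsup ?_
          filter_upwards [self_mem_nhdsWithin] with r hr
          exact hk ν μfam S r hr f hf
      _ = ENNReal.ofReal C * limsup (fun r => ∫⁻ z, ENNReal.ofReal (‖f z‖ ^ p) ∂(μfam (r / C))) (𝓝[<] 0) :=
          ENNReal.limsup_const_mul_of_ne_top ENNReal.ofReal_ne_top
      _ ≤ _ := by
          gcongr
          exact limsup_le_limsup_of_le (f := map (fun r : ℝ => r / C) (𝓝[<] 0)) (u := fun r => ∫⁻ z, ENNReal.ofReal (‖f z‖ ^ p) ∂(μfam r)) ht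
  have hp0 : 0 ≤ 1 / p := by positivity
  refine ⟨C ^ (1 / p), by positivity, fun f hf => ⟨⟨?_, ?_⟩, ?_⟩⟩
  · exact hf.1.comp (mob_diffOn c ha) (fun z hz => mob_ball hc ha hz)
  · exact lt_of_le_of_lt (hpow f hf.1) (ENNReal.mul_lt_top ENNReal.ofReal_lt_top hf.2)
  · unfold psNorm
    rw [← ENNReal.ofReal_rpow_of_pos hC, ← ENNReal.mul_rpow_of_nonneg _ _ hp0]
    exact ENNReal.rpow_le_rpow (hpow f hf.1) hp0

def hb (b : ℂ) (δ : ℝ) (z : ℂ) : ℂ := 1 + δ - (starRingEnd ℂ) b * z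
def GG (b : ℂ) (δ : ℝ) (z : ℂ) : ℝ := regP 0 (-(3/8)) (hb b δ) z

lemma hb_re {b z : ℂ} (hb1 : ‖b‖ = 1) (hz : ‖z‖ ≤ 1) {δ : ℝ} : δ ≤ (hb b δ z).re := by
  have h1 : ((starRingEnd ℂ) b * z).re ≤ 1 := by
    refine (re_le_norm _).trans ?_
    rw [norm_mul, RCLike.norm_conj, hb1, one_mul]; exact hz
  simp only [hb, sub_re, add_re, one_re, ofReal_re]
  linarith

lemma norm_b_sub {b z : ℂ} (hb1 : ‖b‖ = 1) : ‖1 - (starRingEnd ℂ) b * z‖ = ‖z - b‖ := by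
  have : 1 - (starRingEnd ℂ) b * z = (starRingEnd ℂ) b * (b - z) := by
    rw [mul_sub, mul_comm _ b, mul_conj, normSq_eq_norm_sq, hb1]; norm_num
  rw [this, norm_mul, RCLike.norm_conj, hb1, one_mul, norm_sub_rev]

lemma hb_ns {b z : ℂ} (hb1 : ‖b‖ = 1) (hz : ‖z‖ ≤ 1) {δ : ℝ} (hδ : 0 < δ) :
    0 < normSq (hb b δ z) ∧ ‖z - b‖ ^ 2 ≤ normSq (hb b δ z) := by
  have h := hb_re hb1 hz (δ := δ)
  have h0 := hb_re hb1 hz (δ := 0)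
  constructor
  · apply normSq_pos.2
    intro h1
    rw [h1] at h; simp at h; linarith
  · rw [← norm_b_sub hb1, ← normSq_eq_norm_sq]
    simp only [hb, normSq_apply, sub_re, add_re, one_re, ofReal_re, sub_im, add_im, one_im, ofReal_im] at h0 ⊢
    nlinarith

lemma hb_diff (b : ℂ) (δ : ℝ) : Differentiable ℂ (hb b δ) := by unfold hb; fun_prop

lemma hb_deriv (b : ℂ) (δ : ℝ) (z : ℂ) : deriv (hb b δ) z = -(starRingEnd ℂ) b := by
  have : HasDerivAt (hb b δ) (-((starRingEnd ℂ) b)) z := by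
    have := ((hasDerivAt_id z).const_mul ((starRingEnd ℂ) b)).const_sub (1 + (δ:ℂ))
    exact this.congr_deriv (by simp)
  exact this.deriv

lemma GG_lap {b z : ℂ} (hb1 : ‖b‖ = 1) (hz : z ∈ ball (0:ℂ) 1) {δ : ℝ} (hδ : 0 < δ) :
    lap (GG b δ) z = 9 / 16 * normSq (hb b δ z) ^ (-(11/8) : ℝ) := by
  have hp := (hb_ns hb1 (mem_ball_zero_iff.1 hz).le hδ).1
  have := lap_regP isOpen_ball (hb_diff b δ).differentiableOn hz 0 (-(3/8)) (by rw [add_zero]; exact hp)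
  have e : lap (GG b δ) z = lap (regP 0 (-(3/8)) (hb b δ)) z := rfl
  rw [e, this, hb_deriv, add_zero, normSq_neg, normSq_conj, normSq_eq_norm_sq b, hb1]
  rw [show (-(11/8) : ℝ) = (-(3/8) - 2) + 1 by norm_num, Real.rpow_add_one hp.ne']
  ring

lemma GG_cd {b : ℂ} (hb1 : ‖b‖ = 1) {δ : ℝ} (hδ : 0 < δ) : ContDiffOn ℝ 2 (GG b δ) (ball (0:ℂ) 1) :=
  fun z hz => (cda_regP (hol_cda isOpen_ball (hb_diff b δ).differentiableOn hz) 0 _ (by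
    rw [add_zero]; exact (hb_ns hb1 (mem_ball_zero_iff.1 hz).le hδ).1)).contDiffWithinAt

lemma GG_nn (b : ℂ) (δ : ℝ) (z : ℂ) : 0 ≤ GG b δ z := by
  unfold GG regP; rw [add_zero]; exact Real.rpow_nonneg (normSq_nonneg _) _

lemma JJ_bound (H : RhoHyp ρ) {b : ℂ} (hb1 : ‖b‖ = 1) (hb2 : b ≠ 1) : ∃ K : ℝ, 0 < K ∧
    ∀ δ : ℝ, 0 < δ → ∀ r : ℝ, r < 0 → ∀ z ∈ ball (0:ℂ) 1,
      JJ ρ r (GG b δ) z ≤ K * ((1 - z.re) ^ (-(5/4) : ℝ) + ‖z - b‖ ^ (-(7/4) : ℝ)) := by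
  set d := ‖1 - b‖ with hd
  have hdp : 0 < d := norm_pos_iff.2 (sub_ne_zero.2 hb2.symm)
  set x0 := d / 2 with hx0
  set t0 := d ^ 2 / 8 with ht0
  have hx0p : 0 < x0 := by positivity
  have ht0p : 0 < t0 := by positivity
  refine ⟨x0 ^ (-(3/4) : ℝ) + 2 * x0 ^ (-(7/4) : ℝ) + 2 * t0 ^ (-(5/4) : ℝ) + t0 ^ (-(1/4) : ℝ), by positivity, ?_⟩
  intro δ hδ r hr z hz
  have hz1 := mem_ball_zero_iff.1 hz
  set t := 1 - z.re with ht
  set x := ‖z - b‖ with hx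
  have htp : 0 < t := by rw [ht]; linarith [ball_re hz]
  have ht2 : t ≤ 2 := by rw [ht]; linarith [abs_le.1 ((abs_re_le_norm z).trans hz1.le)]
  have hxp : 0 < x := by rw [hx, norm_pos_iff, sub_ne_zero]; rintro rfl; linarith
  have hx2 : x ≤ 2 := by rw [hx]; linarith [norm_sub_le z b]
  obtain ⟨hN, hNx⟩ := hb_ns hb1 hz1.le hδ
  have hxr : ∀ q : ℝ, q ≤ 0 → normSq (hb b δ z) ^ q ≤ x ^ (2 * q) := by
    intro q hq
    rw [Real.rpow_mul hxp.le]
    apply Real.rpow_le_rpow_of_nonpos (by positivity) _ hq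
    simpa using hNx
  have b1 : kk z * GG b δ z ≤ t ^ (-(5/4) : ℝ) * x ^ (-(3/4) : ℝ) := by
    have h1 := hxr (-(3/8)) (by norm_num)
    rw [show (2 * (-(3/8)) : ℝ) = -(3/4) by norm_num] at h1
    have : GG b δ z = normSq (hb b δ z) ^ (-(3/8) : ℝ) := by simp [GG, regP]
    rw [this]
    have h2 : 0 < t ^ (-(5/4) : ℝ) := Real.rpow_pos_of_pos htp _
    have h3 : kk z ≤ t ^ (-(5/4) : ℝ) := by unfold kk; rw [← ht]; linarith
    exact mul_le_mul h3 h1 (Real.rpow_nonneg hN.le _) h2.le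
  have b2 : (r - uu ρ z) * lap (GG b δ) z / 4 ≤ t ^ (-(1/4) : ℝ) * x ^ (-(7/4) : ℝ) := by
    rw [GG_lap hb1 hz hδ]
    have h1 := hxr (-(11/8)) (by norm_num)
    rw [show (2 * (-(11/8)) : ℝ) = -(11/4) by norm_num] at h1
    have h2 : 1 - normSq z ≤ 2 * x := by
      rw [normSq_eq_norm_sq]
      have : 1 - ‖z‖ ≤ x := by
        have := norm_sub_norm_le b z
        rw [hb1, norm_sub_rev] at this; exact this
      nlinarith [norm_nonneg z]
    have h3 := uu_lower H hz
    have h4 : 0 < t ^ (-(1/4) : ℝ) := Real.rpow_pos_of_pos htp _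
    have h5 : r - uu ρ z ≤ x * t ^ (-(1/4) : ℝ) := by
      have : gg z ≤ (2 * x) * t ^ (-(1/4) : ℝ) := mul_le_mul_of_nonneg_right h2 h4.le
      linarith
    have h6 : 0 < normSq (hb b δ z) ^ (-(11/8) : ℝ) := Real.rpow_pos_of_pos hN _
    have h7 : x * x ^ (-(11/4) : ℝ) = x ^ (-(7/4) : ℝ) := by
      rw [mul_comm, ← Real.rpow_add_one hxp.ne']; norm_num
    calc (r - uu ρ z) * (9 / 16 * normSq (hb b δ z) ^ (-(11/8) : ℝ)) / 4
        ≤ (x * t ^ (-(1/4) : ℝ)) * (9 / 16 * normSq (hb b δ z) ^ (-(11/8) : ℝ)) / 4 := by gcongr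
      _ ≤ (x * t ^ (-(1/4) : ℝ)) * normSq (hb b δ z) ^ (-(11/8) : ℝ) := by
          have : 0 < (x * t ^ (-(1/4) : ℝ)) * normSq (hb b δ z) ^ (-(11/8) : ℝ) := by positivity
          linarith
      _ ≤ (x * t ^ (-(1/4) : ℝ)) * x ^ (-(11/4) : ℝ) := by gcongr
      _ = t ^ (-(1/4) : ℝ) * (x * x ^ (-(11/4) : ℝ)) := by ring
      _ = _ := by rw [h7]
  have p5 : 0 < t ^ (-(5/4) : ℝ) := Real.rpow_pos_of_pos htp _
  have p7 : 0 < x ^ (-(7/4) : ℝ) := Real.rpow_pos_of_pos hxp _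
  have c1 : 0 < x0 ^ (-(3/4) : ℝ) := Real.rpow_pos_of_pos hx0p _
  have c2 : 0 < x0 ^ (-(7/4) : ℝ) := Real.rpow_pos_of_pos hx0p _
  have c3 : 0 < t0 ^ (-(5/4) : ℝ) := Real.rpow_pos_of_pos ht0p _
  have c4 : 0 < t0 ^ (-(1/4) : ℝ) := Real.rpow_pos_of_pos ht0p _
  unfold JJ
  by_cases hcase : x0 ≤ x
  · have q1 : x ^ (-(3/4) : ℝ) ≤ x0 ^ (-(3/4) : ℝ) := Real.rpow_le_rpow_of_nonpos hx0p hcase (by norm_num)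
    have q2 : x ^ (-(7/4) : ℝ) ≤ x0 ^ (-(7/4) : ℝ) := Real.rpow_le_rpow_of_nonpos hx0p hcase (by norm_num)
    have q3 : t ^ (-(1/4) : ℝ) ≤ 2 * t ^ (-(5/4) : ℝ) := by
      rw [← (T_split htp).2, mul_comm]; gcongr
    have q4 : t ^ (-(5/4) : ℝ) * x ^ (-(3/4) : ℝ) ≤ x0 ^ (-(3/4) : ℝ) * t ^ (-(5/4) : ℝ) := by
      rw [mul_comm]; gcongr
    have q5 : t ^ (-(1/4) : ℝ) * x ^ (-(7/4) : ℝ) ≤ 2 * t ^ (-(5/4) : ℝ) * x0 ^ (-(7/4) : ℝ) := by gcongr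
    have r1 : 0 ≤ x0 ^ (-(3/4) : ℝ) * x ^ (-(7/4) : ℝ) := by positivity
    have r2 : 0 ≤ x0 ^ (-(7/4) : ℝ) * x ^ (-(7/4) : ℝ) := by positivity
    have r3 : 0 ≤ t0 ^ (-(5/4) : ℝ) * (t ^ (-(5/4) : ℝ) + x ^ (-(7/4) : ℝ)) := by positivity
    have r4 : 0 ≤ t0 ^ (-(1/4) : ℝ) * (t ^ (-(5/4) : ℝ) + x ^ (-(7/4) : ℝ)) := by positivity
    nlinarith
  · push Not at hcase
    have htt : t0 ≤ t := by
      have e1 : x0 ≤ ‖1 - z‖ := by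
        have : d ≤ ‖1 - z‖ + ‖z - b‖ := by
          rw [hd]; calc ‖1 - b‖ = ‖(1 - z) + (z - b)‖ := by ring_nf
            _ ≤ _ := norm_add_le _ _
        have hxx : ‖z - b‖ < x0 := hcase
        linarith
      have e2 := two_t z
      have e3 := ball_normSq.1 hz
      rw [normSq_eq_norm_sq (1 - z)] at e2
      have e4 : x0 ^ 2 ≤ ‖1 - z‖ ^ 2 := by gcongr
      rw [ht0, ht]
      rw [hx0] at e4
      nlinarith
    have q1 : t ^ (-(5/4) : ℝ) ≤ t0 ^ (-(5/4) : ℝ) := Real.rpow_le_rpow_of_nonpos ht0p htt (by norm_num)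
    have q2 : t ^ (-(1/4) : ℝ) ≤ t0 ^ (-(1/4) : ℝ) := Real.rpow_le_rpow_of_nonpos ht0p htt (by norm_num)
    have q3 : x ^ (-(3/4) : ℝ) ≤ 2 * x ^ (-(7/4) : ℝ) := by
      have : x ^ (-(3/4) : ℝ) = x * x ^ (-(7/4) : ℝ) := by
        rw [mul_comm, ← Real.rpow_add_one hxp.ne']; norm_num
      rw [this]; gcongr
    have q4 : t ^ (-(5/4) : ℝ) * x ^ (-(3/4) : ℝ) ≤ t0 ^ (-(5/4) : ℝ) * (2 * x ^ (-(7/4) : ℝ)) := by gcongr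
    have q5 : t ^ (-(1/4) : ℝ) * x ^ (-(7/4) : ℝ) ≤ t0 ^ (-(1/4) : ℝ) * x ^ (-(7/4) : ℝ) := by gcongr
    have r1 : 0 ≤ t0 ^ (-(5/4) : ℝ) * t ^ (-(5/4) : ℝ) := by positivity
    have r2 : 0 ≤ t0 ^ (-(1/4) : ℝ) * t ^ (-(5/4) : ℝ) := by positivity
    have r3 : 0 ≤ x0 ^ (-(3/4) : ℝ) * (t ^ (-(5/4) : ℝ) + x ^ (-(7/4) : ℝ)) := by positivity
    have r4 : 0 ≤ x0 ^ (-(7/4) : ℝ) * (t ^ (-(5/4) : ℝ) + x ^ (-(7/4) : ℝ)) := by positivity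
    nlinarith

lemma L1 (S : SU ρ ν μfam) {b : ℂ} (hb1 : ‖b‖ = 1) (hb2 : b ≠ 1) : ∃ C : ℝ≥0∞, C < ⊤ ∧
    ∀ δ : ℝ, 0 < δ → ∀ r : ℝ, r < 0 → ∫⁻ z, ENNReal.ofReal (GG b δ z) ∂(μfam r) ≤ C := by
  obtain ⟨K, hK, hJ⟩ := JJ_bound S.H hb1 hb2
  have hint : IntegrableOn (fun z : ℂ => K * ((1 - z.re) ^ (-(5/4) : ℝ) + ‖z - b‖ ^ (-(7/4) : ℝ))) (ball (0:ℂ) 1) :=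
    (int_T.add (int_b b hb1)).const_mul K
  refine ⟨∫⁻ z in ball (0:ℂ) 1, ENNReal.ofReal (K * ((1 - z.re) ^ (-(5/4) : ℝ) + ‖z - b‖ ^ (-(7/4) : ℝ))),
    hint.lintegral_lt_top, fun δ hδ r hr => ?_⟩
  rw [LJ_nn S hr (GG_cd hb1 hδ) (fun z _ => GG_nn b δ z) (fun z hz => by
    rw [GG_lap hb1 hz hδ]
    have := Real.rpow_nonneg (normSq_nonneg (hb b δ z)) (-(11/8))
    positivity)]
  calc _ ≤ ∫⁻ z in Ar ρ r, ENNReal.ofReal (K * ((1 - z.re) ^ (-(5/4) : ℝ) + ‖z - b‖ ^ (-(7/4) : ℝ))) := by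
        apply setLIntegral_mono' (Ar_open S.H r).measurableSet
        intro z hz
        exact ENNReal.ofReal_le_ofReal (hJ δ hδ r hr z hz.1)
    _ ≤ _ := lintegral_mono_set (Ar_sub r)

end


section
variable {ρ : ℂ → ℝ} {ν : Measure ℂ} {μfam : ℝ → Measure ℂ}

lemma vol_rect (a b c d : ℝ) : volume ((Ioo a b) ×ℂ (Ioo c d)) = ENNReal.ofReal (b - a) * ENNReal.ofReal (d - c) := by
  have h := Complex.volume_preserving_equiv_real_prod.measure_preimage_equiv (Ioo a b ×ˢ Ioo c d)
  rw [Measure.volume_eq_prod, Measure.prod_prod, Real.volume_Ioo, Real.volume_Ioo] at h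
  rw [← h]; congr 1

lemma GGm_facts {c a b : ℂ} (hc : ‖c‖ = 1) (ha : ‖a‖ < 1) (hb1 : ‖b‖ = 1) {δ : ℝ} (hδ : 0 < δ) :
    ContDiffOn ℝ 2 (fun z => GG b δ (mob c a z)) (ball (0:ℂ) 1) ∧
    ∀ z ∈ ball (0:ℂ) 1, 0 ≤ lap (fun z => GG b δ (mob c a z)) z := by
  have hd : DifferentiableOn ℂ (fun z => hb b δ (mob c a z)) (ball (0:ℂ) 1) :=
    (hb_diff b δ).comp_differentiableOn (mob_diffOn c ha)
  have hp : ∀ z ∈ ball (0:ℂ) 1, 0 < normSq (hb b δ (mob c a z)) + 0 := fun z hz => by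
    rw [add_zero]
    exact (hb_ns hb1 (mem_ball_zero_iff.1 (mob_ball hc ha hz)).le hδ).1
  have e : (fun z => GG b δ (mob c a z)) = regP 0 (-(3/8)) (fun z => hb b δ (mob c a z)) := rfl
  rw [e]
  constructor
  · exact fun z hz => (cda_regP (hol_cda isOpen_ball hd hz) 0 _ (hp z hz)).contDiffWithinAt
  · intro z hz
    rw [lap_regP isOpen_ball hd hz 0 _ (hp z hz)]
    have h1 := hp z hz
    set N := normSq (hb b δ (mob c a z))
    have h2 : 0 ≤ (N + 0) ^ (-(3/8) - 2 : ℝ) := Real.rpow_nonneg h1.le _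
    have h3 := normSq_nonneg (deriv (fun z => hb b δ (mob c a z)) z)
    have : 4 * (-(3/8)) * (N + 0) ^ (-(3/8) - 2 : ℝ) * (0 + -(3/8) * N) * normSq (deriv (fun z => hb b δ (mob c a z)) z)
      = 9/16 * ((N + 0) ^ (-(3/8) - 2 : ℝ) * N * normSq (deriv (fun z => hb b δ (mob c a z)) z)) := by ring
    rw [this]
    have : 0 ≤ N := normSq_nonneg _
    positivity

lemma L2 (S : SU ρ ν μfam) {c a b : ℂ} (hc : ‖c‖ = 1) (ha : ‖a‖ < 1) (hb1 : ‖b‖ = 1) (h1 : mob c a 1 = b) (T : ℝ) :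
    ∃ δ : ℝ, 0 < δ ∧ ∃ r0 : ℝ, r0 < 0 ∧ ∀ r : ℝ, r0 < r → r < 0 →
      ENNReal.ofReal T ≤ ∫⁻ z, ENNReal.ofReal (GG b δ (mob c a z)) ∂(μfam r) := by
  set L := 1 / (1 - ‖a‖) ^ 2 with hL
  have hLp : 0 < L := by have : 0 < 1 - ‖a‖ := by linarith
                         positivity
  set B := (1 + 2 * L) ^ 2 with hB
  have hBp : 0 < B := by positivity
  set k := 3 / 32 * (2:ℝ) ^ (-(5/4) : ℝ) * B ^ (-(3/8) : ℝ) with hk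
  have hkp : 0 < k := by positivity
  set s := min (1/2) (k / (|T| + 1)) with hs
  have hsp : 0 < s := lt_min (by norm_num) (by positivity)
  have hs2 : s ≤ 1/2 := min_le_left _ _
  have hsT : T ≤ k / s := by
    rw [le_div_iff₀ hsp]
    have h2 : s ≤ k / (|T| + 1) := min_le_right _ _
    have h3 : (|T| + 1) * s ≤ k := by
      rw [le_div_iff₀ (by positivity)] at h2; linarith
    nlinarith [le_abs_self T]
  set δ := s ^ 8 with hδ
  have hδp : 0 < δ := by positivity
  have hs4 : s ^ 4 ≤ 1 / 16 := by
    calc s ^ 4 ≤ (1/2) ^ 4 := by gcongr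
      _ = _ := by norm_num
  have hδe : δ = s ^ 4 * s ^ 4 := by rw [hδ]; ring
  have hδs : δ ≤ 1/256 := by rw [hδe]; nlinarith [pow_pos hsp 4]
  have hδs4 : δ ≤ s ^ 4 := by rw [hδe]; nlinarith [pow_pos hsp 4]
  refine ⟨δ, hδp, -(3/224) * δ, by linarith, fun r hr hr0 => ?_⟩
  obtain ⟨hcd, hl⟩ := GGm_facts hc ha hb1 hδp
  rw [LJ_nn S hr0 hcd (fun z _ => GG_nn _ _ _) hl]
  set Q := (Ioo (1 - 2 * δ) (1 - δ)) ×ℂ (Ioo (-s ^ 4) (s ^ 4)) with hQ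
  have hq : ∀ z ∈ Q, δ < 1 - z.re ∧ 1 - z.re < 2 * δ ∧ z.im ^ 2 < δ := by
    intro z hz
    obtain ⟨h2, h3⟩ := hz
    simp only [mem_preimage, mem_Ioo] at h2 h3
    refine ⟨by linarith, by linarith, ?_⟩
    rw [hδe, ← sq]
    exact sq_lt_sq' (by linarith) h3.2
  have hns : ∀ z ∈ Q, δ / 2 ≤ 1 - normSq z := by
    intro z hz
    obtain ⟨h2, h3, h4⟩ := hq z hz
    rw [normSq_apply]
    nlinarith
  have hQb : ∀ z ∈ Q, z ∈ ball (0:ℂ) 1 := fun z hz => by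
    rw [ball_normSq]; linarith [hns z hz]
  have hQA : Q ⊆ Ar ρ r := by
    intro z hz
    refine ⟨hQb z hz, lt_of_le_of_lt ?_ hr⟩
    refine (uu_upper S.H (hQb z hz)).trans ?_
    obtain ⟨h2, h3, h4⟩ := hq z hz
    have h5 : 1 ≤ (1 - z.re) ^ (-(1/4) : ℝ) :=
      Real.one_le_rpow_of_pos_of_le_one_of_nonpos (by linarith) (by linarith) (by norm_num)
    have h6 : δ / 2 ≤ gg z := by
      unfold gg
      have := hns z hz
      nlinarith
    linarith
  set K := 3/64 * (2 * s ^ 8) ^ (-(5/4) : ℝ) * (B * s ^ 8) ^ (-(3/8) : ℝ) with hK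
  have hKp : 0 < K := by positivity
  have hlow : ∀ z ∈ Q, K ≤ JJ ρ r (fun z => GG b δ (mob c a z)) z := by
    intro z hz
    obtain ⟨h2, h3, h4⟩ := hq z hz
    have hzb := hQb z hz
    have hz1 := mem_ball_zero_iff.1 hzb
    have e1 : 3/64 * (2 * s ^ 8) ^ (-(5/4) : ℝ) ≤ kk z := by
      unfold kk
      gcongr 3/64 * ?_
      exact Real.rpow_le_rpow_of_nonpos (by linarith) h3.le (by norm_num)
    have e2 : ‖1 - z‖ ≤ 2 * s ^ 4 := by
      apply abs_le_of_sq_le_sq' _ (by positivity) |>.2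
      rw [← normSq_eq_norm_sq, normSq_apply]
      simp only [sub_re, sub_im, one_re, one_im]
      have : (2 * s ^ 4) ^ 2 = 4 * δ := by rw [hδe]; ring
      rw [this]
      nlinarith
    have e3 : ‖hb b δ (mob c a z)‖ ≤ (1 + 2 * L) * s ^ 4 := by
      have f1 : hb b δ (mob c a z) = δ + (1 - (starRingEnd ℂ) b * mob c a z) := by unfold hb; ring
      have f2 := mob_lip hc ha hz1.le (w := 1) (by simp)
      rw [h1, ← hL, norm_sub_rev z] at f2
      rw [f1]
      refine (norm_add_le _ _).trans ?_
      rw [norm_b_sub hb1, norm_real, Real.norm_eq_abs, abs_of_pos hδp]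
      have : L * ‖1 - z‖ ≤ L * (2 * s ^ 4) := by gcongr
      linarith
    obtain ⟨e4, -⟩ := hb_ns hb1 (mem_ball_zero_iff.1 (mob_ball hc ha hzb)).le hδp
    have e5 : (B * s ^ 8) ^ (-(3/8) : ℝ) ≤ GG b δ (mob c a z) := by
      have : GG b δ (mob c a z) = normSq (hb b δ (mob c a z)) ^ (-(3/8) : ℝ) := by simp [GG, regP]
      rw [this]
      apply Real.rpow_le_rpow_of_nonpos e4 _ (by norm_num)
      rw [normSq_eq_norm_sq]
      calc ‖hb b δ (mob c a z)‖ ^ 2 ≤ ((1 + 2 * L) * s ^ 4) ^ 2 := by gcongr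
        _ = _ := by rw [hB]; ring
    unfold JJ
    have e6 := hl z hzb
    have e7 : 0 ≤ r - uu ρ z := by linarith [(hQA hz).2]
    have e8 : K ≤ kk z * GG b δ (mob c a z) := by
      rw [hK]; exact mul_le_mul e1 e5 (by positivity) ((by positivity : (0:ℝ) ≤ _).trans e1)
    have : 0 ≤ (r - uu ρ z) * lap (fun z => GG b δ (mob c a z)) z / 4 := by positivity
    linarith
  have hQm : MeasurableSet Q := (isOpen_Ioo.reProdIm isOpen_Ioo).measurableSet
  calc ENNReal.ofReal T ≤ ENNReal.ofReal (k / s) := ENNReal.ofReal_le_ofReal hsT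
    _ = ENNReal.ofReal K * volume Q := by
        rw [hQ, vol_rect, ← ENNReal.ofReal_mul (by linarith), ← ENNReal.ofReal_mul hKp.le]
        congr 1
        rw [hK, hk, Real.mul_rpow (by norm_num) (by positivity), Real.mul_rpow hBp.le (by positivity)]
        have g1 : (s ^ 8 : ℝ) ^ (-(5/4) : ℝ) = (s ^ 10)⁻¹ := by
          rw [← Real.rpow_natCast, ← Real.rpow_mul hsp.le, ← Real.rpow_natCast, ← Real.rpow_neg hsp.le]; norm_num
        have g2 : (s ^ 8 : ℝ) ^ (-(3/8) : ℝ) = (s ^ 3)⁻¹ := by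
          rw [← Real.rpow_natCast, ← Real.rpow_mul hsp.le, ← Real.rpow_natCast, ← Real.rpow_neg hsp.le]; norm_num
        rw [g1, g2, hδ]
        field_simp
        ring
    _ = ∫⁻ z in Q, ENNReal.ofReal K := by rw [setLIntegral_const]
    _ ≤ ∫⁻ z in Q, ENNReal.ofReal (JJ ρ r (fun z => GG b δ (mob c a z)) z) :=
        setLIntegral_mono' hQm (fun z hz => ENNReal.ofReal_le_ofReal (hlow z hz))
    _ ≤ _ := lintegral_mono_set hQA

lemma not_i (S : SU ρ ν μfam) {c a : ℂ} (hc : ‖c‖ = 1) (ha : ‖a‖ < 1) (h1 : mob c a 1 ≠ 1) {p : ℝ} (hp : 1 ≤ p) :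
    ¬ BoundedCompOp p μfam (mob c a) := by
  rintro ⟨M, hM, h⟩
  have hp0 : 0 < p := by linarith
  set b := mob c a 1 with hbdef
  have hb1 : ‖b‖ = 1 := by
    have := mob_sphere hc ha (z := 1) (by simp)
    simpa using this
  obtain ⟨C, hC, hL1⟩ := L1 S hb1 h1
  set D := (ENNReal.ofReal M) ^ p * C with hD
  have hDt : D < ⊤ := ENNReal.mul_lt_top (ENNReal.rpow_lt_top_of_nonneg hp0.le ENNReal.ofReal_ne_top) hC
  obtain ⟨δ, hδ, r0, hr0, hL2⟩ := L2 S hc ha hb1 hbdef.symm (D.toReal + 1)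
  set f : ℂ → ℂ := fun z => (hb b δ z) ^ (((-(3/4) / p : ℝ)) : ℂ) with hf
  have hdiff : DifferentiableOn ℂ f (ball (0:ℂ) 1) := by
    intro z hz
    apply DifferentiableAt.differentiableWithinAt
    apply (hb_diff b δ z).cpow_const
    left
    have := hb_re hb1 (mem_ball_zero_iff.1 hz).le (δ := δ)
    linarith
  have hnorm : ∀ z ∈ ball (0:ℂ) 1, ‖f z‖ ^ p = GG b δ z := by
    intro z hz
    have hre := hb_re hb1 (mem_ball_zero_iff.1 hz).le (δ := δ)
    have hne : hb b δ z ≠ 0 := by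
      intro h0; rw [h0] at hre; simp at hre; linarith
    have hGG : GG b δ z = ‖hb b δ z‖ ^ (-(3/4) : ℝ) := by
      rw [← regP_zero]; unfold GG; norm_num
    rw [hGG, hf]
    simp only
    rw [norm_cpow_real, ← Real.rpow_mul (norm_nonneg _)]
    congr 1; field_simp
  have hae : ∀ r < 0, ∀ᵐ z ∂(μfam r), z ∈ ball (0:ℂ) 1 := fun r hr => mu_compl S hr
  have hfn : psNormPow p μfam f ≤ C := by
    unfold psNormPow
    refine limsup_le_of_le (by isBoundedDefault) ?_
    filter_upwards [self_mem_nhdsWithin] with r hr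
    refine le_trans (le_of_eq ?_) (hL1 δ hδ r hr)
    apply lintegral_congr_ae
    filter_upwards [hae r hr] with z hz
    rw [hnorm z hz]
  obtain ⟨-, h3⟩ := h f ⟨hdiff, lt_of_le_of_lt hfn hC⟩
  have h4 : psNormPow p μfam (f ∘ mob c a) ≤ D := by
    unfold psNorm at h3
    have := ENNReal.rpow_le_rpow h3 hp0.le
    rw [ENNReal.mul_rpow_of_nonneg _ _ hp0.le, ← ENNReal.rpow_mul, ← ENNReal.rpow_mul, one_div, inv_mul_cancel₀ hp0.ne',
      ENNReal.rpow_one, ENNReal.rpow_one] at this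
    refine this.trans ?_
    rw [hD]; gcongr
  have h5 : ENNReal.ofReal (D.toReal + 1) ≤ psNormPow p μfam (f ∘ mob c a) := by
    unfold psNormPow
    refine le_trans ?_ liminf_le_limsup
    refine le_liminf_of_le (by isBoundedDefault) ?_
    filter_upwards [self_mem_nhdsWithin, mem_nhdsWithin_of_mem_nhds (Ioi_mem_nhds hr0)] with r hr hr1
    refine (hL2 r hr1 hr).trans (le_of_eq ?_)
    apply lintegral_congr_ae
    filter_upwards [hae r hr] with z hz
    simp only [Function.comp]
    rw [hnorm _ (mob_ball hc ha hz)]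
  have h6 := h5.trans h4
  rw [ENNReal.ofReal_le_iff_le_toReal hDt.ne] at h6
  linarith

end


section
variable {ρ : ℂ → ℝ} {ν : Measure ℂ} {μfam : ℝ → Measure ℂ} {μb : Measure ℂ}

lemma sig_eq : arcLen (ball (0:ℂ) 1) = (μH[1] : Measure ℂ).restrict (sphere (0:ℂ) 1) := by
  unfold arcLen; rw [frontier_ball _ one_ne_zero]

lemma sig_le {α αi : ℂ → ℂ} (hα : Measurable α)
    (hS : ∀ z ∈ sphere (0:ℂ) 1, αi z ∈ sphere (0:ℂ) 1 ∧ α (αi z) = z) {L : NNReal}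
    (hL : LipschitzOnWith L α (sphere (0:ℂ) 1)) :
    arcLen (ball (0:ℂ) 1) ≤ (L : ℝ≥0∞) • (arcLen (ball (0:ℂ) 1)).map α := by
  rw [sig_eq]
  rw [Measure.le_iff]
  intro A hA
  rw [Measure.smul_apply, Measure.map_apply hα hA, Measure.restrict_apply hA, Measure.restrict_apply (hα hA), smul_eq_mul]
  have h1 : A ∩ sphere (0:ℂ) 1 ⊆ α '' (α ⁻¹' A ∩ sphere (0:ℂ) 1) := by
    rintro z ⟨hz, hz1⟩
    obtain ⟨h2, h3⟩ := hS z hz1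
    exact ⟨αi z, ⟨by rw [mem_preimage, h3]; exact hz, h2⟩, h3⟩
  refine (measure_mono h1).trans ?_
  have := (hL.mono (inter_subset_right (s := α ⁻¹' A))).hausdorffMeasure_image_le (d := 1) zero_le_one
  simpa using this

lemma chg {α αi : ℂ → ℂ} (hα : Measurable α)
    (hS : ∀ z ∈ sphere (0:ℂ) 1, αi z ∈ sphere (0:ℂ) 1 ∧ α (αi z) = z)
    (hS2 : ∀ z ∈ sphere (0:ℂ) 1, αi (α z) = z) {L : NNReal}
    (hL : LipschitzOnWith L α (sphere (0:ℂ) 1)) (B : ℂ → ℝ≥0∞) {E : Set ℂ} (hE : MeasurableSet E) :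
    ∫⁻ η in E, B (αi η) ∂(arcLen (ball (0:ℂ) 1)) ≤ L * ∫⁻ η in α ⁻¹' E, B η ∂(arcLen (ball (0:ℂ) 1)) := by
  obtain ⟨h, hm, hle, heq⟩ := exists_measurable_le_lintegral_eq
    (μ := (arcLen (ball (0:ℂ) 1)).restrict E) (fun η => B (αi η))
  rw [heq, ← lintegral_indicator hE]
  calc ∫⁻ a, E.indicator h a ∂(arcLen (ball (0:ℂ) 1))
      ≤ ∫⁻ a, E.indicator h a ∂((L : ℝ≥0∞) • (arcLen (ball (0:ℂ) 1)).map α) :=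
        lintegral_mono' (sig_le hα hS hL) le_rfl
    _ = L * ∫⁻ a, E.indicator h (α a) ∂(arcLen (ball (0:ℂ) 1)) := by
        rw [lintegral_smul_measure, lintegral_map (hm.indicator hE) hα, smul_eq_mul]
    _ = L * ∫⁻ a in α ⁻¹' E, h (α a) ∂(arcLen (ball (0:ℂ) 1)) := by
        rw [← lintegral_indicator (hα hE)]; rfl
    _ ≤ _ := by
        gcongr 1
        apply lintegral_mono_ae
        apply ae_restrict_of_ae
        rw [sig_eq]
        filter_upwards [ae_restrict_mem isClosed_sphere.measurableSet] with z hz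
        have := hle (α z)
        simp only [hS2 z hz] at this
        exact this

lemma mob_meas (c a : ℂ) : Measurable (mob c a) := by
  unfold mob
  exact measurable_const.mul ((measurable_id.sub_const a).div (measurable_const.sub (measurable_const.mul measurable_id)))

lemma mob_lipOn {c a : ℂ} (hc : ‖c‖ = 1) (ha : ‖a‖ < 1) :
    LipschitzOnWith (Real.toNNReal (1 / (1 - ‖a‖) ^ 2)) (mob c a) (sphere (0:ℂ) 1) := by
  apply LipschitzOnWith.of_dist_le_mul
  intro z hz w hw
  rw [dist_eq_norm, dist_eq_norm, Real.coe_toNNReal _ (by positivity)]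
  exact mob_lip hc ha (by simpa using (mem_sphere_zero_iff_norm.1 hz).le) (mem_sphere_zero_iff_norm.1 hw).le

/-- condition (ii) is equivalent to a condition on `μb`. -/
lemma ii_iff {β : ℂ → ℝ} (hβ : μb = (arcLen (ball (0:ℂ) 1)).withDensity (fun ξ => ENNReal.ofReal (β ξ)))
    {c a : ℂ} (hc : ‖c‖ = 1) (ha : ‖a‖ < 1) {φinv : ℂ → ℂ}
    (hinv : ∀ z ∈ sphere (0:ℂ) 1, φinv z ∈ sphere (0:ℂ) 1 ∧ mob c a (φinv z) = z ∧ φinv (mob c a z) = z) :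
    (∃ K : ℝ, 0 < K ∧ ∀ E : Set ℂ, E ⊆ sphere (0:ℂ) 1 → MeasurableSet E →
        ∫⁻ η in E, ENNReal.ofReal (β (φinv η)) ∂(arcLen (ball (0:ℂ) 1)) ≤
          ENNReal.ofReal K * ∫⁻ η in E, ENNReal.ofReal (β η) ∂(arcLen (ball (0:ℂ) 1))) ↔
    ∃ K : ℝ, 0 < K ∧ μb.map (mob c a) ≤ ENNReal.ofReal K • μb := by
  set c' := (starRingEnd ℂ) c with hc'
  set a' := -(c * a) with ha'
  have hc1 : ‖c'‖ = 1 := by rw [hc', RCLike.norm_conj, hc]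
  have ha1 : ‖a'‖ < 1 := by rw [ha', norm_neg, norm_mul, hc, one_mul]; exact ha
  have hSm : MeasurableSet (sphere (0:ℂ) 1) := isClosed_sphere.measurableSet
  have hβE : ∀ E, MeasurableSet E → μb E = ∫⁻ η in E, ENNReal.ofReal (β η) ∂(arcLen (ball (0:ℂ) 1)) := by
    intro E hE; rw [hβ, withDensity_apply _ hE]
  have hms : ∀ z ∈ sphere (0:ℂ) 1, mob c a z ∈ sphere (0:ℂ) 1 := fun z hz => by
    rw [mem_sphere_zero_iff_norm] at hz ⊢; exact mob_sphere hc ha hz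
  have hms' : ∀ z ∈ sphere (0:ℂ) 1, mob c' a' z ∈ sphere (0:ℂ) 1 := fun z hz => by
    rw [mem_sphere_zero_iff_norm] at hz ⊢; exact mob_sphere hc1 ha1 hz
  have hi1 : ∀ z ∈ sphere (0:ℂ) 1, mob c' a' (mob c a z) = z := fun z hz =>
    mob_inv hc ha (mem_sphere_zero_iff_norm.1 hz).le
  have hi2 : ∀ z ∈ sphere (0:ℂ) 1, mob c a (mob c' a' z) = z := fun z hz =>
    mob_inv2 hc ha (mem_sphere_zero_iff_norm.1 hz).le
  have hres : ∀ E : Set ℂ, ∀ f : ℂ → ℝ≥0∞, MeasurableSet E →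
      ∫⁻ η in E ∩ sphere (0:ℂ) 1, f η ∂(arcLen (ball (0:ℂ) 1)) = ∫⁻ η in E, f η ∂(arcLen (ball (0:ℂ) 1)) := by
    intro E f hE
    rw [sig_eq, Measure.restrict_restrict (hE.inter hSm), Measure.restrict_restrict hE, inter_assoc, inter_self]
  constructor
  · rintro ⟨K, hK, h⟩
    set L := Real.toNNReal (1 / (1 - ‖a'‖) ^ 2) with hLd
    have hLp : 0 < (L:ℝ) := by
      rw [hLd, Real.coe_toNNReal _ (by positivity)]
      have : 0 < 1 - ‖a'‖ := by linarith
      positivity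
    refine ⟨L * K, by positivity, ?_⟩
    rw [Measure.le_iff]
    intro E hE
    rw [Measure.map_apply (mob_meas c a) hE, Measure.smul_apply, smul_eq_mul, hβE _ (mob_meas c a hE)]
    have h1 := chg (α := mob c' a') (αi := mob c a) (mob_meas c' a') (fun z hz => ⟨hms z hz, hi1 z hz⟩) hi2
      (mob_lipOn hc1 ha1) (fun η => ENNReal.ofReal (β (φinv η))) (mob_meas c a hE)
    have h2 : ∫⁻ η in mob c a ⁻¹' E, ENNReal.ofReal (β η) ∂(arcLen (ball (0:ℂ) 1))
      = ∫⁻ η in mob c a ⁻¹' E, ENNReal.ofReal (β (φinv (mob c a η))) ∂(arcLen (ball (0:ℂ) 1)) := by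
      apply lintegral_congr_ae
      apply ae_restrict_of_ae
      rw [sig_eq]
      filter_upwards [ae_restrict_mem hSm] with z hz
      rw [(hinv z hz).2.2]
    have h3 : (mob c' a' ⁻¹' (mob c a ⁻¹' E)) ∩ sphere (0:ℂ) 1 = E ∩ sphere (0:ℂ) 1 := by
      ext z
      constructor
      · rintro ⟨h4, h5⟩
        simp only [mem_preimage, hi2 z h5] at h4
        exact ⟨h4, h5⟩
      · rintro ⟨h4, h5⟩
        refine ⟨?_, h5⟩
        simp only [mem_preimage, hi2 z h5]; exact h4
    rw [h2]
    refine h1.trans ?_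
    rw [← hres _ _ (mob_meas c' a' (mob_meas c a hE)), h3, ENNReal.ofReal_mul hLp.le, mul_assoc, ENNReal.ofReal_coe_nnreal]
    gcongr
    refine (h _ inter_subset_right (hE.inter hSm)).trans ?_
    rw [hres _ _ hE, hβE _ hE]
  · rintro ⟨K, hK, h⟩
    set L := Real.toNNReal (1 / (1 - ‖a‖) ^ 2) with hLd
    have hLp : 0 < (L:ℝ) := by
      rw [hLd, Real.coe_toNNReal _ (by positivity)]
      have : 0 < 1 - ‖a‖ := by linarith
      positivity
    refine ⟨L * K, by positivity, fun E _ hE => ?_⟩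
    have h1 := chg (α := mob c a) (αi := φinv) (mob_meas c a) (fun z hz => ⟨(hinv z hz).1, (hinv z hz).2.1⟩)
      (fun z hz => (hinv z hz).2.2)
      (mob_lipOn hc ha) (fun η => ENNReal.ofReal (β η)) hE
    refine h1.trans ?_
    rw [ENNReal.ofReal_mul hLp.le, mul_assoc, ENNReal.ofReal_coe_nnreal]
    gcongr
    have := Measure.le_iff.1 h E hE
    rw [Measure.map_apply (mob_meas c a) hE, Measure.smul_apply, smul_eq_mul] at this
    rwa [← hβE _ (mob_meas c a hE), ← hβE _ hE]

/-- Data about the boundary measure. -/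
structure BU (μfam : ℝ → Measure ℂ) (μb : Measure ℂ) : Prop where
  lim : IsBoundaryMA μfam μb
  sph : μb (sphere (0:ℂ) 1)ᶜ = 0

lemma b_fin (S : SU ρ ν μfam) (B : BU μfam μb) : IsFiniteMeasure μb := by
  have h := B.lim (fun _ => 1) continuous_const
  by_contra hn
  have hn' : μb univ = ⊤ := by
    by_contra h2
    exact hn ⟨lt_top_iff_ne_top.2 h2⟩
  have h0 : ∫ _, (1:ℝ) ∂μb = 0 := by
    rw [integral_const, Measure.real, hn']; simp
  rw [h0] at h
  set r0 := uu ρ 0 / 2 with hr0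
  have hz : (0:ℂ) ∈ ball (0:ℂ) 1 := by simp
  have hu := uu_neg S.H hz
  have hA : (0:ℂ) ∈ Ar ρ r0 := ⟨hz, by rw [hr0]; linarith⟩
  have hpos := kv_pos (Ar_open S.H r0) hA (Ar_sub r0)
  have : (kv (Ar ρ r0)).toReal ≤ 0 := by
    refine ge_of_tendsto h ?_
    filter_upwards [self_mem_nhdsWithin, mem_nhdsWithin_of_mem_nhds (Ioi_mem_nhds (show r0 < 0 by linarith))] with r hr hr1
    rw [integral_const, Measure.real, (mu_struct S hr).1, smul_eq_mul, mul_one]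
    apply ENNReal.toReal_mono (measure_ne_top _ _)
    exact measure_mono (fun z hz => ⟨hz.1, hz.2.trans hr1⟩)
  have h3 := ENNReal.toReal_pos hpos.ne' (measure_ne_top _ _)
  linarith

lemma b_ext (S : SU ρ ν μfam) (B : BU μfam μb) {g : ℂ → ℝ} (hg : ContinuousOn g (closedBall (0:ℂ) 1)) :
    Integrable g μb ∧ Tendsto (fun r => ∫ z, g z ∂(μfam r)) (𝓝[<] 0) (𝓝 (∫ z, g z ∂μb)) := by
  set P : ℂ → ℂ := fun z => ((max 1 ‖z‖)⁻¹ : ℝ) • z with hP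
  have hmx : ∀ z : ℂ, 0 < max 1 ‖z‖ := fun z => lt_of_lt_of_le one_pos (le_max_left _ _)
  have hPc : Continuous P :=
    ((continuous_const.max continuous_norm).inv₀ (fun z => (hmx z).ne')).smul continuous_id
  have hPb : ∀ z, P z ∈ closedBall (0:ℂ) 1 := by
    intro z
    rw [mem_closedBall_zero_iff, hP]
    simp only
    rw [norm_smul, Real.norm_eq_abs, abs_of_pos (inv_pos.2 (hmx z)), inv_mul_le_iff₀ (hmx z), mul_one]
    exact le_max_right _ _
  have hPi : ∀ z ∈ closedBall (0:ℂ) 1, P z = z := by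
    intro z hz
    rw [mem_closedBall_zero_iff] at hz
    simp [hP, max_eq_left hz]
  have hgP : Continuous (fun z => g (P z)) := hg.comp_continuous hPc hPb
  have hb : (fun z => g (P z)) =ᵐ[μb] g := by
    have : ∀ᵐ z ∂μb, z ∈ sphere (0:ℂ) 1 := B.sph
    filter_upwards [this] with z hz
    rw [hPi z (sphere_subset_closedBall hz)]
  have hr : ∀ r < 0, ∫ z, g (P z) ∂(μfam r) = ∫ z, g z ∂(μfam r) := by
    intro r hr
    apply integral_congr_ae
    have : ∀ᵐ z ∂(μfam r), z ∈ ball (0:ℂ) 1 := mu_compl S hr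
    filter_upwards [this] with z hz
    rw [hPi z (ball_subset_closedBall hz)]
  have := b_fin S B
  constructor
  · refine Integrable.congr ?_ hb
    obtain ⟨M, hM⟩ := (isCompact_closedBall (0:ℂ) 1).exists_bound_of_continuousOn hg
    exact Integrable.of_bound hgP.aestronglyMeasurable M (Eventually.of_forall fun z => hM _ (hPb z))
  · rw [← integral_congr_ae hb]
    refine (B.lim _ hgP).congr' ?_
    filter_upwards [self_mem_nhdsWithin] with r h
    exact hr r h

end


section
variable {ρ : ℂ → ℝ} {ν : Measure ℂ} {μfam : ℝ → Measure ℂ} {μb : Measure ℂ}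

lemma hol_re_cd {F : ℂ → ℂ} (hF : DifferentiableOn ℂ F (ball (0:ℂ) 1)) :
    ContDiffOn ℝ 2 (fun z => (F z).re) (ball (0:ℂ) 1) := fun z hz =>
  (reCLM.contDiff.contDiffAt.comp z (hol_cda isOpen_ball hF hz)).contDiffWithinAt

lemma C1 (S : SU ρ ν μfam) (B : BU μfam μb) {c a : ℂ} (hc : ‖c‖ = 1) (ha : ‖a‖ < 1) (h1 : mob c a 1 = 1) :
    ∃ C : ℝ, 0 < C ∧ ∀ F : ℂ → ℂ, Differentiable ℂ F → (∀ z ∈ sphere (0:ℂ) 1, 0 ≤ (F z).re) →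
      ∫ z, (F (mob c a z)).re ∂μb ≤ C * ∫ z, (F z).re ∂μb := by
  obtain ⟨C, hC, hk⟩ := key S.H hc ha h1
  refine ⟨C, hC, fun F hF h0 => ?_⟩
  have hFb := hF.differentiableOn (s := ball (0:ℂ) 1)
  have hcd := hol_re_cd hFb
  have hFm : DifferentiableOn ℂ (fun z => F (mob c a z)) (ball (0:ℂ) 1) :=
    hF.comp_differentiableOn (mob_diffOn c ha)
  have hcont : Continuous (fun z => (F z).re) := continuous_re.comp hF.continuous
  have hpos : ∀ z ∈ ball (0:ℂ) 1, 0 ≤ (F z).re := by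
    intro z hz
    have := max_principle (v := fun z => ((fun z => -F z) z).re) (by
        simp only [neg_re]; exact hcont.neg.continuousOn) (hol_re_cd hFb.neg)
      (fun z hz => (lap_re_hol isOpen_ball hFb.neg hz).ge) (fun z hz => by
        have := h0 z hz
        simp only [neg_re]; linarith) z hz
    simp only [neg_re] at this
    linarith
  have hstep : ∀ r < 0, ∫ z, (F (mob c a z)).re ∂(μfam r) ≤ C * ∫ z, (F z).re ∂(μfam (r / C)) := by
    intro r hr
    have hr' : r / C < 0 := div_neg_of_neg_of_pos hr hC
    have h2 := hk ν μfam S r hr _ hcd hpos (fun z hz => (lap_re_hol isOpen_ball hFb hz).ge) (fun z hz => by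
      rw [lap_re_hol isOpen_ball hFm hz, lap_re_hol isOpen_ball hFb (mob_ball hc ha hz), mul_zero])
    have i1 := (LJ S hr (hol_re_cd hFm)).1
    have i2 := (LJ S hr' hcd).1
    have ae1 : ∀ᵐ z ∂(μfam r), z ∈ ball (0:ℂ) 1 := mu_compl S hr
    have ae2 : ∀ᵐ z ∂(μfam (r / C)), z ∈ ball (0:ℂ) 1 := mu_compl S hr'
    have n1 : 0 ≤ᵐ[μfam r] fun z => (F (mob c a z)).re := by
      filter_upwards [ae1] with z hz using hpos _ (mob_ball hc ha hz)
    have n2 : 0 ≤ᵐ[μfam (r / C)] fun z => (F z).re := by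
      filter_upwards [ae2] with z hz using hpos _ hz
    rw [← ofReal_integral_eq_lintegral_ofReal i1 n1, ← ofReal_integral_eq_lintegral_ofReal i2 n2,
      ← ENNReal.ofReal_mul hC.le] at h2
    exact (ENNReal.ofReal_le_ofReal_iff (mul_nonneg hC.le (integral_nonneg_of_ae n2))).1 h2
  have ht : Tendsto (fun r : ℝ => r / C) (𝓝[<] 0) (𝓝[<] 0) := by
    apply tendsto_nhdsWithin_of_tendsto_nhds_of_eventually_within
    · have : Tendsto (fun r : ℝ => r / C) (𝓝 0) (𝓝 (0 / C)) := tendsto_id.div_const C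
      rw [zero_div] at this
      exact this.mono_left nhdsWithin_le_nhds
    · filter_upwards [self_mem_nhdsWithin] with r hr
      exact div_neg_of_neg_of_pos hr hC
  have hcm : ContinuousOn (fun z => (F (mob c a z)).re) (closedBall (0:ℂ) 1) :=
    hcont.comp_continuousOn (mob_contOn c ha)
  refine le_of_tendsto_of_tendsto (b_ext S B hcm).2 (((b_ext S B hcont.continuousOn).2.comp ht).const_mul C) ?_
  filter_upwards [self_mem_nhdsWithin] with r hr
  exact hstep r hr

lemma trig_dense {g : ℂ → ℝ} (hg : Continuous g) {ε : ℝ} (hε : 0 < ε) :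
    ∃ F : ℂ → ℂ, Differentiable ℂ F ∧ ∀ z ∈ sphere (0:ℂ) 1, |(F z).re - g z| ≤ ε := by
  haveI : Fact (0 < 2 * π) := ⟨Real.two_pi_pos⟩
  set G : C(AddCircle (2 * π), ℂ) := ⟨fun x => (g (AddCircle.toCircle x : ℂ) : ℂ), by
    exact continuous_ofReal.comp (hg.comp (continuous_subtype_val.comp AddCircle.continuous_toCircle))⟩ with hG
  have hmem : G ∈ (Submodule.span ℂ (range <| @fourier (2 * π))).topologicalClosure := by
    rw [span_fourier_closure_eq_top]; trivial
  have hmem' : G ∈ closure ((Submodule.span ℂ (range <| @fourier (2 * π))) : Set C(AddCircle (2 * π), ℂ)) := hmem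
  obtain ⟨h, hh, hd⟩ := Metric.mem_closure_iff.1 hmem' ε hε
  have hrep : ∃ P Q : ℂ → ℂ, Differentiable ℂ P ∧ Differentiable ℂ Q ∧
      ∀ x, h x = P (AddCircle.toCircle x) + (starRingEnd ℂ) (Q (AddCircle.toCircle x)) := by
    refine Submodule.span_induction (p := fun h _ => ∃ P Q : ℂ → ℂ, Differentiable ℂ P ∧ Differentiable ℂ Q ∧
      ∀ x, h x = P (AddCircle.toCircle x) + (starRingEnd ℂ) (Q (AddCircle.toCircle x))) ?_ ?_ ?_ ?_ hh
    · rintro _ ⟨n, rfl⟩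
      rcases Int.eq_nat_or_neg n with ⟨m, rfl | rfl⟩
      · refine ⟨fun z => z ^ m, fun _ => 0, by fun_prop, by fun_prop, fun x => ?_⟩
        rw [fourier_apply, AddCircle.toCircle_zsmul]; simp
      · refine ⟨fun _ => 0, fun z => z ^ m, by fun_prop, by fun_prop, fun x => ?_⟩
        rw [fourier_apply, AddCircle.toCircle_zsmul, zpow_neg, Circle.coe_inv_eq_conj]; simp
    · exact ⟨fun _ => 0, fun _ => 0, by fun_prop, by fun_prop, fun x => by simp⟩
    · rintro u v _ _ ⟨P, Q, hP, hQ, h1⟩ ⟨P', Q', hP', hQ', h2⟩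
      refine ⟨fun z => P z + P' z, fun z => Q z + Q' z, by fun_prop, by fun_prop, fun x => ?_⟩
      rw [ContinuousMap.add_apply, h1, h2, map_add]; ring
    · rintro k u _ ⟨P, Q, hP, hQ, h1⟩
      refine ⟨fun z => k * P z, fun z => (starRingEnd ℂ) k * Q z, by fun_prop, by fun_prop, fun x => ?_⟩
      rw [ContinuousMap.smul_apply, h1, map_mul, conj_conj, smul_eq_mul]; ring
  obtain ⟨P, Q, hP, hQ, hPQ⟩ := hrep
  refine ⟨fun z => P z + Q z, by fun_prop, fun z hz => ?_⟩
  have hz1 : ‖z‖ = 1 := mem_sphere_zero_iff_norm.1 hz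
  have hx : ((AddCircle.toCircle ((arg z : ℝ) : AddCircle (2 * π)) : Circle) : ℂ) = z := by
    rw [AddCircle.toCircle_apply_mk, div_self Real.two_pi_pos.ne', one_mul, Circle.coe_exp]
    have := norm_mul_exp_arg_mul_I z
    rw [hz1] at this
    simpa using this
  have h2 := ContinuousMap.dist_apply_le_dist (f := G) (g := h) ((arg z : ℝ) : AddCircle (2 * π))
  have h3 := hPQ ((arg z : ℝ) : AddCircle (2 * π))
  rw [dist_eq_norm] at h2
  have h4 : G ((arg z : ℝ) : AddCircle (2 * π)) = (g z : ℂ) := by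
    simp only [hG, ContinuousMap.coe_mk, hx]
  rw [h3, h4, hx] at h2
  have h5 := (abs_re_le_norm _).trans (h2.trans hd.le)
  rw [abs_sub_comm]
  simpa using h5

lemma C2 (S : SU ρ ν μfam) (B : BU μfam μb) {c a : ℂ} (hc : ‖c‖ = 1) (ha : ‖a‖ < 1) (h1 : mob c a 1 = 1) :
    ∃ C : ℝ, 0 < C ∧ ∀ g : ℂ → ℝ, Continuous g → (∀ z, 0 ≤ g z) →
      ∫ z, g (mob c a z) ∂μb ≤ C * ∫ z, g z ∂μb := by
  obtain ⟨C, hC, hk⟩ := C1 S B hc ha h1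
  have := b_fin S B
  refine ⟨C, hC, fun g hg h0 => ?_⟩
  set m := μb.real univ with hm
  have hstep : ∀ ε : ℝ, 0 < ε → ∫ z, g (mob c a z) ∂μb ≤ C * ∫ z, g z ∂μb + ε * (C * (2 * m)) := by
    intro ε hε
    obtain ⟨F, hF, hFg⟩ := trig_dense hg hε
    have hF' : Differentiable ℂ (fun z => F z + (ε:ℂ)) := by fun_prop
    have hin : ∀ z ∈ sphere (0:ℂ) 1, g z ≤ (F z + (ε:ℂ)).re ∧ (F z + (ε:ℂ)).re ≤ g z + 2 * ε := by
      intro z hz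
      have := abs_le.1 (hFg z hz)
      simp only [add_re, ofReal_re]
      constructor <;> linarith
    have h2 := hk _ hF' (fun z hz => (h0 z).trans (hin z hz).1)
    have hae : ∀ᵐ z ∂μb, z ∈ sphere (0:ℂ) 1 := B.sph
    have hcF : Continuous (fun z => (F z + (ε:ℂ)).re) := continuous_re.comp hF'.continuous
    have e1 : ∫ z, g (mob c a z) ∂μb ≤ ∫ z, (F (mob c a z) + (ε:ℂ)).re ∂μb := by
      apply integral_mono_ae (b_ext S B (hg.comp_continuousOn (mob_contOn c ha))).1
        (b_ext S B (hcF.comp_continuousOn (mob_contOn c ha))).1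
      filter_upwards [hae] with z hz
      refine (hin _ ?_).1
      rw [mem_sphere_zero_iff_norm] at hz ⊢
      exact mob_sphere hc ha hz
    have e2 : ∫ z, (F z + (ε:ℂ)).re ∂μb ≤ ∫ z, (g z + 2 * ε) ∂μb := by
      apply integral_mono_ae (b_ext S B hcF.continuousOn).1
        (b_ext S B (hg.add continuous_const).continuousOn).1
      filter_upwards [hae] with z hz
      exact (hin _ hz).2
    rw [integral_add (b_ext S B hg.continuousOn).1 (integrable_const _), integral_const, smul_eq_mul, ← hm] at e2
    have e3 := mul_le_mul_of_nonneg_left e2 hC.le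
    linarith
  have hlim : Tendsto (fun n : ℕ => C * ∫ z, g z ∂μb + (1 / ((n:ℝ) + 1)) * (C * (2 * m))) atTop
      (𝓝 (C * ∫ z, g z ∂μb + 0 * (C * (2 * m)))) :=
    tendsto_const_nhds.add (tendsto_one_div_add_atTop_nhds_zero_nat.mul_const _)
  rw [zero_mul, add_zero] at hlim
  exact ge_of_tendsto' hlim (fun n => hstep _ (by positivity))

lemma C3 (S : SU ρ ν μfam) (B : BU μfam μb) {c a : ℂ} (hc : ‖c‖ = 1) (ha : ‖a‖ < 1) (h1 : mob c a 1 = 1) :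
    ∃ K : ℝ, 0 < K ∧ μb.map (mob c a) ≤ ENNReal.ofReal K • μb := by
  obtain ⟨C, hC, hk⟩ := C2 S B hc ha h1
  have hfin := b_fin S B
  refine ⟨C, hC, ?_⟩
  have hmm := mob_meas c a
  have hcl : ∀ F : Set ℂ, IsClosed F → μb.map (mob c a) F ≤ ENNReal.ofReal C * μb F := by
    intro F hF
    have hp : ∀ n : ℕ, 0 < 1 / ((n:ℝ) + 1) := fun n => by positivity
    have t1 := tendsto_lintegral_thickenedIndicator_of_isClosed (μb.map (mob c a)) hF hp tendsto_one_div_add_atTop_nhds_zero_nat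
    have t2 := tendsto_lintegral_thickenedIndicator_of_isClosed μb hF hp tendsto_one_div_add_atTop_nhds_zero_nat
    refine le_of_tendsto_of_tendsto' t1 (ENNReal.Tendsto.const_mul t2 (Or.inr ENNReal.ofReal_ne_top)) (fun n => ?_)
    set θ := thickenedIndicator (hp n) F with hθ
    have hθc : Continuous (fun z => (θ z : ℝ)) := NNReal.continuous_coe.comp θ.continuous
    have hmeas : Measurable (fun z => (θ z : ℝ≥0∞)) := (ENNReal.continuous_coe.comp θ.continuous).measurable
    rw [lintegral_map hmeas hmm]
    have h2 := hk _ hθc (fun z => NNReal.coe_nonneg _)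
    have i1 : Integrable (fun z => (θ (mob c a z) : ℝ)) μb := (b_ext S B (hθc.comp_continuousOn (mob_contOn c ha))).1
    have i2 : Integrable (fun z => (θ z : ℝ)) μb := (b_ext S B hθc.continuousOn).1
    have j1 := ofReal_integral_eq_lintegral_ofReal i1 (Eventually.of_forall fun z => NNReal.coe_nonneg _)
    have j2 := ofReal_integral_eq_lintegral_ofReal i2 (Eventually.of_forall fun z => NNReal.coe_nonneg _)
    simp only [ENNReal.ofReal_coe_nnreal] at j1 j2
    rw [← j1, ← j2, ← ENNReal.ofReal_mul hC.le]
    exact ENNReal.ofReal_le_ofReal h2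
  rw [Measure.le_iff]
  intro E hE
  rw [hE.measure_eq_iSup_isClosed_of_ne_top (measure_ne_top _ _)]
  refine iSup_le fun F => iSup_le fun hFE => iSup_le fun hF => ?_
  refine (hcl F hF).trans ?_
  rw [Measure.smul_apply, smul_eq_mul]
  gcongr

lemma GG_cont {b : ℂ} (hb1 : ‖b‖ = 1) {δ : ℝ} (hδ : 0 < δ) : ContinuousOn (GG b δ) (closedBall (0:ℂ) 1) := by
  intro z hz
  have hp := (hb_ns hb1 (mem_closedBall_zero_iff.1 hz) hδ).1
  have hcn : Continuous (fun z => normSq (hb b δ z) + 0) :=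
    (continuous_normSq.comp (hb_diff b δ).continuous).add continuous_const
  exact (hcn.continuousAt.rpow_const (Or.inl (by simpa using hp.ne'))).continuousWithinAt

lemma D1 (S : SU ρ ν μfam) (B : BU μfam μb) {c a : ℂ} (hc : ‖c‖ = 1) (ha : ‖a‖ < 1) (h1 : mob c a 1 ≠ 1) :
    ¬ ∃ K : ℝ, 0 < K ∧ μb.map (mob c a) ≤ ENNReal.ofReal K • μb := by
  rintro ⟨K, hK, h⟩
  set b := mob c a 1 with hbdef
  have hb1 : ‖b‖ = 1 := by
    have := mob_sphere hc ha (z := 1) (by simp)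
    simpa using this
  have hfin := b_fin S B
  obtain ⟨C, hC, hL1⟩ := L1 S hb1 h1
  obtain ⟨δ, hδ, r0, hr0, hL2⟩ := L2 S hc ha hb1 hbdef.symm (K * C.toReal + 1)
  have hg := GG_cont hb1 hδ
  have hgm : ContinuousOn (fun z => GG b δ (mob c a z)) (closedBall (0:ℂ) 1) :=
    hg.comp (mob_contOn c ha) (fun z hz => by
      rw [mem_closedBall_zero_iff] at hz ⊢; exact mob_cb hc ha hz)
  obtain ⟨i1, t1⟩ := b_ext S B hg
  obtain ⟨i2, t2⟩ := b_ext S B hgm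
  have k1 : ∫ z, GG b δ z ∂μb ≤ C.toReal := by
    refine le_of_tendsto t1 ?_
    filter_upwards [self_mem_nhdsWithin] with r hr
    have i := (LJ S hr (GG_cd hb1 hδ)).1
    have := hL1 δ hδ r hr
    rw [← ofReal_integral_eq_lintegral_ofReal i (Eventually.of_forall fun z => GG_nn _ _ _)] at this
    exact (ENNReal.ofReal_le_iff_le_toReal hC.ne).1 this
  have k2 : K * C.toReal + 1 ≤ ∫ z, GG b δ (mob c a z) ∂μb := by
    refine ge_of_tendsto t2 ?_
    filter_upwards [self_mem_nhdsWithin, mem_nhdsWithin_of_mem_nhds (Ioi_mem_nhds hr0)] with r hr hr1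
    have i := (LJ S hr (GGm_facts hc ha hb1 hδ).1).1
    have := hL2 r hr1 hr
    rw [← ofReal_integral_eq_lintegral_ofReal i (Eventually.of_forall fun z => GG_nn _ _ _)] at this
    exact (ENNReal.ofReal_le_ofReal_iff (integral_nonneg fun z => GG_nn _ _ _)).1 this
  have hGm : Measurable (GG b δ) := by
    unfold GG regP
    exact (((continuous_normSq.comp (hb_diff b δ).continuous).add continuous_const).measurable).pow_const _
  have k3 : ∫⁻ z, ENNReal.ofReal (GG b δ (mob c a z)) ∂μb ≤ ENNReal.ofReal K * ∫⁻ z, ENNReal.ofReal (GG b δ z) ∂μb := by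
    rw [← lintegral_map (f := fun z => ENNReal.ofReal (GG b δ z)) hGm.ennreal_ofReal (mob_meas c a), ← smul_eq_mul,
      ← lintegral_smul_measure]
    exact lintegral_mono' h le_rfl
  rw [← ofReal_integral_eq_lintegral_ofReal i1 (Eventually.of_forall fun z => GG_nn _ _ _),
    ← ofReal_integral_eq_lintegral_ofReal i2 (Eventually.of_forall fun z => GG_nn _ _ _),
    ← ENNReal.ofReal_mul hK.le] at k3
  have k4 := (ENNReal.ofReal_le_ofReal_iff (mul_nonneg hK.le (integral_nonneg fun z => GG_nn _ _ _))).1 k3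
  have k5 := mul_le_mul_of_nonneg_left k1 hK.le
  linarith

end

/-- For the exhaustion `u₀ = -(1-Re z)^{3/4} - ρ` of the unit disc with
boundary Monge–Ampère measure `dμ_{u₀} = β dσ`, and a Möbius automorphism
`φ(z) = e^{iθ₀}(z-a)/(1-āz)`, the following are equivalent for `1 ≤ p`:
(i) `C_φ` is bounded on `H^p_{u₀}(𝔻)`;
(ii) `∃ K > 0`, `∫_E β(φ⁻¹(η)) dσ ≤ K ∫_E β(η) dσ` for all measurable `E ⊆ ∂𝔻`;
(iii) `φ(1) = 1`. -/
theorem stmt16 (ρ : ℂ → ℝ)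
    (hρcont : ContinuousOn ρ (closedBall (0:ℂ) 1))
    (hρharm : HarmonicOn ρ (ball (0:ℂ) 1))
    (hρbd : ∀ z ∈ sphere (0:ℂ) 1, ρ z = -(1 - z.re) ^ (3/4 : ℝ))
    (ν : Measure ℂ)
    (hν : IsRieszMeasure (fun z => -(1 - z.re) ^ (3/4 : ℝ) - ρ z) (ball (0:ℂ) 1) ν)
    (μfam : ℝ → Measure ℂ)
    (hμ : ∀ r : ℝ, r < 0 →
      IsMAMeasure (fun z => -(1 - z.re) ^ (3/4 : ℝ) - ρ z) (ball (0:ℂ) 1) ν r (μfam r))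
    (μb : Measure ℂ) (hμb : IsBoundaryMA μfam μb)
    (β : ℂ → ℝ) (hβ0 : ∀ ξ, 0 ≤ β ξ)
    (hβ : μb = (arcLen (ball (0:ℂ) 1)).withDensity (fun ξ => ENNReal.ofReal (β ξ)))
    (a : ℂ) (ha : a ∈ ball (0:ℂ) 1) (θ₀ : ℝ) (φ : ℂ → ℂ)
    (hφ : ∀ z, φ z = Complex.exp ((θ₀ : ℝ) * Complex.I) *
      ((z - a) / (1 - (starRingEnd ℂ) a * z)))
    (φinv : ℂ → ℂ)
    (hφinv : ∀ z ∈ closedBall (0:ℂ) 1, φ (φinv z) = z ∧ φinv (φ z) = z)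
    (p : ℝ) (hp : 1 ≤ p) :
    (BoundedCompOp p μfam φ ↔
      (∃ K : ℝ, 0 < K ∧ ∀ E : Set ℂ, E ⊆ sphere (0:ℂ) 1 → MeasurableSet E →
        ∫⁻ η in E, ENNReal.ofReal (β (φinv η)) ∂(arcLen (ball (0:ℂ) 1)) ≤
          ENNReal.ofReal K * ∫⁻ η in E, ENNReal.ofReal (β η) ∂(arcLen (ball (0:ℂ) 1)))) ∧
    ((∃ K : ℝ, 0 < K ∧ ∀ E : Set ℂ, E ⊆ sphere (0:ℂ) 1 → MeasurableSet E →
        ∫⁻ η in E, ENNReal.ofReal (β (φinv η)) ∂(arcLen (ball (0:ℂ) 1)) ≤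
          ENNReal.ofReal K * ∫⁻ η in E, ENNReal.ofReal (β η) ∂(arcLen (ball (0:ℂ) 1))) ↔
      φ 1 = 1) := by
  obtain rfl : φ = mob (Complex.exp ((θ₀ : ℝ) * Complex.I)) a := funext hφ
  set c := Complex.exp ((θ₀ : ℝ) * Complex.I) with hcdef
  have hc : ‖c‖ = 1 := norm_exp_ofReal_mul_I θ₀
  have ha' : ‖a‖ < 1 := mem_ball_zero_iff.1 ha
  have S : SU ρ ν μfam := ⟨⟨hρcont, hρharm, hρbd⟩, hν, hμ⟩
  have hsph : μb (sphere (0:ℂ) 1)ᶜ = 0 := by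
    rw [hβ]
    apply withDensity_absolutelyContinuous
    rw [sig_eq, Measure.restrict_apply isClosed_sphere.measurableSet.compl]
    simp
  have B : BU μfam μb := ⟨hμb, hsph⟩
  have hinv : ∀ z ∈ sphere (0:ℂ) 1, φinv z ∈ sphere (0:ℂ) 1 ∧ mob c a (φinv z) = z ∧ φinv (mob c a z) = z := by
    intro z hz
    obtain ⟨h1, h2⟩ := hφinv z (sphere_subset_closedBall hz)
    refine ⟨?_, h1, h2⟩
    have hz1 := mem_sphere_zero_iff_norm.1 hz
    have hc1 : ‖(starRingEnd ℂ) c‖ = 1 := by rw [RCLike.norm_conj, hc]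
    have ha1 : ‖-(c * a)‖ < 1 := by rw [norm_neg, norm_mul, hc, one_mul]; exact ha'
    have hw := mob_sphere hc1 ha1 hz1
    have h3 := mob_inv2 hc ha' hz1.le
    have h4 := (hφinv (mob ((starRingEnd ℂ) c) (-(c * a)) z) (mem_closedBall_zero_iff.2 hw.le)).2
    rw [h3] at h4
    rw [h4, mem_sphere_zero_iff_norm]
    exact hw
  have hi : BoundedCompOp p μfam (mob c a) ↔ mob c a 1 = 1 :=
    ⟨fun h => by
      by_contra h1
      exact not_i S hc ha' h1 hp h, fun h => iii_i S hc ha' h hp⟩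
  have hii : (∃ K : ℝ, 0 < K ∧ μb.map (mob c a) ≤ ENNReal.ofReal K • μb) ↔ mob c a 1 = 1 :=
    ⟨fun h => by
      by_contra h1
      exact D1 S B hc ha' h1 h, fun h => C3 S B hc ha' h⟩
  have h2 := (ii_iff hβ hc ha' hinv).trans hii
  exact ⟨hi.trans h2.symm, h2⟩

end
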